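/- Theorem 1.1(ii): Let v be a classical solution of v_t = v_rr + ((m−1)/r) v_r − (b(r,t)/r²) v on [0,R] × (t1,t2) which is not identically zero and satisfies the boundary condition (1.5). Then the zero number Z(v(·,t)) is a monotone non-increasing function of t on (t1,t2); that is, for all t1 < s ≤ t < t2 one has Z(v(·,t)) ≤ Z(v(·,s)). -/

import Mathlib

open Set Filter

/-!
Finiteness. If the zeros of `v (·, s)` accumulate at `r₀`, then by Rolle's theorem all radial
derivatives vanish at `(r₀, s)`, and the equation, multiplied by `r²`, makes `v` flat there in
space-time. In backward time, `u = r ^ (μ / 2) v` with `μ = m - 1` satisfies a heat equation with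
the inverse-square potential `κ / r²`, where `κ = μ (μ - 2) / 4 + μ > 0`, up to an error of lower
order. Poon's parabolic frequency of `u`, weighted by the Gaussian centred at `r₀`, is almost
monotone, so it bounds the order of vanishing: if `v (R, ·) = 0`, flatness at time `s` forces
`v (·, t) ≡ 0` for times `t < s` arbitrarily close to `s`. A first vanishing slice would thus be
preceded by another one, so `v ≡ 0`. If `v (R, ·) ≠ 0`, the bound is applied to `(R - r) v`, whose
slices never vanish identically.

Monotonicity. Enclose the finitely many zeros at time `s` in disjoint windows outside which `v`
stays nonzero for a short time. The maximum principle, applied to the set of points lying between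
two simultaneous zeros, gives each window at most one zero during that time; applied to a window
without zeros, it shows that a window with a zero at `s` already has one slightly earlier. Hence the
zero number does not increase locally, and continuous induction in time gives the claim.
-/

open scoped Topology ContDiff

/-- The space-time domain `[0, R] × (t₁, t₂)`; points are pairs `(r, t)`. -/
def strip (R t₁ t₂ : ℝ) : Set (ℝ × ℝ) := Icc 0 R ×ˢ Ioo t₁ t₂

/-- The derivative of `g` in the direction `e` within `S`, one-sided on the boundary of `S`. -/
noncomputable def partialDeriv (S : Set (ℝ × ℝ)) (e : ℝ × ℝ) (g : ℝ × ℝ → ℝ) : ℝ × ℝ → ℝ :=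
  fun p => fderivWithin ℝ g S p e

/-- Smoothness up to the boundary of the strip. -/
abbrev SmoothOnStrip (R t₁ t₂ : ℝ) (g : ℝ × ℝ → ℝ) : Prop :=
  ContDiffOn ℝ ∞ g (strip R t₁ t₂)

theorem Icc_subset_Ioo_of_lt {a b t₁ t₂ : ℝ} (ha : t₁ < a) (hb : b < t₂) :
    Icc a b ⊆ Ioo t₁ t₂ :=
  fun _ ht => ⟨ha.trans_le ht.1, ht.2.trans_lt hb⟩

section StripCalculus

variable {R t₁ t₂ : ℝ} {g h : ℝ × ℝ → ℝ} {e e' : ℝ × ℝ} {r t : ℝ}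

local notation "Ω" => strip R t₁ t₂
local notation "∂ᵣ" => partialDeriv (strip R t₁ t₂) (1, 0)
local notation "∂ₜ" => partialDeriv (strip R t₁ t₂) (0, 1)

theorem uniqueDiffOn_strip (hR : 0 < R) : UniqueDiffOn ℝ Ω :=
  (uniqueDiffOn_Icc hR).prod isOpen_Ioo.uniqueDiffOn

theorem SmoothOnStrip.differentiableOn (hg : SmoothOnStrip R t₁ t₂ g) : DifferentiableOn ℝ g Ω :=
  ContDiffOn.differentiableOn hg (by simp)

theorem SmoothOnStrip.partialDeriv (hR : 0 < R) (hg : SmoothOnStrip R t₁ t₂ g) :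
    SmoothOnStrip R t₁ t₂ (partialDeriv Ω e g) :=
  (hg.fderivWithin (m := ∞) (uniqueDiffOn_strip hR) (by simp)).clm_apply contDiffOn_const

theorem partialDeriv_congr {S : Set (ℝ × ℝ)} (hgh : EqOn g h S) :
    EqOn (partialDeriv S e g) (partialDeriv S e h) S := fun _ hp =>
  congrArg (fun L : ℝ × ℝ →L[ℝ] ℝ => L e) (fderivWithin_congr hgh (hgh hp))

theorem partialDeriv_add (hR : 0 < R) (hg : SmoothOnStrip R t₁ t₂ g)
    (hh : SmoothOnStrip R t₁ t₂ h) :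
    EqOn (partialDeriv Ω e (g + h)) (partialDeriv Ω e g + partialDeriv Ω e h) Ω := fun p hp => by
  simp only [partialDeriv, Pi.add_apply]
  rw [fderivWithin_add (uniqueDiffOn_strip hR p hp) (hg.differentiableOn p hp)
    (hh.differentiableOn p hp)]
  rfl

theorem partialDeriv_mul (hR : 0 < R) (hg : SmoothOnStrip R t₁ t₂ g)
    (hh : SmoothOnStrip R t₁ t₂ h) :
    EqOn (partialDeriv Ω e (g * h)) (partialDeriv Ω e g * h + g * partialDeriv Ω e h) Ω :=
  fun p hp => by
  simp only [partialDeriv, Pi.add_apply, Pi.mul_apply]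
  rw [fderivWithin_mul (uniqueDiffOn_strip hR p hp) (hg.differentiableOn p hp)
    (hh.differentiableOn p hp)]
  simp only [add_apply, smul_apply, smul_eq_mul]
  ring

theorem partialDeriv_neg (hR : 0 < R) :
    EqOn (partialDeriv Ω e (-g)) (-partialDeriv Ω e g) Ω := fun p hp => by
  simp only [partialDeriv, Pi.neg_apply]
  rw [fderivWithin_neg (uniqueDiffOn_strip hR p hp)]
  rfl

theorem partialDeriv_fst (hR : 0 < R) :
    EqOn (partialDeriv Ω e Prod.fst) (fun _ => e.1) Ω := fun p hp => by
  simp only [partialDeriv]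
  rw [fderivWithin_fst (uniqueDiffOn_strip hR p hp)]
  rfl

theorem SmoothOnStrip.hasDerivAt_time (hg : SmoothOnStrip R t₁ t₂ g) (hr : r ∈ Icc 0 R)
    (ht : t ∈ Ioo t₁ t₂) : HasDerivAt (fun τ => g (r, τ)) (∂ₜ g (r, t)) t := by
  have hcurve : HasDerivWithinAt (fun τ : ℝ => (r, τ)) ((0 : ℝ), (1 : ℝ)) (Ioo t₁ t₂) t :=
    (hasDerivWithinAt_const _ _ _).prodMk (hasDerivWithinAt_id _ _)
  exact ((hg.differentiableOn (r, t) ⟨hr, ht⟩).hasFDerivWithinAt.comp_hasDerivWithinAt t hcurve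
    fun τ hτ => show (r, τ) ∈ Ω from ⟨hr, hτ⟩).hasDerivAt (isOpen_Ioo.mem_nhds ht)

theorem SmoothOnStrip.hasDerivWithinAt_space (hg : SmoothOnStrip R t₁ t₂ g) (hr : r ∈ Icc 0 R)
    (ht : t ∈ Ioo t₁ t₂) :
    HasDerivWithinAt (fun x => g (x, t)) (∂ᵣ g (r, t)) (Icc 0 R) r := by
  have hcurve : HasDerivWithinAt (fun x : ℝ => (x, t)) ((1 : ℝ), (0 : ℝ)) (Icc 0 R) r :=
    (hasDerivWithinAt_id _ _).prodMk (hasDerivWithinAt_const _ _ _)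
  exact (hg.differentiableOn (r, t) ⟨hr, ht⟩).hasFDerivWithinAt.comp_hasDerivWithinAt r hcurve
    fun x hx => show (x, t) ∈ Ω from ⟨hx, ht⟩

theorem SmoothOnStrip.hasDerivAt_space (hg : SmoothOnStrip R t₁ t₂ g) (hr : r ∈ Ioo 0 R)
    (ht : t ∈ Ioo t₁ t₂) : HasDerivAt (fun x => g (x, t)) (∂ᵣ g (r, t)) r :=
  (hg.hasDerivWithinAt_space (Ioo_subset_Icc_self hr) ht).hasDerivAt (Icc_mem_nhds hr.1 hr.2)

theorem strip_subset_closure_interior (hR : 0 < R) : Ω ⊆ closure (interior Ω) := by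
  rw [strip, interior_prod_eq, interior_Icc, interior_Ioo, closure_prod_eq, closure_Ioo hR.ne]
  exact prod_mono_right subset_closure

theorem partialDeriv_comm (hR : 0 < R) (hg : SmoothOnStrip R t₁ t₂ g) :
    EqOn (partialDeriv Ω e (partialDeriv Ω e' g)) (partialDeriv Ω e' (partialDeriv Ω e g)) Ω := by
  intro p hp
  have hu := uniqueDiffOn_strip (t₁ := t₁) (t₂ := t₂) hR
  have hd : DifferentiableWithinAt ℝ (fderivWithin ℝ g Ω) Ω p :=
    (hg.fderivWithin (m := ∞) hu (by simp)).differentiableOn (by simp) p hp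
  have second_deriv : ∀ e e' : ℝ × ℝ, partialDeriv Ω e (partialDeriv Ω e' g) p
      = fderivWithin ℝ (fderivWithin ℝ g Ω) Ω p e e' := by
    intro e e'
    unfold partialDeriv
    rw [fderivWithin_clm_apply (hu p hp) hd (differentiableWithinAt_const _)]
    simp
  have hsymm : IsSymmSndFDerivWithinAt ℝ g Ω p :=
    (hg p hp).isSymmSndFDerivWithinAt (by
      rw [minSmoothness_of_isRCLikeNormedField]
      exact WithTop.coe_le_coe.2 (le_top : (2 : ℕ∞) ≤ ⊤)) hu
      (strip_subset_closure_interior hR hp) hp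
  rw [second_deriv, second_deriv, hsymm.eq]

theorem SmoothOnStrip.exists_abs_le (hg : SmoothOnStrip R t₁ t₂ g) {a b : ℝ} (ha : t₁ < a)
    (hb : b < t₂) : ∃ C, 0 < C ∧ ∀ r ∈ Icc 0 R, ∀ t ∈ Icc a b, |g (r, t)| ≤ C := by
  obtain ⟨C, hC⟩ := (isCompact_Icc.prod isCompact_Icc).exists_bound_of_continuousOn
    (hg.continuousOn.mono (prod_mono_right (Icc_subset_Ioo_of_lt ha hb)))
  exact ⟨max C 1, by positivity, fun r hr t ht => (hC (r, t) ⟨hr, ht⟩).trans (le_max_left _ _)⟩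

theorem SmoothOnStrip.abs_sub_le (hg : SmoothOnStrip R t₁ t₂ g) (ht : t ∈ Ioo t₁ t₂) {C : ℝ}
    (hC : ∀ r ∈ Icc 0 R, |∂ᵣ g (r, t)| ≤ C) {x y : ℝ} (hx : x ∈ Icc 0 R) (hy : y ∈ Icc 0 R) :
    |g (y, t) - g (x, t)| ≤ C * |y - x| :=
  (convex_Icc 0 R).norm_image_sub_le_of_norm_hasDerivWithin_le
    (fun _ hr => hg.hasDerivWithinAt_space hr ht) hC hx hy

theorem SmoothOnStrip.exists_abs_le_mul (hR : 0 < R) (hg : SmoothOnStrip R t₁ t₂ g)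
    (h0 : ∀ t ∈ Ioo t₁ t₂, g (0, t) = 0) {a b : ℝ} (ha : t₁ < a) (hb : b < t₂) :
    ∃ C, 0 < C ∧ ∀ r ∈ Icc 0 R, ∀ t ∈ Icc a b, |g (r, t)| ≤ C * r := by
  obtain ⟨C, hC, hbound⟩ := (hg.partialDeriv (e := (1, 0)) hR).exists_abs_le ha hb
  refine ⟨C, hC, fun r hr t ht => ?_⟩
  have ht' := Icc_subset_Ioo_of_lt ha hb ht
  simpa [h0 t ht', abs_of_nonneg hr.1] using
    hg.abs_sub_le ht' (fun x hx => hbound x hx t ht) (left_mem_Icc.2 hR.le) hr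

end StripCalculus

section Flatness

variable {R t₁ t₂ : ℝ} {P : (ℝ × ℝ → ℝ) → Prop} {g h : ℝ × ℝ → ℝ} {e e' p : ℝ × ℝ} {n : ℕ}

local notation "Ω" => strip R t₁ t₂
local notation "∂ᵣ" => partialDeriv (strip R t₁ t₂) (1, 0)
local notation "∂ₜ" => partialDeriv (strip R t₁ t₂) (0, 1)

/-- The property `P` cuts out an ideal in the ring of smooth functions on the strip. -/
structure IsSmoothIdeal (R t₁ t₂ : ℝ) (P : (ℝ × ℝ → ℝ) → Prop) : Prop where
  congr : ∀ {g h : ℝ × ℝ → ℝ}, EqOn g h (strip R t₁ t₂) → P g → P h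
  add : ∀ {g h : ℝ × ℝ → ℝ}, SmoothOnStrip R t₁ t₂ g → SmoothOnStrip R t₁ t₂ h →
    P g → P h → P (g + h)
  mul : ∀ {a g : ℝ × ℝ → ℝ}, SmoothOnStrip R t₁ t₂ a → SmoothOnStrip R t₁ t₂ g →
    P g → P (a * g)

/-- `g` and its iterated derivatives in the direction `e`, up to order `n`, all satisfy `P`. -/
def IteratedDerivs (R t₁ t₂ : ℝ) (P : (ℝ × ℝ → ℝ) → Prop) (e : ℝ × ℝ) :
    ℕ → (ℝ × ℝ → ℝ) → Prop
  | 0, g => P g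
  | n + 1, g => P g ∧ IteratedDerivs R t₁ t₂ P e n (partialDeriv (strip R t₁ t₂) e g)

theorem IteratedDerivs.self : ∀ {n : ℕ} {g : ℝ × ℝ → ℝ}, IteratedDerivs R t₁ t₂ P e n g → P g
  | 0, _, h => h
  | _ + 1, _, h => h.1

theorem IteratedDerivs.of_succ : ∀ {n : ℕ} {g : ℝ × ℝ → ℝ},
    IteratedDerivs R t₁ t₂ P e (n + 1) g → IteratedDerivs R t₁ t₂ P e n g
  | 0, _, h => h.1
  | _ + 1, _, h => ⟨h.1, h.2.of_succ⟩

theorem IsSmoothIdeal.iteratedDerivs (hR : 0 < R) (hP : IsSmoothIdeal R t₁ t₂ P) (e : ℝ × ℝ) :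
    ∀ n, IsSmoothIdeal R t₁ t₂ (IteratedDerivs R t₁ t₂ P e n)
  | 0 => hP
  | n + 1 => by
    have ih := hP.iteratedDerivs hR e n
    refine ⟨fun heq hg => ⟨hP.congr heq hg.1, ih.congr (partialDeriv_congr heq) hg.2⟩,
      fun sg sh hg hh => ⟨hP.add sg sh hg.1 hh.1, ?_⟩, fun sa sg hg => ⟨hP.mul sa sg hg.1, ?_⟩⟩
    · exact ih.congr (partialDeriv_add hR sg sh).symm
        (ih.add (sg.partialDeriv hR) (sh.partialDeriv hR) hg.2 hh.2)
    · exact ih.congr (partialDeriv_mul hR sa sg).symm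
        (ih.add ((sa.partialDeriv hR).mul sg) (sa.mul (sg.partialDeriv hR))
          (ih.mul (sa.partialDeriv hR) sg hg.of_succ) (ih.mul sa (sg.partialDeriv hR) hg.2))

theorem IteratedDerivs.partialDeriv (hR : 0 < R) (hP : IsSmoothIdeal R t₁ t₂ P)
    (hderiv : ∀ {g}, SmoothOnStrip R t₁ t₂ g → P g → P (partialDeriv Ω e' g)) :
    ∀ {n : ℕ} {g : ℝ × ℝ → ℝ}, SmoothOnStrip R t₁ t₂ g → IteratedDerivs R t₁ t₂ P e n g →
      IteratedDerivs R t₁ t₂ P e n (partialDeriv Ω e' g)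
  | 0, _, sg, hg => hderiv sg hg
  | n + 1, _, sg, hg => ⟨hderiv sg hg.1, (hP.iteratedDerivs hR e n).congr
      (partialDeriv_comm hR sg) (hg.2.partialDeriv hR hP hderiv (sg.partialDeriv hR))⟩

theorem isSmoothIdeal_eq_zero (hp : p ∈ Ω) : IsSmoothIdeal R t₁ t₂ fun g => g p = 0 where
  congr heq hg := by rw [← heq hp, hg]
  add _ _ hg hh := by rw [Pi.add_apply, hg, hh, add_zero]
  mul _ _ hg := by rw [Pi.mul_apply, hg, mul_zero]

theorem smoothOnStrip_fst : SmoothOnStrip R t₁ t₂ Prod.fst := contDiffOn_fst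

/-- All radial derivatives of `g` vanish at `p`. -/
def IsRadiallyFlatAt (R t₁ t₂ : ℝ) (p : ℝ × ℝ) (g : ℝ × ℝ → ℝ) : Prop :=
  ∀ n, IteratedDerivs R t₁ t₂ (fun g => g p = 0) (1, 0) n g

theorem IsRadiallyFlatAt.partialDeriv (hg : IsRadiallyFlatAt R t₁ t₂ p g) :
    IsRadiallyFlatAt R t₁ t₂ p (∂ᵣ g) :=
  fun n => (hg (n + 1)).2

theorem isSmoothIdeal_isRadiallyFlatAt (hR : 0 < R) (hp : p ∈ Ω) :
    IsSmoothIdeal R t₁ t₂ (IsRadiallyFlatAt R t₁ t₂ p) := by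
  have hideal := (isSmoothIdeal_eq_zero hp).iteratedDerivs hR (1, 0)
  exact ⟨fun heq hg n => (hideal n).congr heq (hg n),
    fun sg sh hg hh n => (hideal n).add sg sh (hg n) (hh n),
    fun sa sg hg n => (hideal n).mul sa sg (hg n)⟩

theorem partialDeriv_fst_mul (hR : 0 < R) (hg : SmoothOnStrip R t₁ t₂ g) :
    EqOn (∂ᵣ (Prod.fst * g)) (g + Prod.fst * ∂ᵣ g) Ω := fun q hq => by
  simp [partialDeriv_mul hR smoothOnStrip_fst hg hq, partialDeriv_fst hR hq]

/-- The Euler operator `c + r ∂ᵣ` is injective on jets at the axis, since it multiplies the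
`n`-th Taylor coefficient by `c + n`. -/
theorem iteratedDerivs_of_const_mul_add_fst_mul (hR : 0 < R) (hp : p ∈ Ω) (hp0 : p.1 = 0) :
    ∀ {n : ℕ} {c : ℝ} {g : ℝ × ℝ → ℝ}, 0 < c → SmoothOnStrip R t₁ t₂ g →
      IteratedDerivs R t₁ t₂ (fun g => g p = 0) (1, 0) n ((fun _ => c) * g + Prod.fst * ∂ᵣ g) →
      IteratedDerivs R t₁ t₂ (fun g => g p = 0) (1, 0) n g
  | 0, c, g, hc, _, h => by simpa [IteratedDerivs, hp0, hc.ne'] using h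
  | n + 1, c, g, hc, sg, h => by
    have hideal := (isSmoothIdeal_eq_zero hp).iteratedDerivs hR (1, 0) n
    have sc : SmoothOnStrip R t₁ t₂ fun _ => c := contDiffOn_const
    have scg : SmoothOnStrip R t₁ t₂ ((fun _ => c) * g) := sc.mul sg
    have srg : SmoothOnStrip R t₁ t₂ (Prod.fst * ∂ᵣ g) :=
      smoothOnStrip_fst.mul (sg.partialDeriv hR)
    refine ⟨by simpa [hp0, hc.ne'] using h.1, ?_⟩
    refine iteratedDerivs_of_const_mul_add_fst_mul hR hp hp0 (c := c + 1) (by positivity)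
      (sg.partialDeriv hR) (hideal.congr (fun q hq => ?_) h.2)
    rw [partialDeriv_add hR scg srg hq]
    simp only [Pi.add_apply, Pi.mul_apply, partialDeriv_mul hR sc sg hq,
      partialDeriv_fst_mul hR (sg.partialDeriv hR) hq]
    simp only [partialDeriv, fderivWithin_fun_const, Pi.zero_apply, zero_apply]
    ring

theorem iteratedDerivs_of_fst_mul (hR : 0 < R) (hp : p ∈ Ω) (hp0 : p.1 ≠ 0) :
    ∀ {n : ℕ} {g : ℝ × ℝ → ℝ}, SmoothOnStrip R t₁ t₂ g →
      IteratedDerivs R t₁ t₂ (fun g => g p = 0) (1, 0) n (Prod.fst * g) →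
      IteratedDerivs R t₁ t₂ (fun g => g p = 0) (1, 0) n g
  | 0, g, _, h => by simpa [IteratedDerivs, hp0] using h
  | n + 1, g, sg, h => by
    have hideal := (isSmoothIdeal_eq_zero hp).iteratedDerivs hR (1, 0) n
    have hg := iteratedDerivs_of_fst_mul hR hp hp0 sg h.of_succ
    have sconst : SmoothOnStrip R t₁ t₂ fun _ => -1 := contDiffOn_const
    have srg : SmoothOnStrip R t₁ t₂ (Prod.fst * g) := smoothOnStrip_fst.mul sg
    refine ⟨hg.self, iteratedDerivs_of_fst_mul hR hp hp0 (sg.partialDeriv hR) ?_⟩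
    refine hideal.congr (fun q hq => ?_) (hideal.add (srg.partialDeriv hR) (sconst.mul sg) h.2
      (hideal.mul sconst sg hg))
    simp [partialDeriv_fst_mul hR sg hq]

theorem IsRadiallyFlatAt.of_fst_mul (hR : 0 < R) (hp : p ∈ Ω) (sg : SmoothOnStrip R t₁ t₂ g)
    (h : IsRadiallyFlatAt R t₁ t₂ p (Prod.fst * g)) : IsRadiallyFlatAt R t₁ t₂ p g := by
  by_cases hp0 : p.1 = 0
  · refine fun n => iteratedDerivs_of_const_mul_add_fst_mul hR hp hp0 one_pos sg ?_
    refine ((isSmoothIdeal_eq_zero hp).iteratedDerivs hR (1, 0) n).congr (fun q hq => ?_)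
      (h.partialDeriv n)
    simp [partialDeriv_fst_mul hR sg hq]
  · exact fun n => iteratedDerivs_of_fst_mul hR hp hp0 sg (h n)

/-- All mixed derivatives of `g` vanish at `p`. -/
def IsFlatAt (R t₁ t₂ : ℝ) (p : ℝ × ℝ) (g : ℝ × ℝ → ℝ) : Prop :=
  ∀ n, IteratedDerivs R t₁ t₂ (IsRadiallyFlatAt R t₁ t₂ p) (0, 1) n g

theorem iteratedDerivs_isRadiallyFlatAt_of_fst_mul (hR : 0 < R) (hp : p ∈ Ω) :
    ∀ {n : ℕ} {g : ℝ × ℝ → ℝ}, SmoothOnStrip R t₁ t₂ g →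
      IteratedDerivs R t₁ t₂ (IsRadiallyFlatAt R t₁ t₂ p) (0, 1) n (Prod.fst * g) →
      IteratedDerivs R t₁ t₂ (IsRadiallyFlatAt R t₁ t₂ p) (0, 1) n g
  | 0, _, sg, h => IsRadiallyFlatAt.of_fst_mul hR hp sg h
  | n + 1, g, sg, h => by
    refine ⟨h.1.of_fst_mul hR hp sg, ?_⟩
    refine iteratedDerivs_isRadiallyFlatAt_of_fst_mul hR hp (sg.partialDeriv hR) ?_
    refine ((isSmoothIdeal_isRadiallyFlatAt hR hp).iteratedDerivs hR (0, 1) n).congr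
      (fun q hq => ?_) h.2
    simp [partialDeriv_mul hR smoothOnStrip_fst sg hq, partialDeriv_fst hR hq]

/-- Each time derivative of a solution is a radial differential operator applied to it, up to the
factor `r²`, which can be cancelled in the ring of jets. -/
theorem isFlatAt_of_isRadiallyFlatAt {B V : ℝ × ℝ → ℝ} {μ : ℝ} (hR : 0 < R) (hp : p ∈ Ω)
    (sB : SmoothOnStrip R t₁ t₂ B) (sV : SmoothOnStrip R t₁ t₂ V)
    (pde : ∀ q ∈ Ω, q.1 ^ 2 * ∂ₜ V q = q.1 ^ 2 * ∂ᵣ (∂ᵣ V) q + μ * q.1 * ∂ᵣ V q - B q * V q)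
    (hV : IsRadiallyFlatAt R t₁ t₂ p V) : IsFlatAt R t₁ t₂ p V := by
  have hrad := isSmoothIdeal_isRadiallyFlatAt (t₁ := t₁) (t₂ := t₂) hR hp
  intro n
  induction n with
  | zero => exact hV
  | succ n ih =>
    have hideal := hrad.iteratedDerivs hR (0, 1) n
    have sr : SmoothOnStrip R t₁ t₂ Prod.fst := smoothOnStrip_fst
    have s1 := sV.partialDeriv (e := (1, 0)) hR
    have s2 := s1.partialDeriv (e := (1, 0)) hR
    have st := sV.partialDeriv (e := (0, 1)) hR
    have sμ : SmoothOnStrip R t₁ t₂ fun q => μ * q.1 := contDiffOn_const.mul sr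
    have hderiv {g} (sg : SmoothOnStrip R t₁ t₂ g) := IteratedDerivs.partialDeriv (n := n)
      (e := (0, 1)) hR hrad (fun _ hg => IsRadiallyFlatAt.partialDeriv hg) sg
    have h1 := hderiv sV ih
    have h2 := hderiv s1 h1
    have hrhs := hideal.add ((sr.mul sr).mul s2) ((sμ.mul s1).add (sB.neg.mul sV))
      (hideal.mul (sr.mul sr) s2 h2)
      (hideal.add (sμ.mul s1) (sB.neg.mul sV) (hideal.mul sμ s1 h1) (hideal.mul sB.neg sV ih))
    have hr2 : IteratedDerivs R t₁ t₂ (IsRadiallyFlatAt R t₁ t₂ p) (0, 1) n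
        (Prod.fst * (Prod.fst * ∂ₜ V)) := hideal.congr (fun q hq => by
      simp only [Pi.add_apply, Pi.mul_apply]
      linear_combination -(pde q hq)) hrhs
    exact ⟨hV, iteratedDerivs_isRadiallyFlatAt_of_fst_mul hR hp st
      (iteratedDerivs_isRadiallyFlatAt_of_fst_mul hR hp (sr.mul st) hr2)⟩

theorem IsFlatAt.apply_eq_zero (hg : IsFlatAt R t₁ t₂ p g) : g p = 0 := hg 0 0

theorem IsFlatAt.timeDeriv (hg : IsFlatAt R t₁ t₂ p g) : IsFlatAt R t₁ t₂ p (∂ₜ g) :=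
  fun n => (hg (n + 1)).2

theorem IsFlatAt.radialDeriv (hR : 0 < R) (hp : p ∈ Ω) (sg : SmoothOnStrip R t₁ t₂ g)
    (hg : IsFlatAt R t₁ t₂ p g) : IsFlatAt R t₁ t₂ p (∂ᵣ g) := fun n =>
  IteratedDerivs.partialDeriv hR (isSmoothIdeal_isRadiallyFlatAt hR hp)
    (fun _ hg => IsRadiallyFlatAt.partialDeriv hg) sg (hg n)

theorem norm_fderivWithin_le_partialDeriv {S : Set (ℝ × ℝ)} {q : ℝ × ℝ} :
    ‖fderivWithin ℝ g S q‖ ≤ |partialDeriv S (1, 0) g q| + |partialDeriv S (0, 1) g q| := by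
  refine ContinuousLinearMap.opNorm_le_bound _ (by positivity) fun x => ?_
  have hx : x = x.1 • ((1, 0) : ℝ × ℝ) + x.2 • ((0, 1) : ℝ × ℝ) := by ext <;> simp
  have hval : fderivWithin ℝ g S q x
      = x.1 * partialDeriv S (1, 0) g q + x.2 * partialDeriv S (0, 1) g q := by
    conv_lhs => rw [hx, map_add, map_smul, map_smul]
    rfl
  have h1 : |x.1| ≤ ‖x‖ := norm_fst_le x
  have h2 : |x.2| ≤ ‖x‖ := norm_snd_le x
  calc ‖fderivWithin ℝ g S q x‖
      ≤ |x.1| * |partialDeriv S (1, 0) g q| + |x.2| * |partialDeriv S (0, 1) g q| := by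
        rw [hval, Real.norm_eq_abs, ← abs_mul, ← abs_mul]
        exact abs_add_le _ _
    _ ≤ ‖x‖ * |partialDeriv S (1, 0) g q| + ‖x‖ * |partialDeriv S (0, 1) g q| := by gcongr
    _ = _ := by ring

theorem IsFlatAt.exists_abs_le_norm_pow (hR : 0 < R) {a b : ℝ} (ha : t₁ < a) (hb : b < t₂)
    (hp : p ∈ Icc 0 R ×ˢ Icc a b) (n : ℕ) (sg : SmoothOnStrip R t₁ t₂ g)
    (hg : IsFlatAt R t₁ t₂ p g) :
    ∃ C, 0 ≤ C ∧ ∀ q ∈ Icc 0 R ×ˢ Icc a b, |g q| ≤ C * ‖q - p‖ ^ n := by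
  have hsub : Icc 0 R ×ˢ Icc a b ⊆ Ω := prod_mono_right (Icc_subset_Ioo_of_lt ha hb)
  induction n generalizing g with
  | zero =>
    obtain ⟨C, hC, hbound⟩ := sg.exists_abs_le ha hb
    exact ⟨C, hC.le, fun q hq => by simpa using hbound q.1 hq.1 q.2 hq.2⟩
  | succ n ih =>
    obtain ⟨C, hC, hr⟩ := ih (sg.partialDeriv hR) (hg.radialDeriv hR (hsub hp) sg)
    obtain ⟨D, hD, ht⟩ := ih (sg.partialDeriv hR) hg.timeDeriv
    refine ⟨C + D, by positivity, fun q hq => ?_⟩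
    let K : Set (ℝ × ℝ) := (Icc 0 R ×ˢ Icc a b) ∩ Metric.closedBall p ‖q - p‖
    have hK : Convex ℝ K := ((convex_Icc 0 R).prod (convex_Icc a b)).inter (convex_closedBall _ _)
    have hbound : ∀ x ∈ K, ‖fderivWithin ℝ g Ω x‖ ≤ (C + D) * ‖q - p‖ ^ n := by
      intro x hx
      have hxp : ‖x - p‖ ≤ ‖q - p‖ := by simpa [dist_eq_norm] using hx.2
      calc ‖fderivWithin ℝ g Ω x‖
          ≤ C * ‖x - p‖ ^ n + D * ‖x - p‖ ^ n :=
            norm_fderivWithin_le_partialDeriv.trans (add_le_add (hr x hx.1) (ht x hx.1))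
        _ ≤ C * ‖q - p‖ ^ n + D * ‖q - p‖ ^ n := by gcongr
        _ = (C + D) * ‖q - p‖ ^ n := by ring
    have hmvt := hK.norm_image_sub_le_of_norm_hasFDerivWithin_le
      (fun x hx => ((sg.differentiableOn x (hsub hx.1)).hasFDerivWithinAt.mono
        (inter_subset_left.trans hsub))) hbound
      (show p ∈ K from ⟨hp, Metric.mem_closedBall_self (norm_nonneg _)⟩)
      (show q ∈ K from ⟨hq, by simp [dist_eq_norm]⟩)
    rw [hg.apply_eq_zero, sub_zero, Real.norm_eq_abs] at hmvt
    exact hmvt.trans_eq (by ring)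

theorem IsFlatAt.exists_sq_le_parabolic_pow (hR : 0 < R) {r₀ s T : ℝ} (hr₀ : r₀ ∈ Icc 0 R)
    (hsT : t₁ < s - T) (hT : 0 ≤ T) (hs : s < t₂) (n : ℕ) (sg : SmoothOnStrip R t₁ t₂ g)
    (hg : IsFlatAt R t₁ t₂ (r₀, s) g) :
    ∃ C, 0 ≤ C ∧ ∀ r ∈ Icc 0 R, ∀ t ∈ Icc (s - T) s,
      g (r, t) ^ 2 ≤ C * ((r - r₀) ^ 2 + (s - t)) ^ n := by
  obtain ⟨C, -, hbound⟩ := hg.exists_abs_le_norm_pow hR hsT hs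
    ⟨hr₀, by linarith, le_rfl⟩ n sg
  refine ⟨C ^ 2 * (1 + T) ^ n, by positivity, fun r hr t ht => ?_⟩
  have hst : 0 ≤ s - t := by linarith [ht.2]
  have hnorm : ‖((r, t) : ℝ × ℝ) - (r₀, s)‖ ^ 2 ≤ (1 + T) * ((r - r₀) ^ 2 + (s - t)) := by
    rw [Prod.mk_sub_mk, Prod.norm_mk, Real.norm_eq_abs, Real.norm_eq_abs, abs_sub_comm t]
    rcases max_cases |r - r₀| |s - t| with h | h <;> rw [h.1, sq_abs]
    · nlinarith [sq_nonneg (r - r₀)]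
    · nlinarith [sq_nonneg (r - r₀), ht.1]
  calc g (r, t) ^ 2 = |g (r, t)| ^ 2 := (sq_abs _).symm
    _ ≤ (C * ‖((r, t) : ℝ × ℝ) - (r₀, s)‖ ^ n) ^ 2 := by gcongr; exact hbound (r, t) ⟨hr, ht⟩
    _ = C ^ 2 * (‖((r, t) : ℝ × ℝ) - (r₀, s)‖ ^ 2) ^ n := by ring
    _ ≤ C ^ 2 * ((1 + T) * ((r - r₀) ^ 2 + (s - t))) ^ n := by gcongr
    _ = _ := by rw [mul_pow]; ring

end Flatness

section ZeroSet

variable {R t₁ t₂ r₀ t : ℝ} {g : ℝ × ℝ → ℝ}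

local notation "Ω" => strip R t₁ t₂
local notation "∂ᵣ" => partialDeriv (strip R t₁ t₂) (1, 0)

/-- The zeros of the radial profile `g (·, t)` in `[0, R]`; the zero number is its cardinality. -/
def zeroSet (R : ℝ) (g : ℝ × ℝ → ℝ) (t : ℝ) : Set ℝ := {r ∈ Icc 0 R | g (r, t) = 0}

theorem SmoothOnStrip.continuousOn_space (hg : SmoothOnStrip R t₁ t₂ g) (ht : t ∈ Ioo t₁ t₂) :
    ContinuousOn (fun r => g (r, t)) (Icc 0 R) :=
  fun _ hr => (hg.hasDerivWithinAt_space hr ht).continuousWithinAt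

theorem SmoothOnStrip.isClosed_zeroSet (hg : SmoothOnStrip R t₁ t₂ g) (ht : t ∈ Ioo t₁ t₂) :
    IsClosed (zeroSet R g t) :=
  (hg.continuousOn_space ht).preimage_isClosed_of_isClosed isClosed_Icc isClosed_singleton

theorem mem_zeroSet_of_accPt (hg : SmoothOnStrip R t₁ t₂ g) (ht : t ∈ Ioo t₁ t₂)
    (hacc : AccPt r₀ (𝓟 (zeroSet R g t))) : r₀ ∈ zeroSet R g t :=
  (hg.isClosed_zeroSet ht).closure_subset (mem_closure_iff_clusterPt.2 hacc.clusterPt)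

theorem exists_mem_Ioo_partialDeriv_eq_zero (hg : SmoothOnStrip R t₁ t₂ g) (ht : t ∈ Ioo t₁ t₂)
    {x y : ℝ} (hx : x ∈ zeroSet R g t) (hy : y ∈ zeroSet R g t) (hxy : x < y) :
    ∃ z ∈ Ioo x y, ∂ᵣ g (z, t) = 0 :=
  exists_hasDerivAt_eq_zero hxy
    ((hg.continuousOn_space ht).mono (Icc_subset_Icc hx.1.1 hy.1.2))
    (show g (x, t) = g (y, t) by rw [hx.2, hy.2])
    fun _ hz => hg.hasDerivAt_space ⟨hx.1.1.trans_lt hz.1, hz.2.trans_le hy.1.2⟩ ht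

/-- Rolle's theorem passes accumulation of zeros on to the derivative. -/
theorem accPt_zeroSet_partialDeriv (hg : SmoothOnStrip R t₁ t₂ g) (ht : t ∈ Ioo t₁ t₂)
    (hacc : AccPt r₀ (𝓟 (zeroSet R g t))) : AccPt r₀ (𝓟 (zeroSet R (∂ᵣ g) t)) := by
  have hr₀ := mem_zeroSet_of_accPt hg ht hacc
  rw [accPt_iff_nhds] at hacc ⊢
  intro U hU
  obtain ⟨ε, hε, hball⟩ := Metric.mem_nhds_iff.1 hU
  obtain ⟨x, ⟨hxε, hx⟩, hne⟩ := hacc _ (Metric.ball_mem_nhds r₀ hε)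
  have hconv := (Real.ball_eq_Ioo r₀ ε ▸ ordConnected_Ioo : (Metric.ball r₀ ε).OrdConnected)
  have hr₀ε := Metric.mem_ball_self (x := r₀) hε
  rcases lt_or_gt_of_ne hne with hlt | hlt
  · obtain ⟨z, hz, hz0⟩ := exists_mem_Ioo_partialDeriv_eq_zero hg ht hx hr₀ hlt
    exact ⟨z, ⟨hball (hconv.out hxε hr₀ε (Ioo_subset_Icc_self hz)),
      ⟨hx.1.1.trans hz.1.le, hz.2.le.trans hr₀.1.2⟩, hz0⟩, hz.2.ne⟩
  · obtain ⟨z, hz, hz0⟩ := exists_mem_Ioo_partialDeriv_eq_zero hg ht hr₀ hx hlt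
    exact ⟨z, ⟨hball (hconv.out hr₀ε hxε (Ioo_subset_Icc_self hz)),
      ⟨hr₀.1.1.trans hz.1.le, hz.2.le.trans hx.1.2⟩, hz0⟩, hz.1.ne'⟩

theorem isRadiallyFlatAt_of_accPt_zeroSet (hR : 0 < R) (hg : SmoothOnStrip R t₁ t₂ g)
    (ht : t ∈ Ioo t₁ t₂) (hacc : AccPt r₀ (𝓟 (zeroSet R g t))) :
    IsRadiallyFlatAt R t₁ t₂ (r₀, t) g := by
  intro n
  have hr₀ := (mem_zeroSet_of_accPt hg ht hacc).2
  induction n generalizing g with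
  | zero => exact hr₀
  | succ n ih =>
    have hacc' := accPt_zeroSet_partialDeriv hg ht hacc
    have sg' := hg.partialDeriv (e := (1, 0)) hR
    exact ⟨hr₀, ih sg' hacc' (mem_zeroSet_of_accPt sg' ht hacc').2⟩

end ZeroSet

section GaussianMean

open MeasureTheory

variable {R r₀ τ T B a b : ℝ} {φ ψ F : ℝ → ℝ}

/-- `φ` is continuous and bounded on `(0, R)`: the class of integrands of the weighted means below.
No behaviour is prescribed at the end points, where the integrands may be singular expressions. -/
def IsBddContinuous (R : ℝ) (φ : ℝ → ℝ) : Prop :=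
  ContinuousOn φ (Ioo 0 R) ∧ ∃ B, ∀ r ∈ Ioo 0 R, |φ r| ≤ B

namespace IsBddContinuous

theorem add (hφ : IsBddContinuous R φ) (hψ : IsBddContinuous R ψ) :
    IsBddContinuous R fun r => φ r + ψ r := by
  obtain ⟨hφc, B, hB⟩ := hφ
  obtain ⟨hψc, D, hD⟩ := hψ
  exact ⟨hφc.add hψc, B + D,
    fun r hr => (abs_add_le _ _).trans (add_le_add (hB r hr) (hD r hr))⟩

theorem mul (hφ : IsBddContinuous R φ) (hψ : IsBddContinuous R ψ) :
    IsBddContinuous R fun r => φ r * ψ r := by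
  obtain ⟨hφc, B, hB⟩ := hφ
  obtain ⟨hψc, D, hD⟩ := hψ
  refine ⟨hφc.mul hψc, B * D, fun r hr => ?_⟩
  rw [abs_mul]
  exact mul_le_mul (hB r hr) (hD r hr) (abs_nonneg _) ((abs_nonneg _).trans (hB r hr))

theorem of_continuous (hφ : Continuous φ) : IsBddContinuous R φ := by
  obtain ⟨C, hC⟩ := (isCompact_Icc (a := 0) (b := R)).exists_bound_of_continuousOn hφ.continuousOn
  exact ⟨hφ.continuousOn, C, fun r hr => hC r (Ioo_subset_Icc_self hr)⟩

theorem const_mul (c : ℝ) (hφ : IsBddContinuous R φ) : IsBddContinuous R fun r => c * φ r :=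
  (of_continuous continuous_const).mul hφ

theorem sub (hφ : IsBddContinuous R φ) (hψ : IsBddContinuous R ψ) :
    IsBddContinuous R fun r => φ r - ψ r := by
  simpa [sub_eq_add_neg] using hφ.add (hψ.const_mul (-1))

theorem sq (hφ : IsBddContinuous R φ) : IsBddContinuous R fun r => φ r ^ 2 := by
  simpa only [pow_two] using hφ.mul hφ

theorem congr (hφ : IsBddContinuous R φ) (h : EqOn ψ φ (Ioo 0 R)) : IsBddContinuous R ψ :=
  ⟨hφ.1.congr h, hφ.2.imp fun _ hB r hr => h hr ▸ hB r hr⟩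

theorem integrableOn (hφ : IsBddContinuous R φ) : IntegrableOn φ (Ioo 0 R) := by
  obtain ⟨hφc, B, hB⟩ := hφ
  refine Integrable.of_bound (hφc.aestronglyMeasurable measurableSet_Ioo) B ?_
  filter_upwards [ae_restrict_mem measurableSet_Ioo] with r hr using hB r hr

theorem integral_eq_sub (hR : 0 < R) (hφ : IsBddContinuous R φ)
    (hF : ∀ r ∈ Ioo 0 R, HasDerivAt F (φ r) r) (h0 : Tendsto F (𝓝[>] 0) (𝓝 a))
    (hFR : Tendsto F (𝓝[<] R) (𝓝 b)) : ∫ r in Ioo 0 R, φ r = b - a := by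
  rw [← integral_Ioc_eq_integral_Ioo, ← intervalIntegral.integral_of_le hR.le]
  refine intervalIntegral.integral_eq_sub_of_hasDerivAt_of_tendsto hR hF ?_ h0 hFR
  rw [intervalIntegrable_iff_integrableOn_Ioo_of_le hR.le]
  exact hφ.integrableOn

end IsBddContinuous

/-- The backward heat kernel centred at `r₀`, without its normalising power of `τ`. -/
noncomputable def gaussWeight (r₀ τ r : ℝ) : ℝ := Real.exp (-(r - r₀) ^ 2 / (4 * τ))

theorem gaussWeight_pos (r₀ τ r : ℝ) : 0 < gaussWeight r₀ τ r := Real.exp_pos _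

theorem gaussWeight_le_one (hτ : 0 < τ) (r : ℝ) : gaussWeight r₀ τ r ≤ 1 :=
  Real.exp_le_one_iff.2 (div_nonpos_of_nonpos_of_nonneg
    (neg_nonpos.2 (sq_nonneg _)) (by positivity))

theorem continuous_gaussWeight : Continuous (gaussWeight r₀ τ) := by
  unfold gaussWeight
  fun_prop

theorem hasDerivAt_gaussWeight (r : ℝ) :
    HasDerivAt (gaussWeight r₀ τ) (-((r - r₀) / (2 * τ)) * gaussWeight r₀ τ r) r := by
  have hexponent : HasDerivAt (fun x => -(x - r₀) ^ 2 / (4 * τ)) (-((r - r₀) / (2 * τ))) r := by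
    refine ((((hasDerivAt_id r).sub_const r₀).pow 2).neg.div_const (4 * τ)).congr_deriv ?_
    simp only [id, Nat.cast_ofNat, Nat.add_one_sub_one, pow_one, mul_one]
    ring
  exact hexponent.exp.congr_deriv (mul_comm _ _)

theorem hasDerivAt_gaussWeight_time (hτ : 0 < τ) (r : ℝ) :
    HasDerivAt (fun σ => gaussWeight r₀ σ r)
      (((r - r₀) / (2 * τ)) ^ 2 * gaussWeight r₀ τ r) τ := by
  have hexponent :
      HasDerivAt (fun σ => -(r - r₀) ^ 2 / (4 * σ)) (((r - r₀) / (2 * τ)) ^ 2) τ := by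
    refine ((hasDerivAt_const τ (-(r - r₀) ^ 2)).div ((hasDerivAt_id τ).const_mul 4)
      (mul_ne_zero four_ne_zero hτ.ne')).congr_deriv ?_
    simp only [id]
    field_simp
    ring
  exact hexponent.exp.congr_deriv (mul_comm _ _)

/-- The mean of `φ` over `(0, R)` against the Gaussian weight of variance `2τ` centred at `r₀`. -/
noncomputable def gaussMean (R r₀ τ : ℝ) (φ : ℝ → ℝ) : ℝ :=
  ∫ r in Ioo 0 R, φ r * gaussWeight r₀ τ r

theorem IsBddContinuous.mul_gaussWeight (hφ : IsBddContinuous R φ) :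
    IsBddContinuous R fun r => φ r * gaussWeight r₀ τ r :=
  hφ.mul (.of_continuous continuous_gaussWeight)

theorem gaussMean_add (hφ : IsBddContinuous R φ) (hψ : IsBddContinuous R ψ) :
    gaussMean R r₀ τ (fun r => φ r + ψ r) = gaussMean R r₀ τ φ + gaussMean R r₀ τ ψ := by
  simp only [gaussMean, add_mul]
  exact integral_add hφ.mul_gaussWeight.integrableOn hψ.mul_gaussWeight.integrableOn

theorem gaussMean_const_mul (c : ℝ) :
    gaussMean R r₀ τ (fun r => c * φ r) = c * gaussMean R r₀ τ φ := by
  simp only [gaussMean, mul_assoc]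
  exact integral_const_mul _ _

theorem gaussMean_sub (hφ : IsBddContinuous R φ) (hψ : IsBddContinuous R ψ) :
    gaussMean R r₀ τ (fun r => φ r - ψ r) = gaussMean R r₀ τ φ - gaussMean R r₀ τ ψ := by
  simp only [gaussMean, sub_mul]
  exact integral_sub hφ.mul_gaussWeight.integrableOn hψ.mul_gaussWeight.integrableOn

theorem gaussMean_congr (h : EqOn φ ψ (Ioo 0 R)) : gaussMean R r₀ τ φ = gaussMean R r₀ τ ψ :=
  setIntegral_congr_fun measurableSet_Ioo fun r hr => by simp only [h hr]

theorem gaussMean_nonneg (hφ : ∀ r ∈ Ioo 0 R, 0 ≤ φ r) : 0 ≤ gaussMean R r₀ τ φ :=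
  setIntegral_nonneg measurableSet_Ioo fun r hr =>
    mul_nonneg (hφ r hr) (gaussWeight_pos r₀ τ r).le

theorem gaussMean_mono (hφ : IsBddContinuous R φ) (hψ : IsBddContinuous R ψ)
    (h : ∀ r ∈ Ioo 0 R, φ r ≤ ψ r) : gaussMean R r₀ τ φ ≤ gaussMean R r₀ τ ψ :=
  setIntegral_mono_on hφ.mul_gaussWeight.integrableOn hψ.mul_gaussWeight.integrableOn
    measurableSet_Ioo fun r hr => mul_le_mul_of_nonneg_right (h r hr) (gaussWeight_pos r₀ τ r).le

theorem gaussMean_sq_pos (hφ : IsBddContinuous R φ) (hne : ∃ r ∈ Ioo 0 R, φ r ≠ 0) :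
    0 < gaussMean R r₀ τ fun r => φ r ^ 2 := by
  refine (gaussMean_nonneg fun r _ => sq_nonneg (φ r)).lt_of_ne fun hzero => ?_
  obtain ⟨r, hr, hφr⟩ := hne
  have hae := (setIntegral_eq_zero_iff_of_nonneg_ae
    (.of_forall fun r => mul_nonneg (sq_nonneg (φ r)) (gaussWeight_pos r₀ τ r).le)
    hφ.sq.mul_gaussWeight.integrableOn).1 hzero.symm
  have hr0 := Measure.eqOn_open_of_ae_eq hae isOpen_Ioo hφ.sq.mul_gaussWeight.1
    continuousOn_const hr
  exact mul_ne_zero (pow_ne_zero 2 hφr) (gaussWeight_pos r₀ τ r).ne' hr0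

theorem gaussMean_mul_sq_le (hφ : IsBddContinuous R φ) (hψ : IsBddContinuous R ψ) :
    (gaussMean R r₀ τ fun r => φ r * ψ r) ^ 2 ≤
      (gaussMean R r₀ τ fun r => φ r ^ 2) * gaussMean R r₀ τ fun r => ψ r ^ 2 := by
  have quadratic_nonneg : ∀ s : ℝ, 0 ≤ (gaussMean R r₀ τ fun r => φ r ^ 2) * (s * s)
      + 2 * (gaussMean R r₀ τ fun r => φ r * ψ r) * s + gaussMean R r₀ τ fun r => ψ r ^ 2 := by
    intro s
    calc 0 ≤ gaussMean R r₀ τ fun r => (s * φ r + ψ r) ^ 2 :=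
          gaussMean_nonneg fun r _ => sq_nonneg _
      _ = gaussMean R r₀ τ fun r => s * s * φ r ^ 2 + 2 * s * (φ r * ψ r) + ψ r ^ 2 :=
          gaussMean_congr fun r _ => by ring
      _ = _ := by
          rw [gaussMean_add ((hφ.sq.const_mul _).add ((hφ.mul hψ).const_mul _)) hψ.sq,
            gaussMean_add (hφ.sq.const_mul _) ((hφ.mul hψ).const_mul _), gaussMean_const_mul,
            gaussMean_const_mul]
          ring
  have hdiscrim := discrim_le_zero quadratic_nonneg
  unfold discrim at hdiscrim
  linarith

/-- Integration by parts: the Gaussian turns `F'` into `F' - (r - r₀) / (2τ) F`. -/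
theorem gaussMean_eq_of_hasDerivAt (hR : 0 < R) (hφ : IsBddContinuous R φ)
    (hF : ∀ r ∈ Ioo 0 R, HasDerivAt F (φ r + (r - r₀) / (2 * τ) * F r) r)
    (h0 : Tendsto F (𝓝[>] 0) (𝓝 0)) (hFR : Tendsto F (𝓝[<] R) (𝓝 b)) :
    gaussMean R r₀ τ φ = b * gaussWeight r₀ τ R := by
  have hw : ∀ x, Tendsto (gaussWeight r₀ τ) (𝓝 x) (𝓝 (gaussWeight r₀ τ x)) :=
    continuous_gaussWeight.tendsto
  have hparts := hφ.mul_gaussWeight (r₀ := r₀) (τ := τ).integral_eq_sub hR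
    (fun r hr => ((hF r hr).mul (hasDerivAt_gaussWeight r)).congr_deriv (by ring))
    (h0.mul ((hw 0).mono_left nhdsWithin_le_nhds)) (hFR.mul ((hw R).mono_left nhdsWithin_le_nhds))
  rwa [zero_mul, sub_zero] at hparts

theorem hasDerivAt_gaussMean {φ φ' : ℝ → ℝ → ℝ} (hr₀ : r₀ ∈ Icc 0 R) (hτ : τ ∈ Ioo 0 T)
    (hc : ∀ σ ∈ Ioo 0 T, ContinuousOn (φ σ) (Ioo 0 R)) (hc' : ContinuousOn (φ' τ) (Ioo 0 R))
    (hB : ∀ σ ∈ Ioo 0 T, ∀ r ∈ Ioo 0 R, |φ σ r| ≤ B ∧ |φ' σ r| ≤ B)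
    (hd : ∀ σ ∈ Ioo 0 T, ∀ r ∈ Ioo 0 R, HasDerivAt (fun s => φ s r) (φ' σ r) σ) :
    HasDerivAt (fun σ => gaussMean R r₀ σ (φ σ))
      (gaussMean R r₀ τ fun r => φ' τ r + ((r - r₀) / (2 * τ)) ^ 2 * φ τ r) τ := by
  have hbdd : ∀ σ ∈ Ioo 0 T, IsBddContinuous R fun r => φ σ r * gaussWeight r₀ σ r :=
    fun σ hσ => .mul_gaussWeight ⟨hc σ hσ, B, fun r hr => (hB σ hσ r hr).1⟩
  have hbdd' : IsBddContinuous R fun r =>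
      (φ' τ r + ((r - r₀) / (2 * τ)) ^ 2 * φ τ r) * gaussWeight r₀ τ r :=
    .mul_gaussWeight (.add ⟨hc', B, fun r hr => (hB τ hτ r hr).2⟩
      (.mul (.of_continuous (by fun_prop)) ⟨hc τ hτ, B, fun r hr => (hB τ hτ r hr).1⟩))
  have hnhds : Ioo (τ / 2) T ∈ 𝓝 τ := Ioo_mem_nhds (by linarith [hτ.1]) hτ.2
  have hsub : Ioo (τ / 2) T ⊆ Ioo 0 T := Ioo_subset_Ioo_left (by linarith [hτ.1])
  refine (hasDerivAt_integral_of_dominated_loc_of_deriv_le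
    (F := fun σ r => φ σ r * gaussWeight r₀ σ r)
    (F' := fun σ r => (φ' σ r + ((r - r₀) / (2 * σ)) ^ 2 * φ σ r) * gaussWeight r₀ σ r)
    (bound := fun _ => B + (R / τ) ^ 2 * B) hnhds ?_ (hbdd τ hτ).integrableOn
    hbdd'.integrableOn.aestronglyMeasurable ?_ (integrableOn_const (by simp)) ?_).2
  · filter_upwards [hnhds] with σ hσ using (hbdd σ (hsub hσ)).integrableOn.aestronglyMeasurable
  · filter_upwards [ae_restrict_mem measurableSet_Ioo] with r hr σ hσ
    obtain ⟨hφ, hφ'⟩ := hB σ (hsub hσ) r hr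
    have hσ0 := (hsub hσ).1
    have hdrift : |(r - r₀) / (2 * σ)| ≤ R / τ := by
      rw [abs_div, abs_of_pos (by positivity : 0 < 2 * σ)]
      exact div_le_div₀ (hr.1.trans hr.2).le
        (abs_le.2 ⟨by linarith [hr.1, hr₀.2], by linarith [hr.2, hr₀.1]⟩) hτ.1
        (by linarith [hσ.1])
    rw [Real.norm_eq_abs, abs_mul, abs_of_pos (gaussWeight_pos _ _ _)]
    refine (mul_le_of_le_one_right (abs_nonneg _) (gaussWeight_le_one hσ0 r)).trans ?_
    refine (abs_add_le _ _).trans (add_le_add hφ' ?_)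
    rw [abs_mul, abs_pow]
    gcongr
  · filter_upwards [ae_restrict_mem measurableSet_Ioo] with r hr σ hσ
    exact ((hd σ (hsub hσ) r hr).mul (hasDerivAt_gaussWeight_time (hsub hσ).1 r)).congr_deriv
      (by ring)

end GaussianMean

section DifferentialInequalities

variable {f : ℝ → ℝ} {a b c : ℝ}

theorem monotoneOn_exp_mul_of_neg_mul_le_deriv (hf : ∀ x ∈ Ioo a b, DifferentiableAt ℝ f x)
    (hderiv : ∀ x ∈ Ioo a b, -(c * f x) ≤ deriv f x) :
    MonotoneOn (fun x => Real.exp (c * x) * f x) (Ioo a b) := by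
  have hprod : ∀ x ∈ Ioo a b, HasDerivAt (fun x => Real.exp (c * x) * f x)
      (Real.exp (c * x) * (c * f x + deriv f x)) x := fun x hx =>
    (((hasDerivAt_id x).const_mul c).exp.mul (hf x hx).hasDerivAt).congr_deriv (by
      simp only [id]; ring)
  refine monotoneOn_of_hasDerivWithinAt_nonneg (convex_Ioo a b)
    (fun x hx => (hprod x hx).continuousAt.continuousWithinAt)
    (fun x hx => (hprod x (interior_subset hx)).hasDerivWithinAt) fun x hx => ?_
  exact mul_nonneg (Real.exp_pos _).le (by linarith [hderiv x (interior_subset hx)])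

theorem antitoneOn_div_pow_of_mul_deriv_le (K : ℕ) (hf : ∀ x ∈ Ioc 0 b, DifferentiableAt ℝ f x)
    (hderiv : ∀ x ∈ Ioc 0 b, x * deriv f x ≤ K * f x) :
    AntitoneOn (fun x => f x / x ^ K) (Ioc 0 b) := by
  have hquot : ∀ x ∈ Ioc 0 b, HasDerivAt (fun x => f x / x ^ K)
      ((x * deriv f x - K * f x) / x ^ (K + 1)) x := fun x hx => by
    have hx0 : x ≠ 0 := hx.1.ne'
    refine ((hf x hx).hasDerivAt.div (hasDerivAt_pow K x) (pow_ne_zero K hx0)).congr_deriv ?_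
    cases K <;> simp only [Nat.cast_zero, add_tsub_cancel_right] <;> field_simp <;> ring
  refine antitoneOn_of_hasDerivWithinAt_nonpos (convex_Ioc 0 b)
    (fun x hx => (hquot x hx).continuousAt.continuousWithinAt)
    (fun x hx => (hquot x (interior_subset hx)).hasDerivWithinAt) fun x hx => ?_
  have hx' := interior_subset hx
  exact div_nonpos_of_nonpos_of_nonneg (sub_nonpos.2 (hderiv x hx')) (pow_pos hx'.1 _).le

end DifferentialInequalities

/-- A solution on `(0, R) × (0, T)` of `u_τ + u_rr - κ r⁻² u = O(|u_r| + |u| / r)`, written in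
backward time `τ`, that vanishes to order `3 / 2` at `r = 0` and vanishes at `r = R`. Its partial
derivatives are part of the data. -/
structure BackwardFlow where
  (R T κ r₀ C : ℝ)
  (u ur urr ut urt : ℝ → ℝ → ℝ)
  R_pos : 0 < R
  T_pos : 0 < T
  κ_pos : 0 < κ
  C_pos : 0 < C
  r₀_mem : r₀ ∈ Icc 0 R
  hasDerivAt_u : ∀ τ ∈ Ioo 0 T, ∀ r ∈ Ioo 0 R, HasDerivAt (u τ) (ur τ r) r
  hasDerivAt_ur : ∀ τ ∈ Ioo 0 T, ∀ r ∈ Ioo 0 R, HasDerivAt (ur τ) (urr τ r) r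
  hasDerivAt_ut : ∀ τ ∈ Ioo 0 T, ∀ r ∈ Ioo 0 R, HasDerivAt (ut τ) (urt τ r) r
  hasDerivAt_u_time : ∀ τ ∈ Ioo 0 T, ∀ r ∈ Ioo 0 R, HasDerivAt (fun σ => u σ r) (ut τ r) τ
  hasDerivAt_ur_time : ∀ τ ∈ Ioo 0 T, ∀ r ∈ Ioo 0 R, HasDerivAt (fun σ => ur σ r) (urt τ r) τ
  continuousOn_urr : ∀ τ ∈ Ioo 0 T, ContinuousOn (urr τ) (Ioo 0 R)
  continuousOn_urt : ∀ τ ∈ Ioo 0 T, ContinuousOn (urt τ) (Ioo 0 R)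
  abs_u_le : ∀ τ ∈ Ioo 0 T, ∀ r ∈ Ioo 0 R, |u τ r| ≤ C * √r * r
  abs_ut_le : ∀ τ ∈ Ioo 0 T, ∀ r ∈ Ioo 0 R, |ut τ r| ≤ C * √r * r
  abs_ur_le : ∀ τ ∈ Ioo 0 T, ∀ r ∈ Ioo 0 R, |ur τ r| ≤ C * √r
  abs_urt_le : ∀ τ ∈ Ioo 0 T, ∀ r ∈ Ioo 0 R, |urt τ r| ≤ C * √r
  error_sq_le : ∀ τ ∈ Ioo 0 T, ∀ r ∈ Ioo 0 R,
    (ut τ r + urr τ r - κ / r ^ 2 * u τ r) ^ 2 ≤ C * (ur τ r ^ 2 + κ * (u τ r / r) ^ 2)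
  tendsto_u_R : ∀ τ ∈ Ioo 0 T, Tendsto (u τ) (𝓝[<] R) (𝓝 0)
  tendsto_ut_R : ∀ τ ∈ Ioo 0 T, Tendsto (ut τ) (𝓝[<] R) (𝓝 0)
  tendsto_ur_R : ∀ τ ∈ Ioo 0 T, ∃ L, Tendsto (ur τ) (𝓝[<] R) (𝓝 L)

namespace BackwardFlow

variable (D : BackwardFlow) {τ r : ℝ}

/-- The error in the backward equation for `u`. -/
noncomputable def error (τ r : ℝ) : ℝ := D.ut τ r + D.urr τ r - D.κ / r ^ 2 * D.u τ r

/-- The operator `-∂ᵣ² + (r - r₀) / (2τ) ∂ᵣ + κ / r²`, which is symmetric for the Gaussian mean,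
applied to `u`. -/
noncomputable def opL (τ r : ℝ) : ℝ :=
  -D.urr τ r + (r - D.r₀) / (2 * τ) * D.ur τ r + D.κ / r ^ 2 * D.u τ r

/-- The density of the Dirichlet energy of `opL`. -/
noncomputable def energyDensity (τ r : ℝ) : ℝ := D.ur τ r ^ 2 + D.κ * (D.u τ r / r) ^ 2

/-- The Gaussian mean at backward time `τ`. -/
noncomputable abbrev mean (τ : ℝ) (φ : ℝ → ℝ) : ℝ := gaussMean D.R D.r₀ τ φ

/-- The weighted `L²` norm, squared; it is `H` in Poon's notation. -/
noncomputable def height (τ : ℝ) : ℝ := D.mean τ fun r => D.u τ r ^ 2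

/-- The weighted Dirichlet energy; it is `I` in Poon's notation. -/
noncomputable def energy (τ : ℝ) : ℝ := D.mean τ (D.energyDensity τ)

/-- Poon's parabolic frequency function. -/
noncomputable def frequency (τ : ℝ) : ℝ := τ * D.energy τ / D.height τ

theorem abs_le_sqrt (hτ : τ ∈ Ioo 0 D.T) (hr : r ∈ Ioo 0 D.R) :
    |D.u τ r| ≤ D.C * (D.R + 1) * √r ∧ |D.ut τ r| ≤ D.C * (D.R + 1) * √r ∧
    |D.ur τ r| ≤ D.C * (D.R + 1) * √r ∧ |D.urt τ r| ≤ D.C * (D.R + 1) * √r ∧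
    |D.u τ r / r| ≤ D.C * (D.R + 1) * √r ∧ |D.ut τ r / r| ≤ D.C * (D.R + 1) * √r := by
  have hC := D.C_pos
  have hR := D.R_pos
  have of_le : ∀ {y}, |y| ≤ D.C * √r → |y| ≤ D.C * (D.R + 1) * √r := fun h => h.trans (by
    gcongr
    exact le_mul_of_one_le_right hC.le (by linarith))
  have of_le_mul : ∀ {y}, |y| ≤ D.C * √r * r → |y| ≤ D.C * (D.R + 1) * √r := fun h => h.trans (by
    rw [mul_right_comm]
    gcongr
    linarith [hr.2])
  have of_le_div : ∀ {y}, |y| ≤ D.C * √r * r → |y / r| ≤ D.C * (D.R + 1) * √r := fun h =>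
    of_le (by rwa [abs_div, abs_of_pos hr.1, div_le_iff₀ hr.1])
  exact ⟨of_le_mul (D.abs_u_le τ hτ r hr), of_le_mul (D.abs_ut_le τ hτ r hr),
    of_le (D.abs_ur_le τ hτ r hr), of_le (D.abs_urt_le τ hτ r hr),
    of_le_div (D.abs_u_le τ hτ r hr), of_le_div (D.abs_ut_le τ hτ r hr)⟩

theorem exists_abs_le : ∃ B, 0 ≤ B ∧ ∀ τ ∈ Ioo 0 D.T, ∀ r ∈ Ioo 0 D.R,
    |D.u τ r| ≤ B ∧ |D.ut τ r| ≤ B ∧ |D.ur τ r| ≤ B ∧ |D.urt τ r| ≤ B ∧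
    |D.u τ r / r| ≤ B ∧ |D.ut τ r / r| ≤ B := by
  have hC := D.C_pos
  have hR := D.R_pos
  refine ⟨D.C * (D.R + 1) * √D.R, by positivity, fun τ hτ r hr => ?_⟩
  have hsqrt : D.C * (D.R + 1) * √r ≤ D.C * (D.R + 1) * √D.R :=
    mul_le_mul_of_nonneg_left (Real.sqrt_le_sqrt hr.2.le) (by positivity)
  obtain ⟨hu, hut, hur, hurt, hq, hqt⟩ := D.abs_le_sqrt hτ hr
  exact ⟨hu.trans hsqrt, hut.trans hsqrt, hur.trans hsqrt, hurt.trans hsqrt, hq.trans hsqrt,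
    hqt.trans hsqrt⟩

theorem tendsto_zero_of_abs_le_sqrt {φ : ℝ → ℝ} {B : ℝ} (hφ : ∀ r ∈ Ioo 0 D.R, |φ r| ≤ B * √r) :
    Tendsto φ (𝓝[>] 0) (𝓝 0) := by
  have hsqrt : Tendsto (fun r : ℝ => B * √r) (𝓝 0) (𝓝 0) := by
    simpa using (by fun_prop : Continuous fun r : ℝ => B * √r).tendsto 0
  refine squeeze_zero_norm' ?_ (hsqrt.mono_left nhdsWithin_le_nhds)
  filter_upwards [Ioo_mem_nhdsGT D.R_pos] with r hr using hφ r hr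

section Slices

variable (hτ : τ ∈ Ioo 0 D.T)
include hτ

theorem tendsto_u_zero : Tendsto (D.u τ) (𝓝[>] 0) (𝓝 0) :=
  D.tendsto_zero_of_abs_le_sqrt fun _ hr => (D.abs_le_sqrt hτ hr).1

theorem tendsto_ut_zero : Tendsto (D.ut τ) (𝓝[>] 0) (𝓝 0) :=
  D.tendsto_zero_of_abs_le_sqrt fun _ hr => (D.abs_le_sqrt hτ hr).2.1

theorem tendsto_ur_zero : Tendsto (D.ur τ) (𝓝[>] 0) (𝓝 0) :=
  D.tendsto_zero_of_abs_le_sqrt fun _ hr => (D.abs_le_sqrt hτ hr).2.2.1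

theorem tendsto_u_div_zero : Tendsto (fun r => D.u τ r / r) (𝓝[>] 0) (𝓝 0) :=
  D.tendsto_zero_of_abs_le_sqrt fun _ hr => (D.abs_le_sqrt hτ hr).2.2.2.2.1

theorem isBddContinuous_u : IsBddContinuous D.R (D.u τ) := by
  obtain ⟨B, -, hB⟩ := D.exists_abs_le
  exact ⟨fun r hr => (D.hasDerivAt_u τ hτ r hr).continuousAt.continuousWithinAt, B,
    fun r hr => (hB τ hτ r hr).1⟩

theorem isBddContinuous_ut : IsBddContinuous D.R (D.ut τ) := by
  obtain ⟨B, -, hB⟩ := D.exists_abs_le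
  exact ⟨fun r hr => (D.hasDerivAt_ut τ hτ r hr).continuousAt.continuousWithinAt, B,
    fun r hr => (hB τ hτ r hr).2.1⟩

theorem isBddContinuous_ur : IsBddContinuous D.R (D.ur τ) := by
  obtain ⟨B, -, hB⟩ := D.exists_abs_le
  exact ⟨fun r hr => (D.hasDerivAt_ur τ hτ r hr).continuousAt.continuousWithinAt, B,
    fun r hr => (hB τ hτ r hr).2.2.1⟩

theorem isBddContinuous_urt : IsBddContinuous D.R (D.urt τ) := by
  obtain ⟨B, -, hB⟩ := D.exists_abs_le
  exact ⟨D.continuousOn_urt τ hτ, B, fun r hr => (hB τ hτ r hr).2.2.2.1⟩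

theorem isBddContinuous_u_div : IsBddContinuous D.R fun r => D.u τ r / r := by
  obtain ⟨B, -, hB⟩ := D.exists_abs_le
  exact ⟨(D.isBddContinuous_u hτ).1.div continuousOn_id fun r hr => hr.1.ne', B,
    fun r hr => (hB τ hτ r hr).2.2.2.2.1⟩

theorem isBddContinuous_ut_div : IsBddContinuous D.R fun r => D.ut τ r / r := by
  obtain ⟨B, -, hB⟩ := D.exists_abs_le
  exact ⟨(D.isBddContinuous_ut hτ).1.div continuousOn_id fun r hr => hr.1.ne', B,
    fun r hr => (hB τ hτ r hr).2.2.2.2.2⟩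

theorem isBddContinuous_u_sq_div_cube : IsBddContinuous D.R fun r => D.u τ r ^ 2 / r ^ 3 := by
  refine ⟨((D.isBddContinuous_u hτ).1.pow 2).div (continuousOn_id.pow 3)
    fun r hr => pow_ne_zero 3 hr.1.ne', D.C ^ 2, fun r hr => ?_⟩
  have hr0 : 0 < r := hr.1
  rw [abs_of_nonneg (by positivity), div_le_iff₀ (by positivity), ← sq_abs]
  calc |D.u τ r| ^ 2 ≤ (D.C * √r * r) ^ 2 := by gcongr; exact D.abs_u_le τ hτ r hr
    _ = D.C ^ 2 * r ^ 3 := by rw [mul_pow, mul_pow, Real.sq_sqrt hr0.le]; ring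

theorem isBddContinuous_energyDensity : IsBddContinuous D.R (D.energyDensity τ) :=
  (D.isBddContinuous_ur hτ).sq.add ((D.isBddContinuous_u_div hτ).sq.const_mul D.κ)

theorem isBddContinuous_error : IsBddContinuous D.R (D.error τ) := by
  obtain ⟨-, B, hB⟩ := (D.isBddContinuous_energyDensity hτ).const_mul D.C
  refine ⟨((D.isBddContinuous_ut hτ).1.add (D.continuousOn_urr τ hτ)).sub
    (.mul (continuousOn_const.div (continuousOn_id.pow 2) fun r hr => pow_ne_zero 2 hr.1.ne')
      (D.isBddContinuous_u hτ).1), √B, fun r hr => ?_⟩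
  exact Real.abs_le_sqrt ((D.error_sq_le τ hτ r hr).trans ((le_abs_self _).trans (hB r hr)))

theorem isBddContinuous_opL : IsBddContinuous D.R (D.opL τ) := by
  have hdrift : IsBddContinuous D.R fun r => (r - D.r₀) / (2 * τ) :=
    .of_continuous (by fun_prop)
  refine (((D.isBddContinuous_ut hτ).add (hdrift.mul (D.isBddContinuous_ur hτ))).sub
    (D.isBddContinuous_error hτ)).congr fun r _ => ?_
  simp only [opL, error]
  ring

theorem mean_u_mul_opL : D.mean τ (fun r => D.u τ r * D.opL τ r) = D.energy τ := by
  have hE := D.isBddContinuous_energyDensity hτ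
  have huL := (D.isBddContinuous_u hτ).mul (D.isBddContinuous_opL hτ)
  obtain ⟨L, hL⟩ := D.tendsto_ur_R τ hτ
  have by_parts := gaussMean_eq_of_hasDerivAt (r₀ := D.r₀) (τ := τ) D.R_pos (hE.sub huL)
    (F := fun r => D.u τ r * D.ur τ r) (b := 0)
    (fun r hr => ((D.hasDerivAt_u τ hτ r hr).mul (D.hasDerivAt_ur τ hτ r hr)).congr_deriv (by
      have := hr.1.ne'
      simp only [energyDensity, opL]
      field_simp
      ring))
    (by simpa using (D.tendsto_u_zero hτ).mul (D.tendsto_ur_zero hτ))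
    (by simpa using (D.tendsto_u_R τ hτ).mul hL)
  rw [gaussMean_sub hE huL, zero_mul] at by_parts
  exact (sub_eq_zero.1 by_parts).symm

end Slices

theorem hasDerivAt_drift (r₀ τ r : ℝ) :
    HasDerivAt (fun x => (x - r₀) / (2 * τ)) (1 / (2 * τ)) r :=
  ((hasDerivAt_id r).sub_const r₀).div_const _

theorem tendsto_drift (r₀ τ x : ℝ) (s : Set ℝ) :
    Tendsto (fun r => (r - r₀) / (2 * τ)) (𝓝[s] x) (𝓝 ((x - r₀) / (2 * τ))) :=
  (by fun_prop : Continuous fun r => (r - r₀) / (2 * τ)).continuousWithinAt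

section Slices

variable (hτ : τ ∈ Ioo 0 D.T)
include hτ

theorem hasDerivAt_height_under_mean : HasDerivAt D.height
    (D.mean τ fun r => 2 * (D.u τ r * D.ut τ r) + ((r - D.r₀) / (2 * τ)) ^ 2 * D.u τ r ^ 2) τ := by
  obtain ⟨B, hB0, hB⟩ := D.exists_abs_le
  refine hasDerivAt_gaussMean (B := 2 * (B * B)) (φ := fun σ r => D.u σ r ^ 2)
    (φ' := fun σ r => 2 * (D.u σ r * D.ut σ r)) D.r₀_mem hτ
    (fun σ hσ => (D.isBddContinuous_u hσ).sq.1)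
    (((D.isBddContinuous_u hτ).mul (D.isBddContinuous_ut hτ)).const_mul 2).1
    (fun σ hσ r hr => ?_)
    fun σ hσ r hr => ((D.hasDerivAt_u_time σ hσ r hr).pow 2).congr_deriv (by
      simp only [Nat.cast_ofNat, Nat.add_one_sub_one, pow_one]; ring)
  obtain ⟨hu, hut, -⟩ := hB σ hσ r hr
  rw [pow_two, abs_mul, abs_mul, abs_mul, abs_two]
  exact ⟨by nlinarith [mul_le_mul hu hu (abs_nonneg _) hB0, mul_nonneg hB0 hB0], by gcongr⟩

theorem hasDerivAt_height : HasDerivAt D.height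
    (2 * D.energy τ + 2 * D.mean τ (fun r => D.u τ r * D.error τ r) + D.height τ / (2 * τ)) τ := by
  refine (D.hasDerivAt_height_under_mean hτ).congr_deriv ?_
  have hu := D.isBddContinuous_u hτ
  have hdrift : IsBddContinuous D.R fun r => ((r - D.r₀) / (2 * τ)) ^ 2 :=
    .of_continuous (by fun_prop)
  have huut := ((hu.mul (D.isBddContinuous_ut hτ)).const_mul 2).add (hdrift.mul hu.sq)
  have huL := (hu.mul (D.isBddContinuous_opL hτ)).const_mul 2
  have huf := (hu.mul (D.isBddContinuous_error hτ)).const_mul 2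
  have huu := hu.sq.const_mul (1 / (2 * τ))
  have by_parts := gaussMean_eq_of_hasDerivAt (r₀ := D.r₀) (τ := τ) D.R_pos
    (huut.sub ((huL.add huf).add huu))
    (F := fun r => -((r - D.r₀) / (2 * τ) * D.u τ r ^ 2)) (b := 0)
    (fun r hr => ((hasDerivAt_drift D.r₀ τ r).mul
      ((D.hasDerivAt_u τ hτ r hr).pow 2)).neg.congr_deriv (by
        simp only [opL, error, Pi.pow_apply, Nat.cast_ofNat, Nat.add_one_sub_one, pow_one]
        ring))
    (by simpa using ((tendsto_drift D.r₀ τ 0 _).mul ((D.tendsto_u_zero hτ).pow 2)).neg)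
    (by simpa using ((tendsto_drift D.r₀ τ D.R _).mul ((D.tendsto_u_R τ hτ).pow 2)).neg)
  rw [gaussMean_sub huut ((huL.add huf).add huu), gaussMean_add (huL.add huf) huu,
    gaussMean_add huL huf, gaussMean_const_mul, gaussMean_const_mul, gaussMean_const_mul, zero_mul,
    sub_eq_zero] at by_parts
  refine by_parts.trans ?_
  rw [← D.mean_u_mul_opL hτ, height]
  ring

theorem isBddContinuous_energyDensity_time : IsBddContinuous D.R fun r =>
    2 * (D.ur τ r * D.urt τ r + D.κ * (D.u τ r / r * (D.ut τ r / r))) :=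
  (((D.isBddContinuous_ur hτ).mul (D.isBddContinuous_urt hτ)).add
    (((D.isBddContinuous_u_div hτ).mul (D.isBddContinuous_ut_div hτ)).const_mul D.κ)).const_mul 2

theorem hasDerivAt_energy_under_mean : HasDerivAt D.energy
    (D.mean τ fun r => 2 * (D.ur τ r * D.urt τ r + D.κ * (D.u τ r / r * (D.ut τ r / r)))
      + ((r - D.r₀) / (2 * τ)) ^ 2 * D.energyDensity τ r) τ := by
  obtain ⟨B, hB0, hB⟩ := D.exists_abs_le
  have hκ := D.κ_pos
  refine hasDerivAt_gaussMean (B := 2 * (B * B + D.κ * (B * B))) (φ := D.energyDensity)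
    (φ' := fun σ r => 2 * (D.ur σ r * D.urt σ r + D.κ * (D.u σ r / r * (D.ut σ r / r))))
    D.r₀_mem hτ (fun σ hσ => (D.isBddContinuous_energyDensity hσ).1)
    (D.isBddContinuous_energyDensity_time hτ).1
    (fun σ hσ r hr => ?_)
    fun σ hσ r hr => (((D.hasDerivAt_ur_time σ hσ r hr).pow 2).add
      ((((D.hasDerivAt_u_time σ hσ r hr).div_const r).pow 2).const_mul D.κ)).congr_deriv (by
        simp only [Nat.cast_ofNat, Nat.add_one_sub_one, pow_one]; ring)
  obtain ⟨-, -, hur, hurt, hq, hqt⟩ := hB σ hσ r hr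
  constructor
  · rw [energyDensity, pow_two, pow_two]
    refine (abs_add_le _ _).trans ?_
    rw [abs_mul, abs_mul, abs_mul, abs_of_pos hκ, two_mul]
    refine (?_ : _ ≤ B * B + D.κ * (B * B)).trans (le_add_of_nonneg_left (by positivity))
    gcongr
  · rw [abs_mul, abs_two]
    refine mul_le_mul_of_nonneg_left ((abs_add_le _ _).trans ?_) zero_le_two
    rw [abs_mul, abs_mul, abs_mul, abs_of_pos hκ]
    gcongr

theorem tendsto_energy_flux {L : ℝ} (hL : Tendsto (D.ur τ) (𝓝[<] D.R) (𝓝 L)) :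
    Tendsto (fun r => 2 * (D.ur τ r * (D.ut τ r + (r - D.r₀) / (2 * τ) * D.ur τ r))
      - (r - D.r₀) / (2 * τ) * D.energyDensity τ r) (𝓝[<] D.R)
      (𝓝 ((D.R - D.r₀) / (2 * τ) * L ^ 2)) := by
  have hdrift := tendsto_drift D.r₀ τ D.R (Iio D.R)
  have hq : Tendsto (fun r => D.u τ r / r) (𝓝[<] D.R) (𝓝 0) := by
    rw [← zero_div D.R]
    exact (D.tendsto_u_R τ hτ).div (tendsto_id.mono_left nhdsWithin_le_nhds) D.R_pos.ne'
  refine (((hL.mul ((D.tendsto_ut_R τ hτ).add (hdrift.mul hL))).const_mul 2).sub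
    (hdrift.mul ((hL.pow 2).add ((hq.pow 2).const_mul D.κ)))).trans_eq (congrArg 𝓝 ?_)
  ring

theorem tendsto_energy_flux_zero :
    Tendsto (fun r => 2 * (D.ur τ r * (D.ut τ r + (r - D.r₀) / (2 * τ) * D.ur τ r))
      - (r - D.r₀) / (2 * τ) * D.energyDensity τ r) (𝓝[>] 0) (𝓝 0) := by
  have hdrift := tendsto_drift D.r₀ τ 0 (Ioi 0)
  have hur := D.tendsto_ur_zero hτ
  simpa [energyDensity] using
    ((hur.mul ((D.tendsto_ut_zero hτ).add (hdrift.mul hur))).const_mul 2).sub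
      (hdrift.mul ((hur.pow 2).add (((D.tendsto_u_div_zero hτ).pow 2).const_mul D.κ)))

/-- Both defects have a good sign: the boundary term at `R` because `r₀ ≤ R`, and the mean of
`u² / r³` because `0 ≤ r₀`. -/
theorem le_deriv_energy :
    2 * D.mean τ (fun r => (D.opL τ r + 1 / 2 * D.error τ r) ^ 2)
      - 1 / 2 * D.mean τ (fun r => D.error τ r ^ 2) - D.energy τ / (2 * τ) ≤ deriv D.energy τ := by
  have hf := D.isBddContinuous_error hτ
  have hP := ((D.isBddContinuous_opL hτ).add (hf.const_mul (1 / 2))).sq.const_mul 2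
  have hff := hf.sq.const_mul (1 / 2)
  have hE := (D.isBddContinuous_energyDensity hτ).const_mul (1 / (2 * τ))
  have hc := (D.isBddContinuous_u_sq_div_cube hτ).const_mul (D.κ * D.r₀ / τ)
  obtain ⟨L, hL⟩ := D.tendsto_ur_R τ hτ
  have hτ0 := hτ.1
  have hdrift : IsBddContinuous D.R fun r => ((r - D.r₀) / (2 * τ)) ^ 2 :=
    .of_continuous (by fun_prop)
  have hI := (D.isBddContinuous_energyDensity_time hτ).add
    (hdrift.mul (D.isBddContinuous_energyDensity hτ))
  have hsum := (hP.sub hff).sub hE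
  have by_parts := gaussMean_eq_of_hasDerivAt (r₀ := D.r₀) (τ := τ) D.R_pos ((hI.sub hsum).sub hc)
    (fun r hr => by
      have hd := hasDerivAt_drift D.r₀ τ r
      have hur := D.hasDerivAt_ur τ hτ r hr
      have hr0 := hr.1.ne'
      refine (((hur.mul ((D.hasDerivAt_ut τ hτ r hr).add (hd.mul hur))).const_mul 2).sub
        (hd.mul ((hur.pow 2).add ((((D.hasDerivAt_u τ hτ r hr).div (hasDerivAt_id r)
          hr0).pow 2).const_mul D.κ)))).congr_deriv ?_
      simp only [error, opL, energyDensity, Pi.mul_apply, Pi.pow_apply, Pi.add_apply, Pi.div_apply,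
        id, Nat.add_one_sub_one, pow_one, Nat.cast_ofNat]
      field_simp
      ring)
    (D.tendsto_energy_flux_zero hτ) (D.tendsto_energy_flux hτ hL)
  rw [gaussMean_sub (hI.sub hsum) hc, gaussMean_sub hI hsum, gaussMean_sub (hP.sub hff) hE,
    gaussMean_sub hP hff, gaussMean_const_mul, gaussMean_const_mul, gaussMean_const_mul,
    gaussMean_const_mul] at by_parts
  have hboundary : 0 ≤ (D.R - D.r₀) / (2 * τ) * L ^ 2 * gaussWeight D.r₀ τ D.R :=
    mul_nonneg (mul_nonneg (div_nonneg (sub_nonneg.2 D.r₀_mem.2) (by positivity)) (sq_nonneg L))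
      (gaussWeight_pos _ _ _).le
  have hcube : 0 ≤ D.κ * D.r₀ / τ * gaussMean D.R D.r₀ τ fun r => D.u τ r ^ 2 / r ^ 3 :=
    mul_nonneg (div_nonneg (mul_nonneg D.κ_pos.le D.r₀_mem.1) hτ0.le)
      (gaussMean_nonneg fun r hr => div_nonneg (sq_nonneg _) (pow_pos hr.1 3).le)
  have hEτ : D.energy τ / (2 * τ) = 1 / (2 * τ) * gaussMean D.R D.r₀ τ (D.energyDensity τ) :=
    (one_div_mul_eq_div _ _).symm
  rw [(D.hasDerivAt_energy_under_mean hτ).deriv, hEτ]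
  simp only [mean]
  linarith

theorem differentiableAt_energy : DifferentiableAt ℝ D.energy τ :=
  (D.hasDerivAt_energy_under_mean hτ).differentiableAt

theorem mean_error_sq_le : D.mean τ (fun r => D.error τ r ^ 2) ≤ D.C * D.energy τ := by
  rw [energy, mean, ← gaussMean_const_mul]
  exact gaussMean_mono (D.isBddContinuous_error hτ).sq
    ((D.isBddContinuous_energyDensity hτ).const_mul D.C) (D.error_sq_le τ hτ)

theorem two_mul_mean_u_mul_error_le :
    2 * D.mean τ (fun r => D.u τ r * D.error τ r) ≤ D.height τ + D.C * D.energy τ := by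
  have hu := D.isBddContinuous_u hτ
  have hf := D.isBddContinuous_error hτ
  calc 2 * D.mean τ (fun r => D.u τ r * D.error τ r)
      = D.mean τ fun r => 2 * (D.u τ r * D.error τ r) := (gaussMean_const_mul 2).symm
    _ ≤ D.mean τ fun r => D.u τ r ^ 2 + D.error τ r ^ 2 :=
        gaussMean_mono ((hu.mul hf).const_mul 2) (hu.sq.add hf.sq) fun r _ => by
          linarith [two_mul_le_add_sq (D.u τ r) (D.error τ r)]
    _ = D.height τ + D.mean τ fun r => D.error τ r ^ 2 := gaussMean_add hu.sq hf.sq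
    _ ≤ D.height τ + D.C * D.energy τ := by gcongr; exact D.mean_error_sq_le hτ

theorem energy_add_mean_sq_le :
    (D.energy τ + 1 / 2 * D.mean τ fun r => D.u τ r * D.error τ r) ^ 2 ≤
      D.height τ * D.mean τ fun r => (D.opL τ r + 1 / 2 * D.error τ r) ^ 2 := by
  have hu := D.isBddContinuous_u hτ
  have hL := D.isBddContinuous_opL hτ
  have hf := D.isBddContinuous_error hτ
  have hpairing : D.mean τ (fun r => D.u τ r * (D.opL τ r + 1 / 2 * D.error τ r)) =
      D.energy τ + 1 / 2 * D.mean τ fun r => D.u τ r * D.error τ r := by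
    rw [← D.mean_u_mul_opL hτ, mean, mean, mean, ← gaussMean_const_mul,
      ← gaussMean_add (hu.mul hL) ((hu.mul hf).const_mul _)]
    exact gaussMean_congr fun r _ => by ring
  rw [← hpairing]
  exact gaussMean_mul_sq_le hu (hL.add (hf.const_mul _))

end Slices

theorem energy_nonneg (τ : ℝ) : 0 ≤ D.energy τ :=
  gaussMean_nonneg fun _ _ =>
    add_nonneg (sq_nonneg _) (mul_nonneg D.κ_pos.le (sq_nonneg _))

theorem hasDerivAt_frequency (hτ : τ ∈ Ioo 0 D.T) (hH : D.height τ ≠ 0) :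
    HasDerivAt D.frequency
      (((D.energy τ + τ * deriv D.energy τ) * D.height τ - τ * D.energy τ *
        (2 * D.energy τ + 2 * D.mean τ (fun r => D.u τ r * D.error τ r) + D.height τ / (2 * τ)))
        / D.height τ ^ 2) τ :=
  (((hasDerivAt_id τ).mul (D.differentiableAt_energy hτ).hasDerivAt).div
    (D.hasDerivAt_height hτ) hH).congr_deriv (by simp only [id, one_mul, Pi.mul_apply])

/-- Without the error terms this is Poon's monotonicity of the frequency. -/
theorem neg_mul_frequency_le_deriv (hτ : τ ∈ Ioo 0 D.T) (hH : 0 < D.height τ) :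
    -(D.C / 2 * D.frequency τ) ≤ deriv D.frequency τ := by
  have hτ0 : 0 < τ := hτ.1
  have hderiv := D.le_deriv_energy hτ
  have hCS := D.energy_add_mean_sq_le hτ
  have herror := D.mean_error_sq_le hτ
  rw [(D.hasDerivAt_frequency hτ hH.ne').deriv, frequency]
  set I := D.energy τ
  set I' := deriv D.energy τ
  set H := D.height τ
  set Q := D.mean τ fun r => D.u τ r * D.error τ r
  set P := D.mean τ fun r => (D.opL τ r + 1 / 2 * D.error τ r) ^ 2
  set F := D.mean τ fun r => D.error τ r ^ 2
  have hnumerator : 0 ≤ (I + τ * I') * H - τ * I * (2 * I + 2 * Q + H / (2 * τ))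
      + D.C / 2 * (τ * I * H) := by
    calc 0 ≤ τ / 2 * Q ^ 2 := by positivity
      _ = I / 2 * H - τ * I * (2 * I + 2 * Q) - I * H / 2 + 2 * τ * (I + 1 / 2 * Q) ^ 2 := by ring
      _ ≤ I / 2 * H - τ * I * (2 * I + 2 * Q) - I * H / 2 + 2 * τ * (H * P) := by gcongr
      _ = (I + τ * (2 * P - 1 / 2 * F - I / (2 * τ))) * H
            - τ * I * (2 * I + 2 * Q + H / (2 * τ)) + τ / 2 * H * F := by field_simp; ring
      _ ≤ (I + τ * I') * H - τ * I * (2 * I + 2 * Q + H / (2 * τ)) + τ / 2 * H * (D.C * I) := by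
          gcongr
      _ = _ := by ring
  have hsplit : -(D.C / 2 * (τ * I / H)) = -(D.C / 2 * (τ * I * H)) / H ^ 2 := by field_simp
  rw [hsplit]
  gcongr
  linarith

theorem exists_mul_energy_le (hH : ∀ τ ∈ Ioo 0 D.T, 0 < D.height τ) {τ₀ : ℝ}
    (hτ₀ : τ₀ ∈ Ioo 0 D.T) :
    ∃ N, ∀ τ ∈ Ioc 0 τ₀, τ * D.energy τ ≤ N * D.height τ := by
  have hmono : MonotoneOn (fun τ => Real.exp (D.C / 2 * τ) * D.frequency τ) (Ioo 0 D.T) :=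
    monotoneOn_exp_mul_of_neg_mul_le_deriv
      (fun τ hτ => (D.hasDerivAt_frequency hτ (hH τ hτ).ne').differentiableAt)
      fun τ hτ => D.neg_mul_frequency_le_deriv hτ (hH τ hτ)
  have hfreq : ∀ τ ∈ Ioo 0 D.T, 0 ≤ D.frequency τ := fun τ hτ =>
    div_nonneg (mul_nonneg hτ.1.le (D.energy_nonneg τ)) (hH τ hτ).le
  refine ⟨Real.exp (D.C / 2 * τ₀) * D.frequency τ₀, fun τ hτ => ?_⟩
  have hτ' : τ ∈ Ioo 0 D.T := ⟨hτ.1, hτ.2.trans_lt hτ₀.2⟩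
  have hexp : 1 ≤ Real.exp (D.C / 2 * τ) :=
    Real.one_le_exp (mul_nonneg (by linarith [D.C_pos]) hτ.1.le)
  rw [← div_le_iff₀ (hH τ hτ')]
  exact (le_mul_of_one_le_left (hfreq τ hτ') hexp).trans (hmono hτ' hτ₀ hτ.2)

/-- A frequency bound limits the order of vanishing as `τ → 0`. -/
theorem exists_mul_pow_le_height (hH : ∀ τ ∈ Ioo 0 D.T, 0 < D.height τ) :
    ∃ c > 0, ∃ K : ℕ, ∀ τ ∈ Ioc 0 (D.T / 2), c * τ ^ K ≤ D.height τ := by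
  have hT := D.T_pos
  have hmid : D.T / 2 ∈ Ioo 0 D.T := ⟨by linarith, by linarith⟩
  obtain ⟨N, hN⟩ := D.exists_mul_energy_le hH hmid
  obtain ⟨K, hK⟩ := exists_nat_ge ((2 + D.C) * N + D.T + 1 / 2)
  have hsub : ∀ τ ∈ Ioc 0 (D.T / 2), τ ∈ Ioo 0 D.T := fun τ hτ => ⟨hτ.1, hτ.2.trans_lt hmid.2⟩
  have hanti := antitoneOn_div_pow_of_mul_deriv_le (f := D.height) K
    (fun τ hτ => (D.hasDerivAt_height (hsub τ hτ)).differentiableAt) fun τ hτ => by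
      have hτ0 : 0 < τ := hτ.1
      have hHτ := (hH τ (hsub τ hτ)).le
      have hC := D.C_pos
      rw [(D.hasDerivAt_height (hsub τ hτ)).deriv]
      calc τ * (2 * D.energy τ + 2 * D.mean τ (fun r => D.u τ r * D.error τ r)
            + D.height τ / (2 * τ))
          ≤ τ * (2 * D.energy τ + (D.height τ + D.C * D.energy τ) + D.height τ / (2 * τ)) := by
            gcongr; exact D.two_mul_mean_u_mul_error_le (hsub τ hτ)
        _ = (2 + D.C) * (τ * D.energy τ) + τ * D.height τ + D.height τ / 2 := by
            field_simp; ring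
        _ ≤ (2 + D.C) * (N * D.height τ) + D.T * D.height τ + D.height τ / 2 := by
            linarith [mul_le_mul_of_nonneg_left (hN τ hτ) (by linarith : 0 ≤ 2 + D.C),
              mul_le_mul_of_nonneg_right (hsub τ hτ).2.le hHτ]
        _ = ((2 + D.C) * N + D.T + 1 / 2) * D.height τ := by ring
        _ ≤ K * D.height τ := by gcongr
  refine ⟨D.height (D.T / 2) / (D.T / 2) ^ K, div_pos (hH _ hmid) (pow_pos hmid.1 K), K,
    fun τ hτ => ?_⟩
  rw [← le_div_iff₀ (pow_pos hτ.1 K)]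
  exact hanti hτ ⟨hmid.1, le_rfl⟩ hτ.2

end BackwardFlow

theorem parabolic_pow_mul_gaussWeight_le {τ : ℝ} (hτ : 0 < τ) (r₀ r : ℝ) (n : ℕ) :
    ((r - r₀) ^ 2 + τ) ^ n * gaussWeight r₀ τ r
      ≤ 4 ^ n * n.factorial * Real.exp (1 / 4) * τ ^ n := by
  set y := ((r - r₀) ^ 2 + τ) / (4 * τ) with hy
  have hy0 : 0 ≤ y := by positivity
  have hpow : (r - r₀) ^ 2 + τ = 4 * τ * y := by rw [hy]; field_simp
  have hweight : gaussWeight r₀ τ r = Real.exp (1 / 4) * (Real.exp y)⁻¹ := by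
    rw [gaussWeight, ← Real.exp_neg, ← Real.exp_add, hy]
    congr 1
    field_simp
    ring
  have htaylor : y ^ n * (Real.exp y)⁻¹ ≤ n.factorial := by
    rw [← div_eq_mul_inv, div_le_iff₀ (Real.exp_pos y)]
    exact (div_le_iff₀' (by positivity)).1 (Real.pow_div_factorial_le_exp y hy0 n)
  calc ((r - r₀) ^ 2 + τ) ^ n * gaussWeight r₀ τ r
      = 4 ^ n * Real.exp (1 / 4) * τ ^ n * (y ^ n * (Real.exp y)⁻¹) := by
        rw [hpow, hweight, mul_pow, mul_pow]; ring
    _ ≤ 4 ^ n * Real.exp (1 / 4) * τ ^ n * n.factorial := by gcongr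
    _ = _ := by ring

namespace BackwardFlow

variable (D : BackwardFlow) {τ : ℝ}

theorem height_le {n : ℕ} {c : ℝ} (hτ : τ ∈ Ioo 0 D.T) (hc : 0 ≤ c)
    (hu : ∀ r ∈ Ioo 0 D.R, D.u τ r ^ 2 ≤ c * ((r - D.r₀) ^ 2 + τ) ^ n) :
    D.height τ ≤ D.R * (c * (4 ^ n * n.factorial * Real.exp (1 / 4) * τ ^ n)) := by
  have hbound : ∀ r ∈ Ioo 0 D.R, D.u τ r ^ 2 * gaussWeight D.r₀ τ r
      ≤ c * (4 ^ n * n.factorial * Real.exp (1 / 4) * τ ^ n) := fun r hr => by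
    refine (mul_le_mul_of_nonneg_right (hu r hr) (gaussWeight_pos _ _ _).le).trans ?_
    rw [mul_assoc]
    exact mul_le_mul_of_nonneg_left (parabolic_pow_mul_gaussWeight_le hτ.1 _ _ _) hc
  refine (MeasureTheory.setIntegral_mono_on
    (D.isBddContinuous_u hτ).sq.mul_gaussWeight.integrableOn
    (IsBddContinuous.of_continuous continuous_const).integrableOn measurableSet_Ioo
    hbound).trans_eq ?_
  simp [D.R_pos.le]

/-- Strong unique continuation: flatness at `(r₀, 0)` contradicts the polynomial lower bound for
the height. -/
theorem exists_slice_eq_zero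
    (hflat : ∀ n : ℕ, ∃ c, 0 ≤ c ∧ ∀ τ ∈ Ioo 0 D.T, ∀ r ∈ Ioo 0 D.R,
      D.u τ r ^ 2 ≤ c * ((r - D.r₀) ^ 2 + τ) ^ n) :
    ∃ τ ∈ Ioo 0 D.T, ∀ r ∈ Ioo 0 D.R, D.u τ r = 0 := by
  by_contra! hne
  obtain ⟨c, hc, K, hlower⟩ := D.exists_mul_pow_le_height fun τ hτ =>
    gaussMean_sq_pos (D.isBddContinuous_u hτ) (hne τ hτ)
  obtain ⟨c', hc', hflat⟩ := hflat (K + 1)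
  have hT := D.T_pos
  set M := D.R * (c' * (4 ^ (K + 1) * (K + 1).factorial * Real.exp (1 / 4)))
  have hle : ∀ τ ∈ Ioc 0 (D.T / 2), c ≤ M * τ := fun τ hτ => by
    have hτ' : τ ∈ Ioo 0 D.T := ⟨hτ.1, by linarith [hτ.2]⟩
    refine le_of_mul_le_mul_right ?_ (pow_pos hτ.1 K)
    calc c * τ ^ K ≤ D.height τ := hlower τ hτ
      _ ≤ _ := D.height_le hτ' hc' (hflat τ hτ')
      _ = M * τ * τ ^ K := by ring
  have htendsto : Tendsto (fun τ => M * τ) (𝓝[>] 0) (𝓝 0) := by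
    simpa using ((continuous_const_mul M).tendsto 0).mono_left nhdsWithin_le_nhds
  refine hc.not_ge (ge_of_tendsto htendsto ?_)
  filter_upwards [Ioc_mem_nhdsGT (half_pos hT)] with τ hτ using hle τ hτ

end BackwardFlow

section RadialFlow

variable {R t₁ t₂ μ β s T K k : ℝ} {g φ : ℝ × ℝ → ℝ} {τ r : ℝ}

local notation "Ω" => strip R t₁ t₂
local notation "∂ᵣ" => partialDeriv (strip R t₁ t₂) (1, 0)
local notation "∂ₜ" => partialDeriv (strip R t₁ t₂) (0, 1)

variable (R t₁ t₂) in
/-- `g` vanishes at both endpoints and solves `g_t = g_rr + μ r⁻¹ g_r - β r⁻² g` for `t` in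
`(s - T, s)` up to an error `O(|g| / r + |g_r|)`. The field `coercive` makes the potential positive
once the first order term is removed. -/
structure IsApproxDirichletSolution (μ β s T K : ℝ) (g : ℝ × ℝ → ℝ) : Prop where
  R_pos : 0 < R
  T_pos : 0 < T
  K_nonneg : 0 ≤ K
  lt_sub : t₁ < s - T
  lt_t₂ : s < t₂
  one_le : 1 ≤ μ
  coercive : 0 < μ * (μ - 2) / 4 + β
  smooth : SmoothOnStrip R t₁ t₂ g
  zero_left : ∀ t ∈ Ioo t₁ t₂, g (0, t) = 0
  zero_right : ∀ t ∈ Ioo t₁ t₂, g (R, t) = 0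
  abs_error_le : ∀ r ∈ Ioo 0 R, ∀ t ∈ Ioo (s - T) s,
    |∂ₜ g (r, t) - ∂ᵣ (∂ᵣ g) (r, t) - μ / r * ∂ᵣ g (r, t) + β / r ^ 2 * g (r, t)|
      ≤ K * (|g (r, t)| / r + |∂ᵣ g (r, t)|)

/-- The function `r ^ k g` in backward time `τ = s - t`. The choice `k = μ / 2` removes the first
order term `μ r⁻¹ g_r`. -/
noncomputable def backward (k s : ℝ) (g : ℝ × ℝ → ℝ) (τ r : ℝ) : ℝ := r ^ k * g (r, s - τ)

/-- The conjugated derivative `r ^ (-k) ∂ᵣ (r ^ k g)`. -/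
noncomputable def conjDeriv (R t₁ t₂ k : ℝ) (g : ℝ × ℝ → ℝ) (p : ℝ × ℝ) : ℝ :=
  partialDeriv (strip R t₁ t₂) (1, 0) g p + k / p.1 * g p

local notation "Dₖ" => conjDeriv R t₁ t₂ k

/-- The conjugated second derivative `r ^ (-k) ∂ᵣ² (r ^ k g)`. -/
noncomputable def conjDeriv₂ (R t₁ t₂ k : ℝ) (g : ℝ × ℝ → ℝ) (p : ℝ × ℝ) : ℝ :=
  partialDeriv (strip R t₁ t₂) (1, 0) (partialDeriv (strip R t₁ t₂) (1, 0) g) p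
    + 2 * k / p.1 * partialDeriv (strip R t₁ t₂) (1, 0) g p + (k ^ 2 - k) / p.1 ^ 2 * g p

theorem hasDerivAt_rpow_mul {ψ : ℝ → ℝ} {ψ' : ℝ} (hr : 0 < r) (hψ : HasDerivAt ψ ψ' r) :
    HasDerivAt (fun x => x ^ k * ψ x) (r ^ k * (ψ' + k / r * ψ r)) r := by
  refine ((Real.hasDerivAt_rpow_const (p := k) (Or.inl hr.ne')).mul hψ).congr_deriv ?_
  rw [Real.rpow_sub_one hr.ne']
  field_simp
  ring

theorem rpow_le_rpow_mul_sqrt (hk : 1 / 2 ≤ k) (hr : 0 < r) (hrR : r ≤ R) :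
    r ^ k ≤ R ^ (k - 1 / 2) * √r := by
  have hsplit : r ^ k = r ^ (k - 1 / 2) * √r := by
    rw [Real.sqrt_eq_rpow, ← Real.rpow_add hr, sub_add_cancel]
  rw [hsplit]
  exact mul_le_mul_of_nonneg_right (Real.rpow_le_rpow hr.le hrR (by linarith)) (Real.sqrt_nonneg _)

theorem hasDerivAt_backward (hφ : SmoothOnStrip R t₁ t₂ φ) (hτ : s - τ ∈ Ioo t₁ t₂)
    (hr : r ∈ Ioo 0 R) : HasDerivAt (backward k s φ τ) (backward k s (Dₖ φ) τ r) r :=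
  hasDerivAt_rpow_mul hr.1 (hφ.hasDerivAt_space hr hτ)

theorem hasDerivAt_backward_conjDeriv (hR : 0 < R) (hφ : SmoothOnStrip R t₁ t₂ φ)
    (hτ : s - τ ∈ Ioo t₁ t₂) (hr : r ∈ Ioo 0 R) :
    HasDerivAt (backward k s (Dₖ φ) τ) (backward k s (conjDeriv₂ R t₁ t₂ k φ) τ r) r := by
  have hr0 := hr.1.ne'
  refine (hasDerivAt_rpow_mul hr.1 (((hφ.partialDeriv hR).hasDerivAt_space hr hτ).add
    (((hasDerivAt_const r k).div (hasDerivAt_id r) hr0).mul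
      (hφ.hasDerivAt_space hr hτ)))).congr_deriv ?_
  simp only [backward, conjDeriv₂, Pi.add_apply, Pi.mul_apply, Pi.div_apply, id]
  field_simp
  ring

theorem hasDerivAt_backward_time (hφ : SmoothOnStrip R t₁ t₂ φ) (hτ : s - τ ∈ Ioo t₁ t₂)
    (hr : r ∈ Ioo 0 R) :
    HasDerivAt (fun σ => backward k s φ σ r) (backward k s (-∂ₜ φ) τ r) τ :=
  ((hφ.hasDerivAt_time (Ioo_subset_Icc_self hr) hτ).comp_const_sub s τ).const_mul (r ^ k)

theorem hasDerivAt_backward_conjDeriv_time (hR : 0 < R) (hφ : SmoothOnStrip R t₁ t₂ φ)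
    (hτ : s - τ ∈ Ioo t₁ t₂) (hr : r ∈ Ioo 0 R) :
    HasDerivAt (fun σ => backward k s (Dₖ φ) σ r) (backward k s (Dₖ (-∂ₜ φ)) τ r) τ := by
  have hr' := Ioo_subset_Icc_self hr
  have hcomm : ∂ᵣ (-∂ₜ φ) (r, s - τ) = -∂ₜ (∂ᵣ φ) (r, s - τ) := by
    rw [partialDeriv_neg hR ⟨hr', hτ⟩, Pi.neg_apply, partialDeriv_comm hR hφ ⟨hr', hτ⟩]
  refine (((((hφ.partialDeriv hR).hasDerivAt_time hr' hτ).add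
    ((hφ.hasDerivAt_time hr' hτ).const_mul (k / r))).comp_const_sub s τ).const_mul
      (r ^ k)).congr_deriv ?_
  rw [backward, conjDeriv, hcomm, Pi.neg_apply]
  ring

theorem continuousOn_rpow_Ioo : ContinuousOn (fun r : ℝ => r ^ k) (Ioo 0 R) := fun _ hr =>
  (continuousAt_id.rpow_const (Or.inl hr.1.ne')).continuousWithinAt

theorem continuousOn_backward_conjDeriv (hR : 0 < R) (hφ : SmoothOnStrip R t₁ t₂ φ)
    (hτ : s - τ ∈ Ioo t₁ t₂) : ContinuousOn (backward k s (Dₖ φ) τ) (Ioo 0 R) :=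
  fun _ hr => (hasDerivAt_backward_conjDeriv hR hφ hτ hr).continuousAt.continuousWithinAt

theorem continuousOn_backward_conjDeriv₂ (hR : 0 < R) (hφ : SmoothOnStrip R t₁ t₂ φ)
    (hτ : s - τ ∈ Ioo t₁ t₂) :
    ContinuousOn (backward k s (conjDeriv₂ R t₁ t₂ k φ) τ) (Ioo 0 R) := by
  have hslice : ∀ {ψ : ℝ × ℝ → ℝ}, SmoothOnStrip R t₁ t₂ ψ →
      ContinuousOn (fun r => ψ (r, s - τ)) (Ioo 0 R) := fun hψ =>
    (hψ.continuousOn_space hτ).mono Ioo_subset_Icc_self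
  have hdiv : ∀ (c : ℝ) (n : ℕ), ContinuousOn (fun r : ℝ => c / r ^ n) (Ioo 0 R) := fun c n =>
    continuousOn_const.div (continuousOn_pow n) fun r hr => pow_ne_zero n hr.1.ne'
  refine continuousOn_rpow_Ioo.mul (((hslice ((hφ.partialDeriv hR).partialDeriv hR)).add
    (.mul ?_ (hslice (hφ.partialDeriv hR)))).add ((hdiv _ 2).mul (hslice hφ)))
  simpa only [pow_one] using hdiv (2 * k) 1

theorem abs_backward_le {C : ℝ} (hk : 1 / 2 ≤ k) (hr : r ∈ Ioo 0 R)
    (hφ : |φ (r, s - τ)| ≤ C) : |backward k s φ τ r| ≤ R ^ (k - 1 / 2) * C * √r := by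
  rw [backward, abs_mul, abs_of_nonneg (Real.rpow_nonneg hr.1.le _), mul_right_comm]
  exact mul_le_mul (rpow_le_rpow_mul_sqrt hk hr.1 hr.2.le) hφ (abs_nonneg _)
    (mul_nonneg (Real.rpow_nonneg (hr.1.trans hr.2).le _) (Real.sqrt_nonneg _))

theorem abs_conjDeriv_le {C t : ℝ} (hk : 0 ≤ k) (hr : 0 < r) (hφ : |φ (r, t)| ≤ C * r)
    (hφr : |∂ᵣ φ (r, t)| ≤ C) : |Dₖ φ (r, t)| ≤ (1 + k) * C := by
  calc |Dₖ φ (r, t)| ≤ |∂ᵣ φ (r, t)| + |k / r * φ (r, t)| := abs_add_le _ _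
    _ = |∂ᵣ φ (r, t)| + k / r * |φ (r, t)| := by
      rw [abs_mul, abs_of_nonneg (div_nonneg hk hr.le)]
    _ ≤ C + k / r * (C * r) := by gcongr
    _ = (1 + k) * C := by field_simp

theorem tendsto_backward (hR : 0 < R) (hφ : SmoothOnStrip R t₁ t₂ φ) (hτ : s - τ ∈ Ioo t₁ t₂) :
    Tendsto (backward k s φ τ) (𝓝[<] R) (𝓝 (R ^ k * φ (R, s - τ))) := by
  have hslice := (hφ.continuousOn_space hτ) R (right_mem_Icc.2 hR.le)
  refine ((continuousAt_id.rpow_const (Or.inl hR.ne')).tendsto.mono_left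
    nhdsWithin_le_nhds).mul (hslice.tendsto.mono_left ?_)
  rw [← nhdsWithin_Ioo_eq_nhdsLT hR]
  exact nhdsWithin_mono _ Ioo_subset_Icc_self

theorem tendsto_backward_conjDeriv (hR : 0 < R) (hφ : SmoothOnStrip R t₁ t₂ φ)
    (hτ : s - τ ∈ Ioo t₁ t₂) :
    Tendsto (backward k s (Dₖ φ) τ) (𝓝[<] R)
      (𝓝 (R ^ k * ∂ᵣ φ (R, s - τ) + k / R * (R ^ k * φ (R, s - τ)))) := by
  refine ((tendsto_backward hR (hφ.partialDeriv hR) hτ).add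
    (((continuousAt_const.div continuousAt_id hR.ne').tendsto.mono_left nhdsWithin_le_nhds).mul
      (tendsto_backward hR hφ hτ))).congr fun r => ?_
  simp only [backward, conjDeriv, Pi.div_apply, id]
  ring

namespace IsApproxDirichletSolution

theorem sub_mem_Ioo (h : IsApproxDirichletSolution R t₁ t₂ μ β s T K g) (hτ : τ ∈ Ioo 0 T) :
    s - τ ∈ Ioo t₁ t₂ :=
  ⟨by linarith [h.lt_sub, hτ.2], by linarith [h.lt_t₂, hτ.1]⟩

theorem partialDeriv_time_eq_zero (hg : SmoothOnStrip R t₁ t₂ g) (hr : r ∈ Icc 0 R)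
    (h0 : ∀ t ∈ Ioo t₁ t₂, g (r, t) = 0) : ∀ t ∈ Ioo t₁ t₂, ∂ₜ g (r, t) = 0 := fun t ht => by
  refine (hg.hasDerivAt_time hr ht).unique ((hasDerivAt_const t (0 : ℝ)).congr_of_eventuallyEq ?_)
  filter_upwards [isOpen_Ioo.mem_nhds ht] with τ hτ using h0 τ hτ

theorem exists_abs_le (h : IsApproxDirichletSolution R t₁ t₂ μ β s T K g) :
    ∃ C, 0 < C ∧ ∀ r ∈ Icc 0 R, ∀ t ∈ Icc (s - T) s, |g (r, t)| ≤ C * r ∧ |∂ᵣ g (r, t)| ≤ C ∧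
      |(-∂ₜ g) (r, t)| ≤ C * r ∧ |∂ᵣ (-∂ₜ g) (r, t)| ≤ C := by
  have hR := h.R_pos
  have hgt : SmoothOnStrip R t₁ t₂ (-∂ₜ g) := (h.smooth.partialDeriv hR).neg
  have hgt0 : ∀ t ∈ Ioo t₁ t₂, (-∂ₜ g) (0, t) = 0 := fun t ht => by
    rw [Pi.neg_apply, partialDeriv_time_eq_zero h.smooth (left_mem_Icc.2 hR.le) h.zero_left t ht,
      neg_zero]
  obtain ⟨C₁, hC₁, h₁⟩ := h.smooth.exists_abs_le_mul hR h.zero_left h.lt_sub h.lt_t₂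
  obtain ⟨C₂, hC₂, h₂⟩ := (h.smooth.partialDeriv (e := (1, 0)) hR).exists_abs_le h.lt_sub h.lt_t₂
  obtain ⟨C₃, hC₃, h₃⟩ := hgt.exists_abs_le_mul hR hgt0 h.lt_sub h.lt_t₂
  obtain ⟨C₄, hC₄, h₄⟩ := (hgt.partialDeriv (e := (1, 0)) hR).exists_abs_le h.lt_sub h.lt_t₂
  refine ⟨C₁ + C₂ + C₃ + C₄, by positivity, fun r hr t ht =>
    ⟨(h₁ r hr t ht).trans (mul_le_mul_of_nonneg_right (by linarith) hr.1),
      (h₂ r hr t ht).trans (by linarith),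
      (h₃ r hr t ht).trans (mul_le_mul_of_nonneg_right (by linarith) hr.1),
      (h₄ r hr t ht).trans (by linarith)⟩⟩

theorem sq_le_of_abs_le {e y q κ : ℝ} (hκ : 0 < κ) (he : |e| ≤ K * (|q| + |y|)) :
    e ^ 2 ≤ 2 * K ^ 2 * (1 + 1 / κ) * (y ^ 2 + κ * q ^ 2) := by
  calc e ^ 2 ≤ (K * (|q| + |y|)) ^ 2 := sq_le_sq' (neg_le_of_abs_le he) (le_of_abs_le he)
    _ ≤ 2 * K ^ 2 * (y ^ 2 + q ^ 2) := by
      rw [mul_pow, ← sq_abs y, ← sq_abs q]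
      nlinarith [mul_nonneg (sq_nonneg K) (sq_nonneg (|q| - |y|))]
    _ ≤ 2 * K ^ 2 * (y ^ 2 + q ^ 2) + 2 * K ^ 2 * (1 / κ * y ^ 2 + κ * q ^ 2) :=
      le_add_of_nonneg_right (by positivity)
    _ = _ := by field_simp; ring

theorem backward_error_sq_le (h : IsApproxDirichletSolution R t₁ t₂ μ β s T K g)
    (hτ : τ ∈ Ioo 0 T) (hr : r ∈ Ioo 0 R) :
    (backward (μ / 2) s (-∂ₜ g) τ r + backward (μ / 2) s (conjDeriv₂ R t₁ t₂ (μ / 2) g) τ r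
        - (μ * (μ - 2) / 4 + β) / r ^ 2 * backward (μ / 2) s g τ r) ^ 2
      ≤ 2 * (K * (1 + μ / 2)) ^ 2 * (1 + 1 / (μ * (μ - 2) / 4 + β)) *
        (backward (μ / 2) s (conjDeriv R t₁ t₂ (μ / 2) g) τ r ^ 2
          + (μ * (μ - 2) / 4 + β) * (backward (μ / 2) s g τ r / r) ^ 2) := by
  have hr0 := hr.1
  have hμ : 0 ≤ μ / 2 := by linarith [h.one_le]
  have hK := h.K_nonneg
  have herror := h.abs_error_le r hr (s - τ) ⟨by linarith [hτ.2], by linarith [hτ.1]⟩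
  simp only [backward, conjDeriv, conjDeriv₂, Pi.neg_apply]
  set G := g (r, s - τ)
  set Gr := ∂ᵣ g (r, s - τ)
  set Grr := ∂ᵣ (∂ᵣ g) (r, s - τ)
  set Gt := ∂ₜ g (r, s - τ)
  have hGr : |Gr| ≤ |Gr + μ / 2 / r * G| + μ / 2 * (|G| / r) := by
    calc |Gr| = |Gr + μ / 2 / r * G - μ / 2 / r * G| := by rw [add_sub_cancel_right]
      _ ≤ |Gr + μ / 2 / r * G| + |μ / 2 / r * G| := abs_sub _ _
      _ = _ := by rw [abs_mul, abs_of_nonneg (div_nonneg hμ hr0.le)]; ring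
  refine sq_le_of_abs_le h.coercive ?_
  have hconj : r ^ (μ / 2) * -Gt + r ^ (μ / 2) * (Grr + 2 * (μ / 2) / r * Gr
      + ((μ / 2) ^ 2 - μ / 2) / r ^ 2 * G) - (μ * (μ - 2) / 4 + β) / r ^ 2 * (r ^ (μ / 2) * G)
      = -(r ^ (μ / 2) * (Gt - Grr - μ / r * Gr + β / r ^ 2 * G)) := by
    field_simp
    ring
  have hρ : 0 ≤ r ^ (μ / 2) := Real.rpow_nonneg hr0.le _
  rw [hconj, abs_neg, abs_mul, abs_div, abs_mul, abs_mul, abs_of_nonneg hρ, abs_of_pos hr0]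
  calc r ^ (μ / 2) * |Gt - Grr - μ / r * Gr + β / r ^ 2 * G|
      ≤ r ^ (μ / 2) * (K * (|G| / r + (|Gr + μ / 2 / r * G| + μ / 2 * (|G| / r)))) := by
        gcongr
        exact herror.trans (by gcongr)
    _ ≤ r ^ (μ / 2) * (K * ((1 + μ / 2) * (|G| / r + |Gr + μ / 2 / r * G|))) := by
        gcongr
        nlinarith [mul_nonneg hμ (abs_nonneg (Gr + μ / 2 / r * G))]
    _ = _ := by ring

theorem exists_abs_backward_le (h : IsApproxDirichletSolution R t₁ t₂ μ β s T K g) :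
    ∃ X, 0 < X ∧ ∀ τ ∈ Ioo 0 T, ∀ r ∈ Ioo 0 R,
      |backward (μ / 2) s g τ r| ≤ X * √r * r ∧
      |backward (μ / 2) s (conjDeriv R t₁ t₂ (μ / 2) g) τ r| ≤ X * √r ∧
      |backward (μ / 2) s (-∂ₜ g) τ r| ≤ X * √r * r ∧
      |backward (μ / 2) s (conjDeriv R t₁ t₂ (μ / 2) (-∂ₜ g)) τ r| ≤ X * √r := by
  have hR := h.R_pos
  have hk : 1 / 2 ≤ μ / 2 := by linarith [h.one_le]
  obtain ⟨C, hC, hbound⟩ := h.exists_abs_le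
  have abs_le : ∀ {φ : ℝ × ℝ → ℝ} {τ r : ℝ}, r ∈ Ioo 0 R → |φ (r, s - τ)| ≤ C * r →
      |backward (μ / 2) s φ τ r| ≤ R ^ (μ / 2 - 1 / 2) * ((1 + μ / 2) * C) * √r * r :=
    fun {φ τ r} hr hφ => by
    have hr0 := hr.1
    calc |backward (μ / 2) s φ τ r| ≤ R ^ (μ / 2 - 1 / 2) * (1 * C * r) * √r :=
          abs_backward_le hk hr (by rwa [one_mul])
      _ ≤ R ^ (μ / 2 - 1 / 2) * ((1 + μ / 2) * C * r) * √r := by gcongr; linarith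
      _ = _ := by ring
  refine ⟨R ^ (μ / 2 - 1 / 2) * ((1 + μ / 2) * C),
    mul_pos (Real.rpow_pos_of_pos hR _) (mul_pos (by linarith) hC), fun τ hτ r hr => ?_⟩
  obtain ⟨hg, hgr, hgt, hgtr⟩ :=
    hbound r (Ioo_subset_Icc_self hr) (s - τ) ⟨by linarith [hτ.2], by linarith [hτ.1]⟩
  exact ⟨abs_le hr hg, abs_backward_le hk hr (abs_conjDeriv_le (by linarith) hr.1 hg hgr),
    abs_le hr hgt, abs_backward_le hk hr (abs_conjDeriv_le (by linarith) hr.1 hgt hgtr)⟩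

theorem exists_backwardFlow (h : IsApproxDirichletSolution R t₁ t₂ μ β s T K g) {r₀ : ℝ}
    (hr₀ : r₀ ∈ Icc 0 R) :
    ∃ D : BackwardFlow, D.R = R ∧ D.T = T ∧ D.r₀ = r₀ ∧ D.u = backward (μ / 2) s g := by
  have hR := h.R_pos
  have hκ := h.coercive
  have hg := h.smooth
  have hgt : SmoothOnStrip R t₁ t₂ (-∂ₜ g) := (hg.partialDeriv hR).neg
  obtain ⟨X, hX, hbound⟩ := h.exists_abs_backward_le
  set E := 2 * (K * (1 + μ / 2)) ^ 2 * (1 + 1 / (μ * (μ - 2) / 4 + β))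
  have hE : 0 ≤ E := by positivity
  have hsqrt : ∀ r, X * √r ≤ (X + E) * √r := fun r =>
    mul_le_mul_of_nonneg_right (le_add_of_nonneg_right hE) (Real.sqrt_nonneg r)
  have hsqrt' : ∀ r ∈ Ioo 0 R, X * √r * r ≤ (X + E) * √r * r := fun r hr =>
    mul_le_mul_of_nonneg_right (hsqrt r) hr.1.le
  refine ⟨{
    R := R, T := T, κ := μ * (μ - 2) / 4 + β, r₀ := r₀, C := X + E
    u := backward (μ / 2) s g
    ur := backward (μ / 2) s (conjDeriv R t₁ t₂ (μ / 2) g)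
    urr := backward (μ / 2) s (conjDeriv₂ R t₁ t₂ (μ / 2) g)
    ut := backward (μ / 2) s (-∂ₜ g)
    urt := backward (μ / 2) s (conjDeriv R t₁ t₂ (μ / 2) (-∂ₜ g))
    R_pos := hR
    T_pos := h.T_pos
    κ_pos := hκ
    C_pos := by positivity
    r₀_mem := hr₀
    hasDerivAt_u := fun τ hτ r hr => hasDerivAt_backward hg (h.sub_mem_Ioo hτ) hr
    hasDerivAt_ur := fun τ hτ r hr => hasDerivAt_backward_conjDeriv hR hg (h.sub_mem_Ioo hτ) hr
    hasDerivAt_ut := fun τ hτ r hr => hasDerivAt_backward hgt (h.sub_mem_Ioo hτ) hr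
    hasDerivAt_u_time := fun τ hτ r hr => hasDerivAt_backward_time hg (h.sub_mem_Ioo hτ) hr
    hasDerivAt_ur_time := fun τ hτ r hr =>
      hasDerivAt_backward_conjDeriv_time hR hg (h.sub_mem_Ioo hτ) hr
    continuousOn_urr := fun τ hτ => continuousOn_backward_conjDeriv₂ hR hg (h.sub_mem_Ioo hτ)
    continuousOn_urt := fun τ hτ => continuousOn_backward_conjDeriv hR hgt (h.sub_mem_Ioo hτ)
    abs_u_le := fun τ hτ r hr => (hbound τ hτ r hr).1.trans (hsqrt' r hr)
    abs_ut_le := fun τ hτ r hr => (hbound τ hτ r hr).2.2.1.trans (hsqrt' r hr)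
    abs_ur_le := fun τ hτ r hr => (hbound τ hτ r hr).2.1.trans (hsqrt r)
    abs_urt_le := fun τ hτ r hr => (hbound τ hτ r hr).2.2.2.trans (hsqrt r)
    error_sq_le := fun τ hτ r hr => (h.backward_error_sq_le hτ hr).trans
      (mul_le_mul_of_nonneg_right (le_add_of_nonneg_left hX.le) (by positivity))
    tendsto_u_R := fun τ hτ => by
      simpa [h.zero_right _ (h.sub_mem_Ioo hτ)] using tendsto_backward hR hg (h.sub_mem_Ioo hτ)
    tendsto_ut_R := fun τ hτ => by
      simpa [partialDeriv_time_eq_zero hg (right_mem_Icc.2 hR.le) h.zero_right _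
        (h.sub_mem_Ioo hτ)] using tendsto_backward hR hgt (h.sub_mem_Ioo hτ)
    tendsto_ur_R := fun τ hτ => ⟨_, tendsto_backward_conjDeriv hR hg (h.sub_mem_Ioo hτ)⟩ },
    rfl, rfl, rfl, rfl⟩

theorem exists_slice_eq_zero (h : IsApproxDirichletSolution R t₁ t₂ μ β s T K g) {r₀ : ℝ}
    (hr₀ : r₀ ∈ Icc 0 R)
    (hflat : ∀ n : ℕ, ∃ c, 0 ≤ c ∧ ∀ r ∈ Icc 0 R, ∀ t ∈ Icc (s - T) s,
      g (r, t) ^ 2 ≤ c * ((r - r₀) ^ 2 + (s - t)) ^ n) :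
    ∃ t ∈ Ioo (s - T) s, ∀ r ∈ Ioo 0 R, g (r, t) = 0 := by
  have hμ : 0 ≤ μ / 2 := by linarith [h.one_le]
  obtain ⟨D, rfl, rfl, rfl, hu⟩ := h.exists_backwardFlow hr₀
  obtain ⟨τ, hτ, hzero⟩ := D.exists_slice_eq_zero fun n => by
    obtain ⟨c, hc, hbound⟩ := hflat n
    refine ⟨(D.R ^ (μ / 2)) ^ 2 * c, by positivity, fun τ hτ r hr => ?_⟩
    have hρ : 0 ≤ r ^ (μ / 2) := Real.rpow_nonneg hr.1.le _
    have hg := hbound r (Ioo_subset_Icc_self hr) (s - τ) ⟨by linarith [hτ.2], by linarith [hτ.1]⟩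
    rw [sub_sub_cancel] at hg
    rw [hu, backward, mul_pow, mul_assoc]
    gcongr
    exacts [hr.1.le, hr.2.le]
  refine ⟨s - τ, ⟨by linarith [hτ.2], by linarith [hτ.1]⟩, fun r hr => ?_⟩
  have hz := hzero r hr
  rw [hu] at hz
  exact (mul_eq_zero.1 hz).resolve_left (Real.rpow_pos_of_pos hr.1 _).ne'

end IsApproxDirichletSolution

end RadialFlow

section Solution

variable {R t₁ t₂ μ β s t T a b r₀ : ℝ} {B V φ : ℝ × ℝ → ℝ} {e : ℝ × ℝ}

local notation "Ω" => strip R t₁ t₂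
local notation "∂ᵣ" => partialDeriv (strip R t₁ t₂) (1, 0)
local notation "∂ₜ" => partialDeriv (strip R t₁ t₂) (0, 1)

variable (R t₁ t₂) in
/-- `V` solves `V_t = V_rr + μ r⁻¹ V_r - B r⁻² V`, smoothly up to the boundary of the strip, where
`B = β` on the axis. The equation is multiplied by `r²`, so that it makes sense on the axis too. -/
structure IsRadialSolution (μ β : ℝ) (B V : ℝ × ℝ → ℝ) : Prop where
  R_pos : 0 < R
  one_le : 1 ≤ μ
  β_pos : 0 < β
  coercive : 0 < μ * (μ - 2) / 4 + β
  smooth_potential : SmoothOnStrip R t₁ t₂ B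
  smooth : SmoothOnStrip R t₁ t₂ V
  potential_left : ∀ t ∈ Ioo t₁ t₂, B (0, t) = β
  pde : ∀ q ∈ Ω, q.1 ^ 2 * ∂ₜ V q = q.1 ^ 2 * ∂ᵣ (∂ᵣ V) q + μ * q.1 * ∂ᵣ V q - B q * V q

theorem IsRadialSolution.zero_left (h : IsRadialSolution R t₁ t₂ μ β B V) (ht : t ∈ Ioo t₁ t₂) :
    V (0, t) = 0 := by
  simpa [h.potential_left t ht, h.β_pos.ne'] using h.pde (0, t) ⟨left_mem_Icc.2 h.R_pos.le, ht⟩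

theorem IsRadialSolution.partialDeriv_time_eq (h : IsRadialSolution R t₁ t₂ μ β B V) {r : ℝ}
    (hr : r ∈ Icc 0 R) (hr0 : 0 < r) (ht : t ∈ Ioo t₁ t₂) :
    ∂ₜ V (r, t) = ∂ᵣ (∂ᵣ V) (r, t) + μ / r * ∂ᵣ V (r, t) - B (r, t) / r ^ 2 * V (r, t) := by
  have hpde := h.pde (r, t) ⟨hr, ht⟩
  field_simp
  linarith

theorem IsRadialSolution.exists_abs_potential_sub_le (h : IsRadialSolution R t₁ t₂ μ β B V)
    (ha : t₁ < a) (hb : b < t₂) :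
    ∃ C, 0 < C ∧ ∀ r ∈ Icc 0 R, ∀ t ∈ Icc a b, |B (r, t) - β| ≤ C * r :=
  SmoothOnStrip.exists_abs_le_mul (g := fun p => B p - β) h.R_pos
    (h.smooth_potential.sub contDiffOn_const)
    (fun t ht => sub_eq_zero.2 (h.potential_left t ht)) ha hb

theorem IsRadialSolution.exists_sq_le_parabolic_pow (h : IsRadialSolution R t₁ t₂ μ β B V)
    (hr₀ : r₀ ∈ Icc 0 R) (hT : 0 ≤ T) (hsT : t₁ < s - T) (hs : s < t₂)
    (hacc : AccPt r₀ (𝓟 (zeroSet R V s))) (n : ℕ) :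
    ∃ C, 0 ≤ C ∧ ∀ r ∈ Icc 0 R, ∀ t ∈ Icc (s - T) s,
      V (r, t) ^ 2 ≤ C * ((r - r₀) ^ 2 + (s - t)) ^ n := by
  have hs' : s ∈ Ioo t₁ t₂ := ⟨by linarith, hs⟩
  exact IsFlatAt.exists_sq_le_parabolic_pow h.R_pos hr₀ hsT hT hs n h.smooth
    (isFlatAt_of_isRadiallyFlatAt h.R_pos ⟨hr₀, hs'⟩ h.smooth_potential h.smooth h.pde
      (isRadiallyFlatAt_of_accPt_zeroSet h.R_pos h.smooth hs' hacc))

theorem abs_mul_div_sq_le {x y C r : ℝ} (hr : 0 < r) (hx : |x| ≤ C * r) :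
    |x * y / r ^ 2| ≤ C * (|y| / r) :=
  calc |x * y / r ^ 2| = |x| * |y| / r ^ 2 := by rw [abs_div, abs_mul, abs_sq]
    _ ≤ C * r * |y| / r ^ 2 := by gcongr
    _ = C * (|y| / r) := by field_simp

theorem IsRadialSolution.exists_isApproxDirichletSolution
    (h : IsRadialSolution R t₁ t₂ μ β B V) (hVR : ∀ t ∈ Ioo t₁ t₂, V (R, t) = 0) (hT : 0 < T)
    (hsT : t₁ < s - T) (hs : s < t₂) :
    ∃ K, IsApproxDirichletSolution R t₁ t₂ μ β s T K V := by
  obtain ⟨C, hC, hBC⟩ := h.exists_abs_potential_sub_le hsT hs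
  refine ⟨C, h.R_pos, hT, hC.le, hsT, hs, h.one_le, h.coercive, h.smooth,
    fun t ht => h.zero_left ht, hVR, fun r hr t ht => ?_⟩
  have hr' := Ioo_subset_Icc_self hr
  have ht' := Ioo_subset_Icc_self ht
  have herror : ∂ₜ V (r, t) - ∂ᵣ (∂ᵣ V) (r, t) - μ / r * ∂ᵣ V (r, t) + β / r ^ 2 * V (r, t)
      = -((B (r, t) - β) * V (r, t) / r ^ 2) := by
    rw [h.partialDeriv_time_eq hr' hr.1 (Icc_subset_Ioo_of_lt hsT hs ht')]
    ring
  rw [herror, abs_neg]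
  calc |(B (r, t) - β) * V (r, t) / r ^ 2| ≤ C * (|V (r, t)| / r) :=
        abs_mul_div_sq_le hr.1 (hBC r hr' t ht')
    _ ≤ C * (|V (r, t)| / r + |∂ᵣ V (r, t)|) := by
        gcongr
        exact le_add_of_nonneg_right (abs_nonneg _)

theorem IsRadialSolution.exists_slice_eq_zero_of_accPt (h : IsRadialSolution R t₁ t₂ μ β B V)
    (hVR : ∀ t ∈ Ioo t₁ t₂, V (R, t) = 0) (hT : 0 < T) (hsT : t₁ < s - T) (hs : s < t₂)
    (hr₀ : r₀ ∈ Icc 0 R) (hacc : AccPt r₀ (𝓟 (zeroSet R V s))) :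
    ∃ t ∈ Ioo (s - T) s, ∀ r ∈ Icc 0 R, V (r, t) = 0 := by
  obtain ⟨K, hV⟩ := h.exists_isApproxDirichletSolution hVR hT hsT hs
  obtain ⟨t, ht, hslice⟩ := hV.exists_slice_eq_zero hr₀
    (h.exists_sq_le_parabolic_pow hr₀ hT.le hsT hs hacc)
  have ht' := Icc_subset_Ioo_of_lt hsT hs (Ioo_subset_Icc_self ht)
  refine ⟨t, ht, fun r hr => ?_⟩
  rcases hr.1.eq_or_lt with rfl | hr0
  · exact h.zero_left ht'
  rcases hr.2.eq_or_lt with rfl | hrR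
  · exact hVR t ht'
  · exact hslice r ⟨hr0, hrR⟩

theorem SmoothOnStrip.exists_le_abs_near_right (hR : 0 < R) (hφ : SmoothOnStrip R t₁ t₂ φ)
    (hφR : ∀ t ∈ Ioo t₁ t₂, φ (R, t) ≠ 0) (ha : t₁ < a) (hb : b < t₂) :
    ∃ c > 0, ∃ δ > 0, ∀ r ∈ Icc 0 R, R - r ≤ δ → ∀ t ∈ Icc a b, c ≤ |φ (r, t)| := by
  obtain ⟨M, hM, hφM⟩ := (hφ.partialDeriv (e := (1, 0)) hR).exists_abs_le ha hb
  have hRmem : R ∈ Icc 0 R := right_mem_Icc.2 hR.le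
  have hcont : ContinuousOn (fun t => |φ (R, t)|) (Icc a b) := fun t ht =>
    (hφ.hasDerivAt_time hRmem
      (Icc_subset_Ioo_of_lt ha hb ht)).continuousAt.abs.continuousWithinAt
  obtain ⟨c, hc, hφc⟩ := isCompact_Icc.exists_forall_le' hcont (a := 0)
    fun t ht => abs_pos.2 (hφR t (Icc_subset_Ioo_of_lt ha hb ht))
  refine ⟨c / 2, half_pos hc, c / (2 * M), by positivity, fun r hr hrδ t ht => ?_⟩
  have hlip := hφ.abs_sub_le (Icc_subset_Ioo_of_lt ha hb ht) (fun x hx => hφM x hx t ht) hr hRmem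
  have hsmall : M * |R - r| ≤ c / 2 := by
    rw [abs_of_nonneg (sub_nonneg.2 hr.2)]
    calc M * (R - r) ≤ M * (c / (2 * M)) := by gcongr
      _ = c / 2 := by field_simp
  linarith [hφc t ht, abs_sub_abs_le_abs_sub (φ (R, t)) (φ (r, t))]

/-- The product `(R - r) V`, which vanishes at `r = R` whether or not `V` does. -/
def rightCutoff (R : ℝ) (V : ℝ × ℝ → ℝ) : ℝ × ℝ → ℝ := (fun p => R - p.1) * V

theorem smoothOnStrip_sub_fst : SmoothOnStrip R t₁ t₂ (fun p => R - p.1) :=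
  contDiffOn_const.sub contDiffOn_fst

theorem SmoothOnStrip.rightCutoff (hV : SmoothOnStrip R t₁ t₂ V) :
    SmoothOnStrip R t₁ t₂ (rightCutoff R V) :=
  smoothOnStrip_sub_fst.mul hV

theorem partialDeriv_rightCutoff (hR : 0 < R) (hV : SmoothOnStrip R t₁ t₂ V) :
    EqOn (partialDeriv Ω e (rightCutoff R V))
      ((fun _ => -e.1) * V + rightCutoff R (partialDeriv Ω e V)) Ω := fun p hp => by
  have hfactor : partialDeriv Ω e (fun p => R - p.1) p = -e.1 := by
    simp only [partialDeriv]
    rw [fderivWithin_const_sub (uniqueDiffOn_strip hR p hp),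
      fderivWithin_fst (uniqueDiffOn_strip hR p hp)]
    rfl
  rw [rightCutoff, partialDeriv_mul hR smoothOnStrip_sub_fst hV hp]
  simp only [Pi.add_apply, Pi.mul_apply, rightCutoff, hfactor]

theorem partialDeriv_space_rightCutoff (hR : 0 < R) (hV : SmoothOnStrip R t₁ t₂ V) :
    EqOn (∂ᵣ (rightCutoff R V)) (-V + rightCutoff R (∂ᵣ V)) Ω := fun p hp => by
  simp [partialDeriv_rightCutoff hR hV hp]

theorem partialDeriv_space_space_rightCutoff (hR : 0 < R) (hV : SmoothOnStrip R t₁ t₂ V) :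
    EqOn (∂ᵣ (∂ᵣ (rightCutoff R V))) (-2 * ∂ᵣ V + rightCutoff R (∂ᵣ (∂ᵣ V))) Ω := fun p hp => by
  have hVr := hV.partialDeriv (e := (1, 0)) hR
  rw [partialDeriv_congr (partialDeriv_space_rightCutoff hR hV) hp,
    partialDeriv_add (g := -V) hR hV.neg hVr.rightCutoff hp, Pi.add_apply, partialDeriv_neg hR hp,
    partialDeriv_space_rightCutoff hR hVr hp]
  simp only [Pi.add_apply, Pi.neg_apply, Pi.mul_apply, Pi.ofNat_apply]
  ring

theorem IsRadialSolution.rightCutoff_error_eq (h : IsRadialSolution R t₁ t₂ μ β B V) {r : ℝ}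
    (hr : r ∈ Ioo 0 R) (ht : t ∈ Ioo t₁ t₂) :
    ∂ₜ (rightCutoff R V) (r, t) - ∂ᵣ (∂ᵣ (rightCutoff R V)) (r, t)
        - μ / r * ∂ᵣ (rightCutoff R V) (r, t) + β / r ^ 2 * rightCutoff R V (r, t)
      = -((B (r, t) - β) * rightCutoff R V (r, t) / r ^ 2)
        + (2 * ∂ᵣ V (r, t) + μ * (V (r, t) / r)) := by
  have hp : (r, t) ∈ Ω := ⟨Ioo_subset_Icc_self hr, ht⟩
  rw [partialDeriv_rightCutoff h.R_pos h.smooth hp,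
    partialDeriv_space_space_rightCutoff h.R_pos h.smooth hp,
    partialDeriv_space_rightCutoff h.R_pos h.smooth hp]
  simp only [rightCutoff, Pi.add_apply, Pi.mul_apply, Pi.neg_apply, Pi.ofNat_apply,
    h.partialDeriv_time_eq hp.1 hr.1 ht]
  ring

theorem abs_le_rightCutoff_of_le_sub (hR : 0 < R) (hV : SmoothOnStrip R t₁ t₂ V) (hμ : 0 ≤ μ)
    {r δ : ℝ} (hδ : 0 < δ) (hr : r ∈ Ioo 0 R) (hrδ : δ ≤ R - r) (ht : t ∈ Ioo t₁ t₂) :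
    |2 * ∂ᵣ V (r, t) + μ * (V (r, t) / r)| ≤ (2 / δ + (2 * R / δ ^ 2 + μ / δ))
      * (|rightCutoff R V (r, t)| / r + |∂ᵣ (rightCutoff R V) (r, t)|) := by
  set G := rightCutoff R V (r, t) with hG
  set Gr := ∂ᵣ (rightCutoff R V) (r, t) with hGr
  have hr0 := hr.1
  have hx : 0 < R - r := hδ.trans_le hrδ
  have hV_eq : V (r, t) = G / (R - r) := by
    rw [hG, rightCutoff, Pi.mul_apply]
    field_simp
  have hVr_eq : ∂ᵣ V (r, t) = Gr / (R - r) + G / (R - r) ^ 2 := by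
    rw [hGr, partialDeriv_space_rightCutoff hR hV ⟨Ioo_subset_Icc_self hr, ht⟩, hG]
    simp only [rightCutoff, Pi.add_apply, Pi.neg_apply, Pi.mul_apply]
    field_simp
    ring
  have hG_le : |G| ≤ R * (|G| / r) := by
    rw [mul_div_assoc', mul_comm, mul_div_assoc]
    exact le_mul_of_one_le_right (abs_nonneg _) ((one_le_div hr0).2 hr.2.le)
  calc |2 * ∂ᵣ V (r, t) + μ * (V (r, t) / r)|
      = |2 * (Gr / (R - r)) + 2 * (G / (R - r) ^ 2) + μ * (G / (R - r) / r)| := by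
        rw [hV_eq, hVr_eq]
        congr 1
        ring
    _ ≤ 2 * (|Gr| / (R - r)) + 2 * (|G| / (R - r) ^ 2) + μ * (|G| / (R - r) / r) := by
        refine (abs_add_three _ _ _).trans_eq ?_
        simp only [abs_mul, abs_div, abs_pow, abs_two, abs_of_pos hx, abs_of_pos hr0,
          abs_of_nonneg hμ]
    _ ≤ 2 * (|Gr| / δ) + 2 * (R * (|G| / r) / δ ^ 2) + μ * (|G| / δ / r) := by gcongr
    _ = 2 / δ * |Gr| + (2 * R / δ ^ 2 + μ / δ) * (|G| / r) := by ring
    _ ≤ (2 / δ + (2 * R / δ ^ 2 + μ / δ)) * (|G| / r + |Gr|) := by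
        have hcross₁ : 0 ≤ 2 / δ * (|G| / r) := by positivity
        have hcross₂ : 0 ≤ (2 * R / δ ^ 2 + μ / δ) * |Gr| := by positivity
        linarith

/-- Near `r = R` the derivative of `(R - r) V` is close to `-V ≠ 0`, so there it dominates every
bounded quantity; away from `r = R` the factor `R - r` can be divided out. -/
theorem IsRadialSolution.exists_abs_le_rightCutoff (h : IsRadialSolution R t₁ t₂ μ β B V)
    (hVR : ∀ t ∈ Ioo t₁ t₂, V (R, t) ≠ 0) (ha : t₁ < a) (hb : b < t₂) :
    ∃ K, 0 ≤ K ∧ ∀ r ∈ Ioo 0 R, ∀ t ∈ Icc a b, |2 * ∂ᵣ V (r, t) + μ * (V (r, t) / r)|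
      ≤ K * (|rightCutoff R V (r, t)| / r + |∂ᵣ (rightCutoff R V) (r, t)|) := by
  have hR := h.R_pos
  have hμ : 0 ≤ μ := zero_le_one.trans h.one_le
  obtain ⟨M, -, hVrM⟩ := (h.smooth.partialDeriv (e := (1, 0)) hR).exists_abs_le ha hb
  obtain ⟨N, -, hVN⟩ := h.smooth.exists_abs_le_mul hR (fun t ht => h.zero_left ht) ha hb
  have hderiv_right : ∀ t ∈ Ioo t₁ t₂, ∂ᵣ (rightCutoff R V) (R, t) ≠ 0 := fun t ht => by
    rw [partialDeriv_space_rightCutoff hR h.smooth ⟨right_mem_Icc.2 hR.le, ht⟩]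
    simpa [rightCutoff] using hVR t ht
  obtain ⟨c, hc, δ, hδ, hlower⟩ := SmoothOnStrip.exists_le_abs_near_right hR
    (h.smooth.rightCutoff.partialDeriv (e := (1, 0)) hR) hderiv_right ha hb
  set K₁ := 2 / δ + (2 * R / δ ^ 2 + μ / δ)
  set K₂ := (2 * M + μ * N) / c
  have hK₁ : 0 ≤ K₁ := by positivity
  refine ⟨max K₁ K₂, le_max_of_le_left hK₁, fun r hr t ht => ?_⟩
  have hr0 := hr.1
  have hr' := Ioo_subset_Icc_self hr
  rcases le_or_gt δ (R - r) with hfar | hnear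
  · refine (abs_le_rightCutoff_of_le_sub hR h.smooth hμ hδ hr hfar
      (Icc_subset_Ioo_of_lt ha hb ht)).trans ?_
    gcongr
    exact le_max_left _ _
  · calc |2 * ∂ᵣ V (r, t) + μ * (V (r, t) / r)|
        ≤ 2 * |∂ᵣ V (r, t)| + μ * (|V (r, t)| / r) := by
          refine (abs_add_le _ _).trans_eq ?_
          rw [abs_mul, abs_mul, abs_div, abs_two, abs_of_nonneg hμ, abs_of_pos hr0]
      _ ≤ 2 * M + μ * N := by
          gcongr
          · exact hVrM r hr' t ht
          · exact (div_le_iff₀ hr0).2 (hVN r hr' t ht)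
      _ = K₂ * c := (div_mul_cancel₀ _ hc.ne').symm
      _ ≤ max K₁ K₂ * (|rightCutoff R V (r, t)| / r + |∂ᵣ (rightCutoff R V) (r, t)|) := by
          gcongr
          · exact le_max_right _ _
          · exact (hlower r hr' hnear.le t ht).trans (le_add_of_nonneg_left (by positivity))

theorem IsRadialSolution.exists_isApproxDirichletSolution_rightCutoff
    (h : IsRadialSolution R t₁ t₂ μ β B V) (hVR : ∀ t ∈ Ioo t₁ t₂, V (R, t) ≠ 0) (hT : 0 < T)
    (hsT : t₁ < s - T) (hs : s < t₂) :
    ∃ K, IsApproxDirichletSolution R t₁ t₂ μ β s T K (rightCutoff R V) := by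
  obtain ⟨C, hC, hBC⟩ := h.exists_abs_potential_sub_le hsT hs
  obtain ⟨K, hK, hbound⟩ := h.exists_abs_le_rightCutoff hVR hsT hs
  refine ⟨C + K, h.R_pos, hT, by positivity, hsT, hs, h.one_le, h.coercive,
    h.smooth.rightCutoff, fun t ht => by simp [rightCutoff, h.zero_left ht],
    fun t _ => by simp [rightCutoff], fun r hr t ht => ?_⟩
  have ht' := Ioo_subset_Icc_self ht
  set G := rightCutoff R V (r, t)
  set Gr := ∂ᵣ (rightCutoff R V) (r, t)
  rw [h.rightCutoff_error_eq hr (Icc_subset_Ioo_of_lt hsT hs ht')]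
  calc |-((B (r, t) - β) * G / r ^ 2) + (2 * ∂ᵣ V (r, t) + μ * (V (r, t) / r))|
      ≤ |(B (r, t) - β) * G / r ^ 2| + |2 * ∂ᵣ V (r, t) + μ * (V (r, t) / r)| :=
        (abs_add_le _ _).trans_eq (by rw [abs_neg])
    _ ≤ C * (|G| / r) + K * (|G| / r + |Gr|) :=
        add_le_add (abs_mul_div_sq_le hr.1 (hBC r (Ioo_subset_Icc_self hr) t ht'))
          (hbound r hr t ht')
    _ ≤ C * (|G| / r + |Gr|) + K * (|G| / r + |Gr|) := by
        gcongr
        exact le_add_of_nonneg_right (abs_nonneg _)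
    _ = (C + K) * (|G| / r + |Gr|) := by ring

theorem IsRadialSolution.not_accPt_zeroSet_of_ne_zero_right
    (h : IsRadialSolution R t₁ t₂ μ β B V) (hVR : ∀ t ∈ Ioo t₁ t₂, V (R, t) ≠ 0)
    (hs : s ∈ Ioo t₁ t₂) (hr₀ : r₀ ∈ Icc 0 R) : ¬ AccPt r₀ (𝓟 (zeroSet R V s)) := fun hacc => by
  obtain ⟨a, ha, has⟩ := exists_between hs.1
  have hT : 0 < s - a := sub_pos.2 has
  have hsT : t₁ < s - (s - a) := by simpa using ha
  obtain ⟨K, hG⟩ := h.exists_isApproxDirichletSolution_rightCutoff hVR hT hsT hs.2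
  have hflat : ∀ n, ∃ c, 0 ≤ c ∧ ∀ r ∈ Icc 0 R, ∀ t ∈ Icc (s - (s - a)) s,
      rightCutoff R V (r, t) ^ 2 ≤ c * ((r - r₀) ^ 2 + (s - t)) ^ n := fun n => by
    obtain ⟨c, hc, hbound⟩ := h.exists_sq_le_parabolic_pow hr₀ hT.le hsT hs.2 hacc n
    refine ⟨R ^ 2 * c, by positivity, fun r hr t ht => ?_⟩
    rw [rightCutoff, Pi.mul_apply, mul_pow, mul_assoc]
    have hfactor : (R - r) ^ 2 ≤ R ^ 2 :=
      pow_le_pow_left₀ (sub_nonneg.2 hr.2) (sub_le_self R hr.1) 2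
    exact mul_le_mul hfactor (hbound r hr t ht) (sq_nonneg _) (sq_nonneg _)
  obtain ⟨t, ht, hslice⟩ := hG.exists_slice_eq_zero hr₀ hflat
  have ht' := Icc_subset_Ioo_of_lt hsT hs.2 (Ioo_subset_Icc_self ht)
  have hinterior : EqOn (fun r => V (r, t)) 0 (Ioo 0 R) := fun r hr =>
    (mul_eq_zero.1 (hslice r hr)).resolve_left (sub_pos.2 hr.2).ne'
  have hclosed : EqOn (fun r => V (r, t)) 0 (Icc 0 R) :=
    hinterior.of_subset_closure (h.smooth.continuousOn_space ht') continuousOn_const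
      Ioo_subset_Icc_self (closure_Ioo h.R_pos.ne).ge
  exact hVR t ht' (hclosed (right_mem_Icc.2 h.R_pos.le))

end Solution

section MaximumPrinciple

variable {E : Set (ℝ × ℝ)} {w : ℝ × ℝ → ℝ} {R r t α γ a b : ℝ}

/-- `(r, t)` is off the parabolic boundary of `E`: it stays in `E` under small displacements in
space and under small displacements backwards in time. -/
def IsParabolicInterior (E : Set (ℝ × ℝ)) (r t : ℝ) : Prop :=
  (∀ᶠ x in 𝓝 r, (x, t) ∈ E) ∧ ∀ᶠ τ in 𝓝[<] t, (r, τ) ∈ E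

/-- The parabolic boundary of the rectangle `[α, γ] × [a, b]`: its bottom and its lateral sides. -/
def parabolicBoundary (α γ a b : ℝ) : Set (ℝ × ℝ) := Icc α γ ×ˢ {a} ∪ {α, γ} ×ˢ Icc a b

theorem IsParabolicInterior.fst_mem_Ioo (h : IsParabolicInterior E r t)
    (hE : E ⊆ Icc 0 R ×ˢ Icc a b) : r ∈ Ioo 0 R := by
  rw [← interior_Icc, mem_interior_iff_mem_nhds]
  exact h.1.mono fun x hx => (hE hx).1

theorem isParabolicInterior_of_notMem_parabolicBoundary (hr : r ∈ Icc α γ) (ht : t ∈ Icc a b)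
    (hn : (r, t) ∉ parabolicBoundary α γ a b) :
    IsParabolicInterior (Icc α γ ×ˢ Icc a b) r t := by
  simp only [parabolicBoundary, mem_union, mem_prod, mem_insert_iff, mem_singleton_iff, not_or,
    not_and] at hn
  have hta : a < t := ht.1.lt_of_ne' (hn.1 hr)
  have hαr : α < r := hr.1.lt_of_ne' fun h => hn.2 (Or.inl h) ht
  have hrγ : r < γ := hr.2.lt_of_ne fun h => hn.2 (Or.inr h) ht
  constructor
  · filter_upwards [Icc_mem_nhds hαr hrγ] with x hx using ⟨hx, ht⟩
  · filter_upwards [Ioo_mem_nhdsLT hta] with τ hτ using ⟨hr, hτ.1.le, hτ.2.le.trans ht.2⟩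

theorem parabolicBoundary_subset (hαγ : α ≤ γ) (hab : a ≤ b) :
    parabolicBoundary α γ a b ⊆ Icc α γ ×ˢ Icc a b :=
  union_subset (prod_mono_right (singleton_subset_iff.2 (left_mem_Icc.2 hab)))
    (prod_mono_left (pair_subset (left_mem_Icc.2 hαγ) (right_mem_Icc.2 hαγ)))

theorem isCompact_parabolicBoundary : IsCompact (parabolicBoundary α γ a b) :=
  (isCompact_Icc.prod isCompact_singleton).union ((toFinite {α, γ}).isCompact.prod isCompact_Icc)

theorem isPreconnected_parabolicBoundary (hαγ : α ≤ γ) (hab : a ≤ b) :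
    IsPreconnected (parabolicBoundary α γ a b) := by
  have hbottom : IsPreconnected (Icc α γ ×ˢ {a}) := isPreconnected_Icc.prod isPreconnected_singleton
  have hside : ∀ x : ℝ, IsPreconnected ({x} ×ˢ Icc a b) := fun x =>
    isPreconnected_singleton.prod isPreconnected_Icc
  have ha := left_mem_Icc.2 hab
  rw [parabolicBoundary, insert_eq, union_prod, ← union_assoc]
  refine IsPreconnected.union (γ, a) (Or.inl ⟨right_mem_Icc.2 hαγ, rfl⟩) ⟨rfl, ha⟩ ?_ (hside γ)
  exact IsPreconnected.union (α, a) ⟨left_mem_Icc.2 hαγ, rfl⟩ ⟨rfl, ha⟩ hbottom (hside α)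

theorem forall_pos_or_forall_neg_of_isPreconnected {X : Type*} [TopologicalSpace X] {S : Set X}
    {f : X → ℝ} (hS : IsPreconnected S) (hf : ContinuousOn f S) (hne : ∀ x ∈ S, f x ≠ 0) :
    (∀ x ∈ S, 0 < f x) ∨ ∀ x ∈ S, f x < 0 := by
  by_contra! hsigns
  obtain ⟨⟨x, hx, hfx⟩, y, hy, hfy⟩ := hsigns
  obtain ⟨z, hz, hfz⟩ := hS.intermediate_value hx hy hf ⟨hfx, hfy⟩
  exact hne z hz hfz

theorem nonneg_of_hasDerivAt_of_eventually_le {f : ℝ → ℝ} {d : ℝ} (hf : HasDerivAt f d t)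
    (hle : ∀ᶠ τ in 𝓝[<] t, f τ ≤ f t) : 0 ≤ d := by
  refine ge_of_tendsto ((hasDerivWithinAt_iff_tendsto_slope' self_notMem_Iio).1
    (hf.hasDerivWithinAt (s := Iio t))) ?_
  filter_upwards [hle, self_mem_nhdsWithin] with τ hτ hlt
  rw [slope_def_field]
  exact div_nonneg_of_nonpos (sub_nonpos.2 hτ) (sub_nonpos.2 (le_of_lt hlt))

theorem second_deriv_nonpos_of_isLocalMax {f f' : ℝ → ℝ} {f'' : ℝ}
    (hf : ∀ᶠ x in 𝓝 r, HasDerivAt f (f' x) x) (hf' : HasDerivAt f' f'' r) (hmax : IsLocalMax f r) :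
    f'' ≤ 0 := by
  by_contra! hpos
  have hderiv : deriv f =ᶠ[𝓝 r] f' := hf.mono fun x hx => hx.deriv
  have hderiv2 : deriv (deriv f) r = f'' := by rw [hderiv.deriv_eq, hf'.deriv]
  have hmin : IsLocalMin f r := isLocalMin_of_deriv_deriv_pos (by rwa [hderiv2])
    hmax.deriv_eq_zero hf.self_of_nhds.continuousAt
  have hconst : f =ᶠ[𝓝 r] fun _ => f r := by
    filter_upwards [hmax, hmin] with x using le_antisymm
  have hzero : deriv (deriv f) r = 0 := by simp [hconst.deriv.deriv_eq]
  exact hpos.ne' (hderiv2.symm.trans hzero)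

theorem forall_nonpos_of_hasDerivAt_le_mul (hE : IsCompact E) (hw : ContinuousOn w E) {Λ : ℝ}
    (hinterior : ∀ r t, (r, t) ∈ E → 0 < w (r, t) → IsParabolicInterior E r t)
    (hder : ∀ r t, (r, t) ∈ E → IsParabolicInterior E r t → 0 < w (r, t) →
      IsLocalMax (fun x => w (x, t)) r →
        ∃ d ≤ Λ * w (r, t), HasDerivAt (fun τ => w (r, τ)) d t) :
    ∀ p ∈ E, w p ≤ 0 := by
  by_contra! ⟨p, hp, hpos⟩
  -- The weight makes the time derivative strictly negative at a positive maximum.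
  set weight : ℝ → ℝ := fun τ => Real.exp (-(Λ + 1) * τ) with hweight
  have hweight_pos : ∀ τ, 0 < weight τ := fun τ => Real.exp_pos _
  obtain ⟨⟨r, t⟩, hq, hmax⟩ := hE.exists_isMaxOn ⟨p, hp⟩
    (f := fun q => weight q.2 * w q) (ContinuousOn.mul (by fun_prop) hw)
  have hwq : 0 < w (r, t) :=
    pos_of_mul_pos_right ((mul_pos (hweight_pos p.2) hpos).trans_le (hmax hp)) (hweight_pos t).le
  have hq_int := hinterior r t hq hwq
  obtain ⟨d, hd, hderiv⟩ := hder r t hq hq_int hwq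
    (hq_int.1.mono fun x hx => le_of_mul_le_mul_left (hmax hx) (hweight_pos t))
  have hweighted :
      HasDerivAt (fun τ => weight τ * w (r, τ)) (weight t * (d - (Λ + 1) * w (r, t))) t := by
    refine ((((hasDerivAt_id t).const_mul (-(Λ + 1))).exp).mul hderiv).congr_deriv ?_
    simp only [hweight, id]
    ring
  have hnonneg : 0 ≤ weight t * (d - (Λ + 1) * w (r, t)) :=
    nonneg_of_hasDerivAt_of_eventually_le hweighted (hq_int.2.mono fun τ hτ => hmax hτ)
  linarith [nonneg_of_mul_nonneg_right hnonneg (hweight_pos t)]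

end MaximumPrinciple

section Comparison

variable {R t₁ t₂ μ β a b α γ r t : ℝ} {B V : ℝ × ℝ → ℝ} {E : Set (ℝ × ℝ)}

local notation "Ω" => strip R t₁ t₂
local notation "∂ᵣ" => partialDeriv (strip R t₁ t₂) (1, 0)
local notation "∂ₜ" => partialDeriv (strip R t₁ t₂) (0, 1)

theorem IsRadialSolution.neg (h : IsRadialSolution R t₁ t₂ μ β B V) :
    IsRadialSolution R t₁ t₂ μ β B (-V) where
  __ := h
  smooth := h.smooth.neg
  pde q hq := by
    have hVrr : ∂ᵣ (∂ᵣ (-V)) q = -∂ᵣ (∂ᵣ V) q :=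
      (partialDeriv_congr (partialDeriv_neg h.R_pos) hq).trans (partialDeriv_neg h.R_pos hq)
    rw [hVrr, partialDeriv_neg h.R_pos hq, partialDeriv_neg h.R_pos hq]
    simp only [Pi.neg_apply]
    linear_combination -h.pde q hq

theorem IsRadialSolution.partialDeriv_time_le_of_isLocalMax
    (h : IsRadialSolution R t₁ t₂ μ β B V) (hr : r ∈ Ioo 0 R) (ht : t ∈ Ioo t₁ t₂)
    (hmax : IsLocalMax (fun x => V (x, t)) r) :
    ∂ₜ V (r, t) ≤ -(B (r, t) / r ^ 2) * V (r, t) := by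
  have hVr : ∂ᵣ V (r, t) = 0 := hmax.hasDerivAt_eq_zero (h.smooth.hasDerivAt_space hr ht)
  have hVrr : ∂ᵣ (∂ᵣ V) (r, t) ≤ 0 := second_deriv_nonpos_of_isLocalMax
    (eventually_of_mem (isOpen_Ioo.mem_nhds hr) fun x hx => h.smooth.hasDerivAt_space hx ht)
    ((h.smooth.partialDeriv h.R_pos).hasDerivAt_space hr ht) hmax
  rw [h.partialDeriv_time_eq (Ioo_subset_Icc_self hr) hr.1 ht, hVr]
  linarith

theorem IsRadialSolution.le_partialDeriv_time_of_isLocalMin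
    (h : IsRadialSolution R t₁ t₂ μ β B V) (hr : r ∈ Ioo 0 R) (ht : t ∈ Ioo t₁ t₂)
    (hmin : IsLocalMin (fun x => V (x, t)) r) :
    -(B (r, t) / r ^ 2) * V (r, t) ≤ ∂ₜ V (r, t) := by
  have hneg := h.neg.partialDeriv_time_le_of_isLocalMax hr ht hmin.neg
  rw [partialDeriv_neg h.R_pos ⟨Ioo_subset_Icc_self hr, ht⟩, Pi.neg_apply, Pi.neg_apply] at hneg
  linarith

/-- `B` is positive near the axis, so only points away from the axis matter. -/
theorem IsRadialSolution.exists_neg_potential_div_sq_le (h : IsRadialSolution R t₁ t₂ μ β B V)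
    (ha : t₁ < a) (hb : b < t₂) :
    ∃ Λ, ∀ r ∈ Ioc 0 R, ∀ t ∈ Icc a b, -(B (r, t) / r ^ 2) ≤ Λ := by
  obtain ⟨C, hC, hBβ⟩ := h.exists_abs_potential_sub_le ha hb
  obtain ⟨M, hM, hBM⟩ := h.smooth_potential.exists_abs_le ha hb
  refine ⟨M / (β / C) ^ 2, fun r hr t ht => ?_⟩
  have hr' := Ioc_subset_Icc_self hr
  have hβ := h.β_pos
  rcases le_total (C * r) β with hnear | hfar
  · have hB : 0 ≤ B (r, t) := by linarith [(abs_le.1 (hBβ r hr' t ht)).1]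
    exact (neg_nonpos.2 (by positivity)).trans (by positivity)
  · have hfar' : β / C ≤ r := (div_le_iff₀' hC).2 hfar
    rw [← neg_div]
    exact div_le_div₀ hM.le (neg_le.1 (abs_le.1 (hBM r hr' t ht)).1) (by positivity)
      (by gcongr)

theorem IsRadialSolution.forall_nonpos (h : IsRadialSolution R t₁ t₂ μ β B V) (ha : t₁ < a)
    (hb : b < t₂) (hE : IsCompact E) (hEs : E ⊆ Icc 0 R ×ˢ Icc a b)
    (hinterior : ∀ r t, (r, t) ∈ E → 0 < V (r, t) → IsParabolicInterior E r t) :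
    ∀ p ∈ E, V p ≤ 0 := by
  obtain ⟨Λ, hΛ⟩ := h.exists_neg_potential_div_sq_le ha hb
  have hI := Icc_subset_Ioo_of_lt ha hb
  refine forall_nonpos_of_hasDerivAt_le_mul (Λ := Λ) hE
    (h.smooth.continuousOn.mono (hEs.trans (prod_mono_right hI))) hinterior
    fun r t hq hq_int hV hmax => ?_
  have hr := hq_int.fst_mem_Ioo hEs
  have ht := (hEs hq).2
  refine ⟨_, ?_, h.smooth.hasDerivAt_time (Ioo_subset_Icc_self hr) (hI ht)⟩
  exact (h.partialDeriv_time_le_of_isLocalMax hr (hI ht) hmax).trans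
    (mul_le_mul_of_nonneg_right (hΛ r (Ioo_subset_Ioc_self hr) t ht) hV.le)

theorem IsRadialSolution.forall_eq_zero (h : IsRadialSolution R t₁ t₂ μ β B V) (ha : t₁ < a)
    (hb : b < t₂) (hE : IsCompact E) (hEs : E ⊆ Icc 0 R ×ˢ Icc a b)
    (hinterior : ∀ r t, (r, t) ∈ E → V (r, t) ≠ 0 → IsParabolicInterior E r t) :
    ∀ p ∈ E, V p = 0 := fun p hp =>
  le_antisymm (h.forall_nonpos ha hb hE hEs (fun r t hq hV => hinterior r t hq hV.ne') p hp)
    (neg_nonpos.1 (h.neg.forall_nonpos ha hb hE hEs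
      (fun r t hq hV => hinterior r t hq (neg_pos.1 hV).ne) p hp))

theorem IsRadialSolution.slice_eq_zero_of_le (h : IsRadialSolution R t₁ t₂ μ β B V)
    (hVR : ∀ t ∈ Ioo t₁ t₂, V (R, t) = 0) (ha : t₁ < a) (hab : a ≤ b) (hb : b < t₂)
    (hslice : ∀ r ∈ Icc 0 R, V (r, a) = 0) : ∀ r ∈ Icc 0 R, V (r, b) = 0 := fun r hr => by
  refine h.forall_eq_zero ha hb (isCompact_Icc.prod isCompact_Icc) Subset.rfl ?_ (r, b)
    ⟨hr, right_mem_Icc.2 hab⟩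
  rintro r t ⟨hr, ht⟩ hV
  have ht' := Icc_subset_Ioo_of_lt ha hb ht
  refine isParabolicInterior_of_notMem_parabolicBoundary hr ht fun hbdry => hV ?_
  rcases hbdry with ⟨-, rfl⟩ | ⟨rfl | rfl, -⟩
  exacts [hslice r hr, h.zero_left ht', hVR t ht']

theorem IsRadialSolution.nonneg_of_nonneg_parabolicBoundary
    (h : IsRadialSolution R t₁ t₂ μ β B V) (ha : t₁ < a) (hb : b < t₂) (hα : 0 ≤ α) (hγ : γ ≤ R)
    (hbdry : ∀ p ∈ parabolicBoundary α γ a b, 0 ≤ V p) :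
    ∀ p ∈ Icc α γ ×ˢ Icc a b, 0 ≤ V p := fun p hp =>
  neg_nonpos.1 (h.neg.forall_nonpos ha hb (isCompact_Icc.prod isCompact_Icc)
    (prod_mono_left (Icc_subset_Icc hα hγ))
    (fun _ _ hq hV => isParabolicInterior_of_notMem_parabolicBoundary hq.1 hq.2
      fun hmem => (neg_pos.1 hV).not_ge (hbdry _ hmem)) p hp)

theorem IsRadialSolution.exists_abs_potential_div_sq_le (h : IsRadialSolution R t₁ t₂ μ β B V)
    (ha : t₁ < a) (hb : b < t₂) (hα : 0 < α) :
    ∃ L, 0 ≤ L ∧ ∀ r ∈ Icc α R, ∀ t ∈ Icc a b, |B (r, t) / r ^ 2| ≤ L := by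
  obtain ⟨M, hM, hBM⟩ := h.smooth_potential.exists_abs_le ha hb
  refine ⟨M / α ^ 2, by positivity, fun r hr t ht => ?_⟩
  rw [abs_div, abs_sq]
  exact div_le_div₀ hM.le (hBM r ⟨hα.le.trans hr.1, hr.2⟩ t ht) (by positivity)
    (pow_le_pow_left₀ hα.le hr.1 2)

/-- `V` stays above the decaying barrier `ε * exp (-L * (t - a))`, where `L` bounds `B / r²`. -/
theorem IsRadialSolution.pos_of_pos_parabolicBoundary (h : IsRadialSolution R t₁ t₂ μ β B V)
    (ha : t₁ < a) (hb : b < t₂) (hα : 0 < α) (hγ : γ ≤ R) (hαγ : α ≤ γ) (hab : a ≤ b)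
    (hbdry : ∀ p ∈ parabolicBoundary α γ a b, 0 < V p) :
    ∀ p ∈ Icc α γ ×ˢ Icc a b, 0 < V p := by
  have hI := Icc_subset_Ioo_of_lt ha hb
  have hEs : Icc α γ ×ˢ Icc a b ⊆ Icc 0 R ×ˢ Icc a b := prod_mono_left (Icc_subset_Icc hα.le hγ)
  have hVcont : ContinuousOn V (Icc α γ ×ˢ Icc a b) :=
    h.smooth.continuousOn.mono (hEs.trans (prod_mono_right hI))
  have hV := h.nonneg_of_nonneg_parabolicBoundary ha hb hα.le hγ fun p hp => (hbdry p hp).le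
  obtain ⟨ε, hε, hεV⟩ := isCompact_parabolicBoundary.exists_forall_le'
    (hVcont.mono (parabolicBoundary_subset hαγ hab)) hbdry
  obtain ⟨L, hL, hBL⟩ := h.exists_abs_potential_div_sq_le ha hb hα
  set barrier : ℝ → ℝ := fun τ => ε * Real.exp (-L * (τ - a)) with hbarrier
  suffices hle : ∀ p ∈ Icc α γ ×ˢ Icc a b, barrier p.2 - V p ≤ 0 from fun p hp =>
    (show 0 < barrier p.2 by positivity).trans_le (sub_nonpos.1 (hle p hp))
  refine forall_nonpos_of_hasDerivAt_le_mul (Λ := 0) (isCompact_Icc.prod isCompact_Icc)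
    (ContinuousOn.sub (by fun_prop) hVcont) (fun r t ⟨hr, ht⟩ hw => ?_)
    fun r t hq hq_int hw hmax => ?_
  · refine isParabolicInterior_of_notMem_parabolicBoundary hr ht fun hmem => ?_
    have hbarrier_le : barrier t ≤ ε := mul_le_of_le_one_right hε.le
      (Real.exp_le_one_iff.2 (mul_nonpos_of_nonpos_of_nonneg (neg_nonpos.2 hL) (sub_nonneg.2 ht.1)))
    linarith [hεV _ hmem]
  · have hr := hq_int.fst_mem_Ioo hEs
    have ht := hI hq.2
    have hbarrier_deriv : HasDerivAt barrier (-L * barrier t) t := by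
      refine (((((hasDerivAt_id t).sub_const a).const_mul (-L)).exp).const_mul ε).congr_deriv ?_
      simp only [hbarrier, id]
      ring
    refine ⟨_, ?_, hbarrier_deriv.sub (h.smooth.hasDerivAt_time (Ioo_subset_Icc_self hr) ht)⟩
    have hVmin : IsLocalMin (fun x => V (x, t)) r := hmax.mono fun x hx =>
      (sub_le_sub_iff_left (barrier t)).1 hx
    have hVt := h.le_partialDeriv_time_of_isLocalMin hr ht hVmin
    have hBV : B (r, t) / r ^ 2 * V (r, t) ≤ L * V (r, t) :=
      mul_le_mul_of_nonneg_right
        (le_of_abs_le (hBL r ⟨hq.1.1, hr.2.le⟩ t hq.2)) (hV _ hq)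
    linarith [mul_nonneg hL hw.le]

theorem IsRadialSolution.ne_zero_of_ne_zero_parabolicBoundary
    (h : IsRadialSolution R t₁ t₂ μ β B V) (ha : t₁ < a) (hb : b < t₂) (hα : 0 < α) (hγ : γ ≤ R)
    (hαγ : α ≤ γ) (hab : a ≤ b) (hbdry : ∀ p ∈ parabolicBoundary α γ a b, V p ≠ 0) :
    ∀ p ∈ Icc α γ ×ˢ Icc a b, V p ≠ 0 := fun p hp => by
  have hcont : ContinuousOn V (parabolicBoundary α γ a b) :=
    h.smooth.continuousOn.mono ((parabolicBoundary_subset hαγ hab).trans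
      (prod_mono (Icc_subset_Icc hα.le hγ) (Icc_subset_Ioo_of_lt ha hb)))
  rcases forall_pos_or_forall_neg_of_isPreconnected (isPreconnected_parabolicBoundary hαγ hab)
    hcont hbdry with hpos | hneg
  · exact (h.pos_of_pos_parabolicBoundary ha hb hα hγ hαγ hab hpos p hp).ne'
  · exact (neg_pos.1 (h.neg.pos_of_pos_parabolicBoundary ha hb hα hγ hαγ hab
      (fun q hq => neg_pos.2 (hneg q hq)) p hp)).ne

end Comparison

section ZeroStatus

variable {g : ℝ × ℝ → ℝ} {J J' : Set ℝ} {R t₁ t₂ r s t α γ a b η : ℝ}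

/-- `g (r, ·)` vanishes at all times in `J` or at none of them, as the boundary condition of the
theorem demands at the endpoints. -/
def KeepsZeroStatus (g : ℝ × ℝ → ℝ) (J : Set ℝ) (r : ℝ) : Prop :=
  (∀ t ∈ J, g (r, t) = 0) ∨ ∀ t ∈ J, g (r, t) ≠ 0

theorem KeepsZeroStatus.mono (h : KeepsZeroStatus g J r) (hJ : J' ⊆ J) :
    KeepsZeroStatus g J' r :=
  h.imp (fun h t ht => h t (hJ ht)) fun h t ht => h t (hJ ht)

theorem KeepsZeroStatus.forall_ne_zero (h : KeepsZeroStatus g J r) (ht : t ∈ J)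
    (hne : g (r, t) ≠ 0) : ∀ τ ∈ J, g (r, τ) ≠ 0 :=
  h.resolve_left fun hzero => hne (hzero t ht)

theorem eventually_forall_mem_uIcc {P : ℝ → Prop} (h : ∀ᶠ τ in 𝓝 s, P τ) :
    ∀ᶠ t in 𝓝 s, ∀ τ ∈ uIcc s t, P τ :=
  (tendsto_const_nhds.uIcc tendsto_id).eventually h.smallSets

theorem SmoothOnStrip.eventually_keepsZeroStatus (hg : SmoothOnStrip R t₁ t₂ g)
    (hr : r ∈ Icc 0 R) (hs : s ∈ Ioo t₁ t₂)
    (h : KeepsZeroStatus g (Ioo t₁ t₂) r ∨ g (r, s) ≠ 0) :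
    ∀ᶠ t in 𝓝 s, KeepsZeroStatus g (uIcc s t) r := by
  rcases h with hkeeps | hne
  · filter_upwards [eventually_forall_mem_uIcc (isOpen_Ioo.mem_nhds hs)] with t ht
    exact hkeeps.mono ht
  · filter_upwards [eventually_forall_mem_uIcc
      ((hg.hasDerivAt_time hr hs).continuousAt.eventually_ne hne)] with t ht
    exact Or.inr ht

theorem SmoothOnStrip.eventually_zeroSet_subset_thickening (hg : SmoothOnStrip R t₁ t₂ g)
    (hs : s ∈ Ioo t₁ t₂) (hη : 0 < η) :
    ∀ᶠ t in 𝓝 s, zeroSet R g t ⊆ Metric.thickening η (zeroSet R g s) := by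
  have hlocal : ∀ᶠ t in 𝓝 s, ∀ r ∈ Icc 0 R,
      t ∈ Ioo t₁ t₂ → r ∈ zeroSet R g t → r ∈ Metric.thickening η (zeroSet R g s) := by
    refine isCompact_Icc.eventually_forall_of_forall_eventually fun r hr => ?_
    by_cases hr0 : g (r, s) = 0
    · have hmem : r ∈ Metric.thickening η (zeroSet R g s) :=
        Metric.self_subset_thickening hη _ ⟨hr, hr0⟩
      filter_upwards [continuous_snd.continuousAt.eventually
        (Metric.isOpen_thickening.mem_nhds hmem)] with q hq _ _ using hq
    · have hne := eventually_nhdsWithin_iff.1 ((hg.continuousOn (r, s) ⟨hr, hs⟩).eventually_ne hr0)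
      filter_upwards [(continuous_swap.tendsto (s, r)).eventually hne] with q hq hq₁ hq₂
      exact absurd hq₂.2 (hq ⟨hq₂.1, hq₁⟩)
  filter_upwards [hlocal, isOpen_Ioo.mem_nhds hs] with t hlocal ht r hr
  exact hlocal r hr.1 ht hr

/-- The points of `[α, γ] × [a, b]` lying between two zeros of `g` in `[α, γ]` at the same time. -/
def zeroHull (g : ℝ × ℝ → ℝ) (α γ a b : ℝ) : Set (ℝ × ℝ) :=
  {p | p.2 ∈ Icc a b ∧ ∃ x ∈ Icc α p.1, ∃ y ∈ Icc p.1 γ, g (x, p.2) = 0 ∧ g (y, p.2) = 0}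

theorem zeroHull_subset : zeroHull g α γ a b ⊆ Icc α γ ×ˢ Icc a b :=
  fun _ ⟨ht, _, hx, _, hy, _⟩ => ⟨⟨hx.1.trans hx.2, hy.1.trans hy.2⟩, ht⟩

theorem isCompact_zeroHull (hg : ContinuousOn g (Icc α γ ×ˢ Icc a b)) :
    IsCompact (zeroHull g α γ a b) := by
  set Z : Set (ℝ × ℝ) := (Icc α γ ×ˢ Icc a b) ∩ g ⁻¹' {0}
  have hZc : IsCompact Z := (isCompact_Icc.prod isCompact_Icc).of_isClosed_subset
    (hg.preimage_isClosed_of_isClosed (isClosed_Icc.prod isClosed_Icc) isClosed_singleton)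
    inter_subset_left
  -- Triples of two simultaneous zeros and a position between them.
  set K : Set ((ℝ × ℝ) × (ℝ × ℝ) × ℝ) := Z ×ˢ Z ×ˢ Icc α γ ∩
    ({k | k.1.2 = k.2.1.2} ∩ ({k | k.1.1 ≤ k.2.2} ∩ {k | k.2.2 ≤ k.2.1.1}))
  have hKc : IsCompact K := (hZc.prod (hZc.prod isCompact_Icc)).inter_right
    ((isClosed_eq (by fun_prop) (by fun_prop)).inter
      ((isClosed_le (by fun_prop) (by fun_prop)).inter
        (isClosed_le (by fun_prop) (by fun_prop))))
  convert hKc.image (f := fun k => (k.2.2, k.1.2)) (by fun_prop)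
  ext ⟨r, t⟩
  constructor
  · rintro ⟨ht, x, hx, y, hy, hx0, hy0⟩
    have hr := (zeroHull_subset ⟨ht, x, hx, y, hy, hx0, hy0⟩).1
    exact ⟨((x, t), (y, t), r), ⟨⟨⟨⟨⟨hx.1, hx.2.trans hr.2⟩, ht⟩, hx0⟩,
      ⟨⟨⟨hr.1.trans hy.1, hy.2⟩, ht⟩, hy0⟩, hr⟩, rfl, hx.2, hy.1⟩, rfl⟩
  · rintro ⟨⟨⟨x, τ⟩, ⟨y, τ'⟩, r⟩, ⟨⟨⟨hx, hx0⟩, ⟨hy, hy0⟩, -⟩, hττ', hxr, hry⟩, heq⟩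
    obtain rfl : τ = τ' := hττ'
    obtain ⟨rfl, rfl⟩ := Prod.mk.injEq .. ▸ heq
    exact ⟨hx.2, x, ⟨hx.1.1, hxr⟩, y, ⟨hry, hy.1.2⟩, hx0, hy0⟩

end ZeroStatus

section LocalCounting

variable {R t₁ t₂ μ β a b α γ r s t x y z η : ℝ} {B V : ℝ × ℝ → ℝ} {J : Set ℝ}

theorem IsRadialSolution.exists_zero_of_le (h : IsRadialSolution R t₁ t₂ μ β B V) (ha : t₁ < a)
    (hab : a ≤ b) (hb : b < t₂) (hα : 0 ≤ α) (hγ : γ ≤ R)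
    (hleft : KeepsZeroStatus V (Icc a b) α) (hright : KeepsZeroStatus V (Icc a b) γ)
    (hy : y ∈ Icc α γ) (hy0 : V (y, b) = 0) : ∃ x ∈ Icc α γ, V (x, a) = 0 := by
  by_contra! hbottom
  have hαγ := hy.1.trans hy.2
  have hleft' := hleft.forall_ne_zero (left_mem_Icc.2 hab) (hbottom α (left_mem_Icc.2 hαγ))
  have hright' := hright.forall_ne_zero (left_mem_Icc.2 hab) (hbottom γ (right_mem_Icc.2 hαγ))
  have hα0 : 0 < α := hα.lt_of_ne fun heq => by
    subst heq
    exact hleft' a (left_mem_Icc.2 hab) (h.zero_left ⟨ha, hab.trans_lt hb⟩)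
  refine h.ne_zero_of_ne_zero_parabolicBoundary ha hb hα0 hγ hαγ hab ?_ (y, b)
    ⟨hy, right_mem_Icc.2 hab⟩ hy0
  rintro ⟨r, t⟩ (⟨hr, rfl⟩ | ⟨rfl | rfl, ht⟩)
  exacts [hbottom r hr, hleft' t ht, hright' t ht]

theorem IsRadialSolution.isParabolicInterior_zeroHull (h : IsRadialSolution R t₁ t₂ μ β B V)
    (ha : t₁ < a) (hb : b < t₂) (hα : 0 ≤ α) (hγ : γ ≤ R)
    (hleft : KeepsZeroStatus V (Icc a b) α) (hright : KeepsZeroStatus V (Icc a b) γ)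
    (hone : (zeroSet R V a ∩ Icc α γ).Subsingleton) (hp : (r, t) ∈ zeroHull V α γ a b)
    (hV : V (r, t) ≠ 0) : IsParabolicInterior (zeroHull V α γ a b) r t := by
  have hr := (zeroHull_subset hp).1
  have hr' : r ∈ Icc 0 R := Icc_subset_Icc hα hγ hr
  obtain ⟨ht, x, hx, y, hy, hx0, hy0⟩ := hp
  dsimp only at ht hx hy hx0 hy0
  have hxr : x < r := hx.2.lt_of_ne fun heq => hV (heq ▸ hx0)
  have hry : r < y := hy.1.lt_of_ne' fun heq => hV (heq ▸ hy0)
  have hat : a < t := ht.1.lt_of_ne' fun heq => by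
    subst heq
    have hx' : x ∈ Icc α γ := ⟨hx.1, hx.2.trans hr.2⟩
    have hy' : y ∈ Icc α γ := ⟨hr.1.trans hy.1, hy.2⟩
    exact (hxr.trans hry).ne (hone ⟨⟨Icc_subset_Icc hα hγ hx', hx0⟩, hx'⟩
      ⟨⟨Icc_subset_Icc hα hγ hy', hy0⟩, hy'⟩)
  constructor
  · filter_upwards [Icc_mem_nhds hxr hry] with ξ hξ
    exact ⟨ht, x, ⟨hx.1, hξ.1⟩, y, ⟨hξ.2, hy.2⟩, hx0, hy0⟩
  -- Just before `t` there is still a zero on either side of `r`, because `V (r, ·) ≠ 0` near `t`.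
  have hmid : ∀ᶠ τ in 𝓝[<] t, KeepsZeroStatus V (uIcc t τ) r :=
    (h.smooth.eventually_keepsZeroStatus hr' (Icc_subset_Ioo_of_lt ha hb ht)
      (Or.inr hV)).filter_mono nhdsWithin_le_nhds
  filter_upwards [hmid, Ioo_mem_nhdsLT hat] with τ hmid hτ
  rw [uIcc_of_ge hτ.2.le] at hmid
  have hτt : Icc τ t ⊆ Icc a b := Icc_subset_Icc hτ.1.le ht.2
  obtain ⟨x', hx', hx'0⟩ := h.exists_zero_of_le (ha.trans hτ.1) hτ.2.le (ht.2.trans_lt hb) hα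
    hr'.2 (hleft.mono hτt) hmid hx hx0
  obtain ⟨y', hy', hy'0⟩ := h.exists_zero_of_le (ha.trans hτ.1) hτ.2.le (ht.2.trans_lt hb) hr'.1
    hγ hmid (hright.mono hτt) hy hy0
  exact ⟨hτt (left_mem_Icc.2 hτ.2.le), x', hx', y', hy', hx'0, hy'0⟩

theorem IsRadialSolution.eq_zero_of_mem_Icc_of_zeros (h : IsRadialSolution R t₁ t₂ μ β B V)
    (ha : t₁ < a) (hab : a ≤ b) (hb : b < t₂) (hα : 0 ≤ α) (hγ : γ ≤ R)
    (hleft : KeepsZeroStatus V (Icc a b) α) (hright : KeepsZeroStatus V (Icc a b) γ)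
    (hone : (zeroSet R V a ∩ Icc α γ).Subsingleton) (hx : α ≤ x) (hy : y ≤ γ)
    (hx0 : V (x, b) = 0) (hy0 : V (y, b) = 0) : ∀ r ∈ Icc x y, V (r, b) = 0 := fun r hr =>
  have hsub : Icc α γ ×ˢ Icc a b ⊆ Icc 0 R ×ˢ Icc a b := prod_mono_left (Icc_subset_Icc hα hγ)
  h.forall_eq_zero ha hb
    (isCompact_zeroHull (h.smooth.continuousOn.mono
      (hsub.trans (prod_mono_right (Icc_subset_Ioo_of_lt ha hb)))))
    (zeroHull_subset.trans hsub)
    (fun _ _ hp hV => h.isParabolicInterior_zeroHull ha hb hα hγ hleft hright hone hp hV)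
    (r, b) ⟨right_mem_Icc.2 hab, x, ⟨hx, hr.1⟩, y, ⟨hr.2, hy⟩, hx0, hy0⟩

/-- The zeros of `g` at time `s` lie in disjoint windows of radius `η` around them which, over the
times `J`, contain all zeros of `g` and on whose ends (truncated to `[0, R]`) `g` keeps its zero
status. -/
structure HasIsolatingWindows (R : ℝ) (g : ℝ × ℝ → ℝ) (s η : ℝ) (J : Set ℝ) : Prop where
  pos : 0 < η
  separated : ∀ x ∈ zeroSet R g s, ∀ y ∈ zeroSet R g s, x ≠ y → 2 * η < |x - y|
  left : ∀ z ∈ zeroSet R g s, KeepsZeroStatus g J (max 0 (z - η))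
  right : ∀ z ∈ zeroSet R g s, KeepsZeroStatus g J (min R (z + η))
  near : ∀ t ∈ J, zeroSet R g t ⊆ Metric.thickening η (zeroSet R g s)

theorem mem_Icc_max_min_iff :
    x ∈ Icc (max 0 (z - η)) (min R (z + η)) ↔ x ∈ Icc 0 R ∧ |x - z| ≤ η := by
  simp only [mem_Icc, max_le_iff, le_min_iff, abs_le, sub_le_iff_le_add', neg_le_sub_iff_le_add]
  rw [and_and_and_comm, add_comm η x]

theorem exists_isolating_radius {S : Set ℝ} (hS : S.Finite) :
    ∃ η > 0, ∀ x ∈ S, ∀ y ∈ S, x ≠ y → 2 * η < |x - y| := by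
  have hsmall : ∀ᶠ η : ℝ in 𝓝[>] 0, ∀ x ∈ S, ∀ y ∈ S, x ≠ y → 2 * η < |x - y| := by
    refine hS.eventually_all.2 fun x _ => hS.eventually_all.2 fun y _ => ?_
    by_cases hxy : x = y
    · exact Eventually.of_forall fun _ hne => absurd hxy hne
    · filter_upwards [Ioo_mem_nhdsGT (half_pos (abs_pos.2 (sub_ne_zero.2 hxy)))] with η hη _
      linarith [hη.2]
  obtain ⟨η, hη, hpos⟩ := (hsmall.and self_mem_nhdsWithin).exists
  exact ⟨η, hpos, hη⟩

theorem IsRadialSolution.exists_hasIsolatingWindows (h : IsRadialSolution R t₁ t₂ μ β B V)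
    (hVR : KeepsZeroStatus V (Ioo t₁ t₂) R) (hs : s ∈ Ioo t₁ t₂) (hfin : (zeroSet R V s).Finite) :
    ∃ η, ∀ᶠ t in 𝓝 s, HasIsolatingWindows R V s η (uIcc s t) := by
  obtain ⟨η, hη, hsep⟩ := exists_isolating_radius hfin
  have hne : ∀ z ∈ zeroSet R V s, ∀ x ∈ Icc 0 R, |x - z| = η → V (x, s) ≠ 0 :=
    fun z hz x hx hxz hx0 => by
      have hdist := hsep x ⟨hx, hx0⟩ z hz fun heq => hη.ne (by simpa [heq] using hxz)
      linarith
  have hleft : ∀ᶠ t in 𝓝 s, ∀ z ∈ zeroSet R V s, KeepsZeroStatus V (uIcc s t) (max 0 (z - η)) := by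
    refine hfin.eventually_all.2 fun z hz => ?_
    have hmem : max 0 (z - η) ∈ Icc 0 R :=
      ⟨le_max_left _ _, max_le h.R_pos.le (by linarith [hz.1.2])⟩
    refine h.smooth.eventually_keepsZeroStatus hmem hs ?_
    rcases max_choice 0 (z - η) with heq | heq
    · exact Or.inl (Or.inl fun t ht => by rw [heq]; exact h.zero_left ht)
    · exact Or.inr (hne z hz _ hmem (by rw [heq, sub_sub_cancel_left, abs_neg, abs_of_pos hη]))
  have hright : ∀ᶠ t in 𝓝 s, ∀ z ∈ zeroSet R V s, KeepsZeroStatus V (uIcc s t) (min R (z + η)) := by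
    refine hfin.eventually_all.2 fun z hz => ?_
    have hmem : min R (z + η) ∈ Icc 0 R :=
      ⟨le_min h.R_pos.le (by linarith [hz.1.1]), min_le_left _ _⟩
    refine h.smooth.eventually_keepsZeroStatus hmem hs ?_
    rcases min_choice R (z + η) with heq | heq
    · exact Or.inl (heq.symm ▸ hVR)
    · exact Or.inr (hne z hz _ hmem (by rw [heq, add_sub_cancel_left, abs_of_pos hη]))
  refine ⟨η, ?_⟩
  filter_upwards [hleft, hright, eventually_forall_mem_uIcc
    (h.smooth.eventually_zeroSet_subset_thickening hs hη)] with t hleft hright hnear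
  exact ⟨hη, hsep, hleft, hright, hnear⟩

theorem HasIsolatingWindows.inter_Icc_subsingleton (hw : HasIsolatingWindows R V s η J)
    (hz : z ∈ zeroSet R V s) :
    (zeroSet R V s ∩ Icc (max 0 (z - η)) (min R (z + η))).Subsingleton := by
  refine subsingleton_of_forall_eq z fun x ⟨hx, hxz⟩ => by_contra fun hne => ?_
  linarith [hw.pos, hw.separated x hx z hz hne, (mem_Icc_max_min_iff.1 hxz).2]

theorem IsRadialSolution.ncard_zeroSet_le_of_le (h : IsRadialSolution R t₁ t₂ μ β B V)
    (hs : t₁ < s) (hst : s ≤ t) (ht : t < t₂) (hw : HasIsolatingWindows R V s η (Icc s t))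
    (hfin : (zeroSet R V s).Finite) (hfin' : (zeroSet R V t).Finite) :
    (zeroSet R V t).ncard ≤ (zeroSet R V s).ncard := by
  have hwindow : ∀ x ∈ zeroSet R V t, ∃ z ∈ zeroSet R V s,
      x ∈ Icc (max 0 (z - η)) (min R (z + η)) := fun x hx => by
    obtain ⟨z, hz, hxz⟩ := Metric.mem_thickening_iff.1 (hw.near t (right_mem_Icc.2 hst) hx)
    exact ⟨z, hz, mem_Icc_max_min_iff.2 ⟨hx.1, hxz.le⟩⟩
  choose! f hf hxf using hwindow
  refine ncard_le_ncard_of_injOn f hf (fun x hx y hy hxy => ?_) hfin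
  wlog hle : x ≤ y generalizing x y
  · exact (this y hy x hx hxy.symm (le_of_not_ge hle)).symm
  have hzero := h.eq_zero_of_mem_Icc_of_zeros hs hst ht (le_max_left _ _) (min_le_left _ _)
    (hw.left _ (hf x hx)) (hw.right _ (hf x hx)) (hw.inter_Icc_subsingleton (hf x hx))
    (hxf x hx).1 (hxy ▸ (hxf y hy).2) hx.2 hy.2
  refine hle.eq_of_not_lt fun hlt => Icc_infinite hlt (hfin'.subset fun r hr => ?_)
  exact ⟨⟨hx.1.1.trans hr.1, hr.2.trans hy.1.2⟩, hzero r hr⟩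

theorem IsRadialSolution.ncard_zeroSet_le_of_ge (h : IsRadialSolution R t₁ t₂ μ β B V)
    (ht : t₁ < t) (hts : t ≤ s) (hs : s < t₂) (hw : HasIsolatingWindows R V s η (Icc t s))
    (hfin : (zeroSet R V t).Finite) : (zeroSet R V s).ncard ≤ (zeroSet R V t).ncard := by
  have hzero : ∀ z ∈ zeroSet R V s, ∃ x ∈ Icc (max 0 (z - η)) (min R (z + η)), V (x, t) = 0 :=
    fun z hz => h.exists_zero_of_le ht hts hs (le_max_left _ _) (min_le_left _ _)
      (hw.left z hz) (hw.right z hz) (mem_Icc_max_min_iff.2 ⟨hz.1, by simp [hw.pos.le]⟩) hz.2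
  choose! f hf hf0 using hzero
  refine ncard_le_ncard_of_injOn f
    (fun z hz => ⟨(mem_Icc_max_min_iff.1 (hf z hz)).1, hf0 z hz⟩) (fun z hz y hy hzy => ?_) hfin
  by_contra hne
  have hz' := (mem_Icc_max_min_iff.1 (hf z hz)).2
  have hy' := (mem_Icc_max_min_iff.1 (hf y hy)).2
  rw [← hzy] at hy'
  rw [abs_sub_comm] at hz'
  linarith [hw.separated z hz y hy hne, abs_sub_le z (f z) y]

end LocalCounting

section GlobalCounting

variable {R t₁ t₂ μ β s t T : ℝ} {B V : ℝ × ℝ → ℝ}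

/-- Continuous induction on the set of times up to which `f` has not exceeded its initial value. -/
theorem antitoneOn_of_eventually_nhdsGT_of_eventually_nhdsLT {X : Type*} [Preorder X] {f : ℝ → X}
    {S : Set ℝ} (hS : S.OrdConnected) (hright : ∀ s ∈ S, ∀ᶠ t in 𝓝[>] s, t ∈ S → f t ≤ f s)
    (hleft : ∀ s ∈ S, ∀ᶠ t in 𝓝[<] s, t ∈ S → f s ≤ f t) : AntitoneOn f S := by
  intro s hs t ht hst
  have hI : Icc s t ⊆ S := hS.out hs ht
  set A : Set ℝ := {x | ∀ y ∈ Icc s x, f y ≤ f s}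
  suffices hIA : Icc s t ⊆ A from hIA (right_mem_Icc.2 hst) t (right_mem_Icc.2 hst)
  refine IsClosed.Icc_subset_of_forall_mem_nhdsWithin ?_ ?_ ?_
  · refine isClosed_of_closure_subset fun c hc => ?_
    have hcI : c ∈ Icc s t := closure_minimal inter_subset_right isClosed_Icc hc
    have hfreq := mem_closure_iff_frequently.1 hc
    refine ⟨fun y hy => ?_, hcI⟩
    rcases hy.2.lt_or_eq with hyc | rfl
    · obtain ⟨x, hx, hyx⟩ := (hfreq.and_eventually (lt_mem_nhds hyc)).exists
      exact hx.1 y ⟨hy.1, le_of_lt hyx⟩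
    · obtain ⟨x, hx, hyx⟩ := (hfreq.and_eventually
        (eventually_nhdsWithin_iff.1 (hleft y (hI hcI)))).exists
      rcases lt_or_ge x y with hxy | hxy
      · exact (hyx hxy (hI hx.2)).trans (hx.1 x ⟨hx.2.1, le_rfl⟩)
      · exact hx.1 y ⟨hy.1, hxy⟩
  · exact fun y hy => (le_antisymm hy.2 hy.1 ▸ le_rfl)
  · rintro x ⟨hxA, hx⟩
    have hxS := hI (Ico_subset_Icc_self hx)
    obtain ⟨u, hu, hxu⟩ := mem_nhdsGT_iff_exists_Ioo_subset.1 (hright x hxS)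
    filter_upwards [Ioo_mem_nhdsGT (lt_min hu hx.2)] with w hw y hy
    rcases le_or_gt y x with hyx | hxy
    · exact hxA y ⟨hy.1, hyx⟩
    · have hyw := hy.2.trans_lt hw.2
      exact (hxu ⟨hxy, hyw.trans_le (min_le_left _ _)⟩
        (hI ⟨hy.1, (hyw.trans_le (min_le_right _ _)).le⟩)).trans (hxA x ⟨hx.1, le_rfl⟩)

theorem exists_accPt_of_infinite_zeroSet (hinf : (zeroSet R V s).Infinite) :
    ∃ r ∈ Icc 0 R, AccPt r (𝓟 (zeroSet R V s)) :=
  hinf.exists_accPt_of_subset_isCompact isCompact_Icc fun _ hr => hr.1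

theorem IsRadialSolution.exists_slice_eq_zero_of_infinite_zeroSet
    (h : IsRadialSolution R t₁ t₂ μ β B V) (hVR : ∀ t ∈ Ioo t₁ t₂, V (R, t) = 0) (hT : t₁ < T)
    (hTs : T < s) (hs : s < t₂) (hinf : (zeroSet R V s).Infinite) :
    ∃ t ∈ Ioo T s, ∀ r ∈ Icc 0 R, V (r, t) = 0 := by
  obtain ⟨r₀, hr₀, hacc⟩ := exists_accPt_of_infinite_zeroSet hinf
  simpa using h.exists_slice_eq_zero_of_accPt hVR (sub_pos.2 hTs) (by simpa using hT) hs hr₀ hacc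

/-- Backward uniqueness: a first vanishing slice would be preceded by another one. -/
theorem IsRadialSolution.exists_ne_zero_slice (h : IsRadialSolution R t₁ t₂ μ β B V)
    (hVR : ∀ t ∈ Ioo t₁ t₂, V (R, t) = 0) (ht : t ∈ Ioo t₁ t₂)
    (hne : ∃ r ∈ Icc 0 R, V (r, t) ≠ 0) (hs : s ∈ Ioo t₁ t₂) :
    ∃ r ∈ Icc 0 R, V (r, s) ≠ 0 := by
  by_contra! hslice
  obtain ⟨r, hr, hrt⟩ := hne
  have hts : t < s := by
    by_contra! hst
    exact hrt (h.slice_eq_zero_of_le hVR hs.1 hst ht.2 hslice r hr)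
  have hI := Icc_subset_Ioo_of_lt ht.1 hs.2
  set A : Set ℝ := ⋂ x ∈ Icc 0 R, Icc t s ∩ (fun σ => V (x, σ)) ⁻¹' {0} with hA
  have hA_mem : ∀ σ, σ ∈ A ↔ σ ∈ Icc t s ∧ ∀ x ∈ Icc 0 R, V (x, σ) = 0 := fun σ => by
    simp only [hA, mem_iInter₂, mem_inter_iff, mem_preimage, mem_singleton_iff]
    exact ⟨fun h => ⟨(h r hr).1, fun x hx => (h x hx).2⟩, fun h x hx => ⟨h.1, h.2 x hx⟩⟩
  have hA_closed : IsClosed A := isClosed_biInter fun x hx =>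
    ContinuousOn.preimage_isClosed_of_isClosed
      (fun σ hσ => (h.smooth.hasDerivAt_time hx (hI hσ)).continuousAt.continuousWithinAt)
      isClosed_Icc isClosed_singleton
  obtain ⟨σ, hσ, hσ_least⟩ := (isCompact_Icc.of_isClosed_subset hA_closed
    fun σ hσ => ((hA_mem σ).1 hσ).1).exists_isLeast
      ⟨s, (hA_mem s).2 ⟨right_mem_Icc.2 hts.le, hslice⟩⟩
  obtain ⟨hσI, hσ0⟩ := (hA_mem σ).1 hσ
  have htσ : t < σ := hσI.1.lt_of_ne fun heq => hrt (heq ▸ hσ0 r hr)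
  have hinf : (zeroSet R V σ).Infinite :=
    (Icc_infinite h.R_pos).mono fun x hx => ⟨hx, hσ0 x hx⟩
  obtain ⟨τ, hτ, hτ0⟩ := h.exists_slice_eq_zero_of_infinite_zeroSet hVR ht.1 htσ (hI hσI).2 hinf
  exact hτ.2.not_ge (hσ_least ((hA_mem τ).2 ⟨⟨hτ.1.le, hτ.2.le.trans hσI.2⟩, hτ0⟩))

theorem IsRadialSolution.finite_zeroSet (h : IsRadialSolution R t₁ t₂ μ β B V)
    (hVR : KeepsZeroStatus V (Ioo t₁ t₂) R)
    (hne : ∃ t ∈ Ioo t₁ t₂, ∃ r ∈ Icc 0 R, V (r, t) ≠ 0) (hs : s ∈ Ioo t₁ t₂) :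
    (zeroSet R V s).Finite := by
  by_contra hinf
  rcases hVR with hVR | hVR
  · obtain ⟨T, hT⟩ := exists_between hs.1
    obtain ⟨t, ht, hslice⟩ :=
      h.exists_slice_eq_zero_of_infinite_zeroSet hVR hT.1 hT.2 hs.2 hinf
    obtain ⟨t₀, ht₀, hne⟩ := hne
    obtain ⟨r, hr, hrt⟩ := h.exists_ne_zero_slice hVR ht₀ hne
      ⟨hT.1.trans ht.1, ht.2.trans hs.2⟩
    exact hrt (hslice r hr)
  · obtain ⟨r₀, hr₀, hacc⟩ := exists_accPt_of_infinite_zeroSet hinf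
    exact h.not_accPt_zeroSet_of_ne_zero_right hVR hs hr₀ hacc

theorem IsRadialSolution.antitoneOn_ncard_zeroSet (h : IsRadialSolution R t₁ t₂ μ β B V)
    (hVR : KeepsZeroStatus V (Ioo t₁ t₂) R) (hfin : ∀ t ∈ Ioo t₁ t₂, (zeroSet R V t).Finite) :
    AntitoneOn (fun t => (zeroSet R V t).ncard) (Ioo t₁ t₂) := by
  refine antitoneOn_of_eventually_nhdsGT_of_eventually_nhdsLT ordConnected_Ioo
    (fun s hs => ?_) fun s hs => ?_
  all_goals obtain ⟨η, hη⟩ := h.exists_hasIsolatingWindows hVR hs (hfin s hs)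
  · filter_upwards [nhdsWithin_le_nhds hη, self_mem_nhdsWithin] with t hw hst ht
    rw [uIcc_of_le (le_of_lt hst)] at hw
    exact h.ncard_zeroSet_le_of_le hs.1 (le_of_lt hst) ht.2 hw (hfin s hs) (hfin t ht)
  · filter_upwards [nhdsWithin_le_nhds hη, self_mem_nhdsWithin] with t hw hts ht
    rw [uIcc_of_ge (le_of_lt hts)] at hw
    exact h.ncard_zeroSet_le_of_ge ht.1 (le_of_lt hts) hs.2 hw (hfin t ht)

end GlobalCounting

section ClassicalFormulation

variable {R t₁ t₂ μ β : ℝ} {B V : ℝ × ℝ → ℝ}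

local notation "Ω" => strip R t₁ t₂
local notation "∂ᵣ" => partialDeriv (strip R t₁ t₂) (1, 0)
local notation "∂ₜ" => partialDeriv (strip R t₁ t₂) (0, 1)

theorem SmoothOnStrip.deriv_deriv_eq {g : ℝ × ℝ → ℝ} {r t : ℝ} (hR : 0 < R)
    (hg : SmoothOnStrip R t₁ t₂ g) (hr : r ∈ Ioo 0 R) (ht : t ∈ Ioo t₁ t₂) :
    deriv (deriv fun x => g (x, t)) r = ∂ᵣ (∂ᵣ g) (r, t) := by
  have hderiv : deriv (fun x => g (x, t)) =ᶠ[𝓝 r] fun x => ∂ᵣ g (x, t) := by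
    filter_upwards [isOpen_Ioo.mem_nhds hr] with x hx using (hg.hasDerivAt_space hx ht).deriv
  rw [hderiv.deriv_eq]
  exact ((hg.partialDeriv hR).hasDerivAt_space hr ht).deriv

theorem isRadialSolution_of_deriv (hR : 0 < R) (hμ : 1 ≤ μ) (hβ : 0 < β)
    (hcoercive : 0 < μ * (μ - 2) / 4 + β) (hB : SmoothOnStrip R t₁ t₂ B)
    (hB0 : ∀ t ∈ Ioo t₁ t₂, B (0, t) = β) (hV : SmoothOnStrip R t₁ t₂ V)
    (hpde : ∀ r ∈ Ioo 0 R, ∀ t ∈ Ioo t₁ t₂,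
      deriv (fun s => V (r, s)) t = deriv (deriv fun x => V (x, t)) r
        + μ / r * deriv (fun x => V (x, t)) r - B (r, t) / r ^ 2 * V (r, t)) :
    IsRadialSolution R t₁ t₂ μ β B V := by
  refine ⟨hR, hμ, hβ, hcoercive, hB, hV, hB0, ?_⟩
  rintro ⟨r, t⟩ ⟨hr, ht⟩
  have hinterior : EqOn (fun r => r ^ 2 * ∂ₜ V (r, t))
      (fun r => r ^ 2 * ∂ᵣ (∂ᵣ V) (r, t) + μ * r * ∂ᵣ V (r, t) - B (r, t) * V (r, t))
      (Ioo 0 R) := fun r hr => by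
    have hr0 := hr.1.ne'
    have h := hpde r hr t ht
    rw [(hV.hasDerivAt_time (Ioo_subset_Icc_self hr) ht).deriv, (hV.hasDerivAt_space hr ht).deriv,
      hV.deriv_deriv_eq hR hr ht] at h
    simp only [h]
    field_simp
  have hVr := hV.partialDeriv (e := (1, 0)) hR
  have hcont : ContinuousOn
      (fun r => r ^ 2 * ∂ᵣ (∂ᵣ V) (r, t) + μ * r * ∂ᵣ V (r, t) - B (r, t) * V (r, t)) (Icc 0 R) :=
    (((continuousOn_pow 2).mul ((hVr.partialDeriv hR).continuousOn_space ht)).add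
      ((continuousOn_const.mul continuousOn_id).mul (hVr.continuousOn_space ht))).sub
      ((hB.continuousOn_space ht).mul (hV.continuousOn_space ht))
  exact hinterior.of_subset_closure
    ((continuousOn_pow 2).mul ((hV.partialDeriv hR).continuousOn_space ht)) hcont
    Ioo_subset_Icc_self (closure_Ioo hR.ne).ge hr

end ClassicalFormulation

theorem zero_number_monotone_general {R t₁ t₂ μ β : ℝ} (hR : 0 < R) (hμ : 1 ≤ μ) (hβ : 0 < β)
    (hcoercive : 0 < μ * (μ - 2) / 4 + β) {b v : ℝ → ℝ → ℝ}
    (hb : ContDiffOn ℝ ∞ (fun p : ℝ × ℝ => b p.1 p.2) (Icc 0 R ×ˢ Ioo t₁ t₂))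
    (hb0 : ∀ t ∈ Ioo t₁ t₂, b 0 t = β)
    (hv : ContDiffOn ℝ ∞ (fun p : ℝ × ℝ => v p.1 p.2) (Icc 0 R ×ˢ Ioo t₁ t₂))
    (hpde : ∀ r ∈ Ioo 0 R, ∀ t ∈ Ioo t₁ t₂,
      deriv (fun s => v r s) t = deriv (deriv fun x => v x t) r
        + μ / r * deriv (fun x => v x t) r - b r t / r ^ 2 * v r t)
    (hbcR : (∀ t ∈ Ioo t₁ t₂, v R t = 0) ∨ ∀ t ∈ Ioo t₁ t₂, v R t ≠ 0)
    (hnz : ∃ t ∈ Ioo t₁ t₂, ∃ r ∈ Icc 0 R, v r t ≠ 0) :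
    (∀ t ∈ Ioo t₁ t₂, {r ∈ Icc 0 R | v r t = 0}.Finite) ∧
      AntitoneOn (fun t => {r ∈ Icc 0 R | v r t = 0}.ncard) (Ioo t₁ t₂) := by
  have h : IsRadialSolution R t₁ t₂ μ β (fun p => b p.1 p.2) fun p => v p.1 p.2 :=
    isRadialSolution_of_deriv hR hμ hβ hcoercive hb hb0 hv hpde
  have hfinite : ∀ t ∈ Ioo t₁ t₂, {r ∈ Icc 0 R | v r t = 0}.Finite :=
    fun _ ht => h.finite_zeroSet hbcR hnz ht
  exact ⟨hfinite, h.antitoneOn_ncard_zeroSet hbcR hfinite⟩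

theorem zero_number_monotone
    (m : ℕ) (hm : 2 ≤ m) (R t1 t2 : ℝ) (hR : 0 < R) (ht12 : t1 < t2)
    (b v : ℝ → ℝ → ℝ)
    (hb_smooth : ContDiffOn ℝ (⊤ : ℕ∞) (fun p : ℝ × ℝ => b p.1 p.2) (Icc 0 R ×ˢ Ioo t1 t2))
    (hb_bdd : ∃ C : ℝ, ∀ r ∈ Icc (0:ℝ) R, ∀ t ∈ Ioo t1 t2, |b r t| ≤ C)
    (hb0 : ∀ t ∈ Ioo t1 t2, b 0 t = (m : ℝ) - 1)
    (hbr0 : ∀ t ∈ Ioo t1 t2, deriv (fun x => b x t) 0 = 0)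
    (hv_smooth : ContDiffOn ℝ (⊤ : ℕ∞) (fun p : ℝ × ℝ => v p.1 p.2) (Icc 0 R ×ˢ Ioo t1 t2))
    (hpde : ∀ r ∈ Ioo (0:ℝ) R, ∀ t ∈ Ioo t1 t2,
      deriv (fun s => v r s) t =
        deriv (deriv (fun x => v x t)) r + (((m : ℝ) - 1) / r) * deriv (fun x => v x t) r
          - (b r t / r ^ 2) * v r t)
    (hbc0 : (∀ t ∈ Ioo t1 t2, v 0 t = 0) ∨ (∀ t ∈ Ioo t1 t2, v 0 t ≠ 0))
    (hbcR : (∀ t ∈ Ioo t1 t2, v R t = 0) ∨ (∀ t ∈ Ioo t1 t2, v R t ≠ 0))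
    (hnz : ¬ ∀ r ∈ Icc (0:ℝ) R, ∀ t ∈ Ioo t1 t2, v r t = 0)
    :
    ∀ s ∈ Ioo t1 t2, ∀ t ∈ Ioo t1 t2, s ≤ t →
      {r ∈ Icc (0:ℝ) R | v r t = 0}.ncard ≤ {r ∈ Icc (0:ℝ) R | v r s = 0}.ncard := by
  have hm' : (2 : ℝ) ≤ m := by exact_mod_cast hm
  push Not at hnz
  obtain ⟨r, hr, t, ht, hrt⟩ := hnz
  exact (zero_number_monotone_general hR (by linarith) (by linarith) (by nlinarith) hb_smooth hb0
    hv_smooth hpde hbcR ⟨t, ht, r, hr, hrt⟩).2
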